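/- arXiv:1210.4951 — 4 statements merged into one kernel-verified Lean document; each statement's English description precedes it below -/
import Mathlib

section
/- Let K be a division ring, K0 a field contained in the center of K over which K has finite dimension q, and n a positive integer. If V is a K0-linear subspace of M_n(K) all of whose elements are nilpotent matrices, then dim_{K0} V ≤ q·(n choose 2). -/
/-- Nonvanishing on a permutation block prevents nilpotency. -/
lemma aux_not_nilpotent {K : Type*} [DivisionRing K] {n : ℕ}
    (A : Matrix (Fin n) (Fin n) K) (S : Finset (Fin n)) (hS : S.Nonempty)
    (h0 : ∀ i, i ∉ S → ∀ j, A i j = 0)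
    (h1 : ∀ i ∈ S, ∃ j ∈ S, A i j ≠ 0 ∧ ∀ k ∈ S, k ≠ j → A i k = 0) :
    ¬ IsNilpotent A := by
  rintro ⟨m, hm⟩
  have key : ∀ m : ℕ, ∃ v : Fin n → K, (∀ k, v k ≠ 0 ↔ k ∈ S) ∧
      ∃ w : Fin n → K, (A ^ m).mulVec w = v := by
    intro m
    induction m with
    | zero =>
      refine ⟨fun k => if k ∈ S then 1 else 0, ?_, fun k => if k ∈ S then 1 else 0, by simp⟩
      intro k
      by_cases hk : k ∈ S <;> simp [hk]
    | succ m ih =>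
      obtain ⟨v, hv, w, hw⟩ := ih
      refine ⟨A.mulVec v, ?_, w, by rw [pow_succ', ← hw, Matrix.mulVec_mulVec]⟩
      intro i
      constructor
      · intro h
        by_contra hi
        apply h
        simp [Matrix.mulVec, dotProduct, h0 i hi]
      · intro hi
        obtain ⟨j, hj, hij, hu⟩ := h1 i hi
        have : A.mulVec v i = A i j * v j := by
          simp only [Matrix.mulVec, dotProduct]
          apply Finset.sum_eq_single j
          · intro k _ hk
            by_cases hkS : k ∈ S
            · rw [hu k hkS hk, zero_mul]
            · have : v k = 0 := by
                by_contra h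
                exact hkS ((hv k).1 h)
              rw [this, mul_zero]
          · simp
        rw [this]
        exact mul_ne_zero hij ((hv j).2 hj)
  obtain ⟨v, hv, w, hw⟩ := key m
  obtain ⟨k, hk⟩ := hS
  apply (hv k).2 hk
  rw [← hw, hm]
  simp

/-- A digraph on a nonempty finite set with positive out-degrees has a nonempty
subset on which every vertex has exactly one out-neighbour. -/
lemma aux_cycle {n : ℕ} (hn : 0 < n) (r : Fin n → Fin n → Prop) (hr : ∀ i, ∃ j, r i j) :
    ∃ S : Finset (Fin n), S.Nonempty ∧
      ∀ i ∈ S, ∃ j ∈ S, r i j ∧ ∀ k ∈ S, k ≠ j → ¬ r i k := by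
  classical
  let P : Finset (Fin n) → Prop := fun S => S.Nonempty ∧ ∀ i ∈ S, ∃ j ∈ S, r i j
  have hP : ∃ S, P S := ⟨Finset.univ, ⟨⟨0, hn⟩, Finset.mem_univ _⟩, fun i _ => by
    obtain ⟨j, hj⟩ := hr i
    exact ⟨j, Finset.mem_univ _, hj⟩⟩
  obtain ⟨S, hS, hmin⟩ : ∃ S, P S ∧ ∀ T, T ⊂ S → ¬ P T := by
    obtain ⟨S, hS⟩ := exists_minimal_of_wellFoundedLT P hP
    exact ⟨S, hS.prop, fun T hT hPT => hT.2 (hS.le_of_le hPT hT.1)⟩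
  have hg : ∀ j : S, ∃ i : S, r i j ∧ ∀ k ∈ S, k ≠ j → ¬ r i k := by
    rintro ⟨j, hj⟩
    have hnot := hmin _ (Finset.erase_ssubset hj)
    by_cases he : (S.erase j).Nonempty
    · have : ∃ i ∈ S.erase j, ∀ k ∈ S.erase j, ¬ r i k := by
        by_contra hc
        push Not at hc
        exact hnot ⟨he, hc⟩
      obtain ⟨i, hi, hik⟩ := this
      have hiS := Finset.mem_of_mem_erase hi
      have h2 : ∀ k ∈ S, k ≠ j → ¬ r i k := fun k hk hkj =>
        hik k (Finset.mem_erase.2 ⟨hkj, hk⟩)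
      obtain ⟨l, hl, hil⟩ := hS.2 i hiS
      have : l = j := by
        by_contra h
        exact h2 l hl h hil
      subst this
      exact ⟨⟨i, hiS⟩, hil, h2⟩
    · have h2 : ∀ k ∈ S, k = j := by
        intro k hk
        by_contra h
        exact he ⟨k, Finset.mem_erase.2 ⟨h, hk⟩⟩
      obtain ⟨l, hl, hil⟩ := hS.2 j hj
      rw [h2 l hl] at hil
      exact ⟨⟨j, hj⟩, hil, fun k hk hkj => absurd (h2 k hk) hkj⟩
  choose g hg1 hg2 using hg
  have hinj : Function.Injective g := by
    intro a b hab
    by_contra hne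
    have h := hg1 a
    rw [hab] at h
    exact hg2 b a a.2 (fun h' => hne (Subtype.ext h')) h
  have hsurj := Finite.surjective_of_injective hinj
  refine ⟨S, hS.1, fun i hi => ?_⟩
  obtain ⟨j, hj⟩ := hsurj ⟨i, hi⟩
  have h1 := hg1 j
  have h2 := hg2 j
  rw [hj] at h1 h2
  exact ⟨j, j.2, h1, h2⟩

lemma aux_row {K : Type*} [DivisionRing K] {K0 : Type*} [Field K0] [Algebra K0 K]
    {n : ℕ} (hn : 0 < n) (V : Submodule K0 (Matrix (Fin n) (Fin n) K))
    (hV : ∀ M ∈ V, IsNilpotent M) :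
    ∃ i, ∀ M ∈ V, (∀ j, j ≠ i → ∀ k, M j k = 0) → M = 0 := by
  classical
  by_contra hc
  push Not at hc
  choose A hAV hA0 hA using hc
  obtain ⟨S, hS, hu⟩ := aux_cycle hn (fun i j => A i i j ≠ 0) (by
    intro i
    by_contra h
    push Not at h
    apply hA i
    ext a b
    by_cases ha : a = i
    · subst ha
      simpa using h b
    · simpa using hA0 i a ha b)
  have hin : ∀ i ∈ S, ∀ j, (∑ l ∈ S, A l) i j = A i i j := by
    intro i hi j
    rw [Matrix.sum_apply]
    apply Finset.sum_eq_single i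
    · intro l _ hl
      exact hA0 l i hl.symm j
    · intro h
      exact absurd hi h
  refine aux_not_nilpotent (∑ l ∈ S, A l) S hS ?_ ?_ (hV _ (V.sum_mem fun l _ => hAV l))
  · intro i hi j
    rw [Matrix.sum_apply]
    apply Finset.sum_eq_zero
    intro l hl
    apply hA0 l i
    rintro rfl
    exact hi hl
  · intro i hi
    obtain ⟨j, hj, hij, h⟩ := hu i hi
    refine ⟨j, hj, by rwa [hin i hi], fun k hk hkj => ?_⟩
    rw [hin i hi]
    exact not_not.1 (h k hk hkj)

lemma aux_diag {K : Type*} [DivisionRing K] {n : ℕ} (i : Fin (n + 1))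
    (M : Matrix (Fin (n + 1)) (Fin (n + 1)) K)
    (h : ∀ j, M (i.succAbove j) i = 0) (hM : IsNilpotent M) : M i i = 0 := by
  obtain ⟨m, hm⟩ := hM
  have : ∀ m : ℕ, (M ^ m) i i = M i i ^ m := by
    intro m
    induction m with
    | zero => simp
    | succ m ih =>
      rw [pow_succ, pow_succ, Matrix.mul_apply, Fin.sum_univ_succAbove _ i, ih]
      simp [h]
  have h2 := this m
  rw [hm] at h2
  exact eq_zero_of_pow_eq_zero (n := m) h2.symm

lemma aux_sub {K : Type*} [DivisionRing K] {n : ℕ} (i : Fin (n + 1))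
    (M : Matrix (Fin (n + 1)) (Fin (n + 1)) K)
    (h : ∀ j, M (i.succAbove j) i = 0) (hM : IsNilpotent M) :
    IsNilpotent (M.submatrix i.succAbove i.succAbove) := by
  obtain ⟨m, hm⟩ := hM
  refine ⟨m, ?_⟩
  have : ∀ m : ℕ, (M ^ m).submatrix i.succAbove i.succAbove
      = (M.submatrix i.succAbove i.succAbove) ^ m := by
    intro m
    induction m with
    | zero =>
      rw [pow_zero, pow_zero]
      exact Matrix.submatrix_one _ Fin.succAbove_right_injective
    | succ m ih =>
      rw [pow_succ', pow_succ', ← ih]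
      ext a b
      rw [Matrix.submatrix_apply, Matrix.mul_apply, Fin.sum_univ_succAbove _ i]
      simp [h, Matrix.mul_apply]
  rw [← this, hm]
  rfl

lemma aux_main {K : Type*} [DivisionRing K] {K0 : Type*} [Field K0] [Algebra K0 K]
    [FiniteDimensional K0 K] (n : ℕ) : ∀ (V : Submodule K0 (Matrix (Fin n) (Fin n) K)),
    (∀ M ∈ V, IsNilpotent M) → Module.finrank K0 V ≤ Module.finrank K0 K * n.choose 2 := by
  induction n with
  | zero =>
    intro V _
    have : Module.finrank K0 V = 0 := Module.finrank_zero_of_subsingleton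
    omega
  | succ n ih =>
    intro V hV
    obtain ⟨i, hi⟩ := aux_row (Nat.succ_pos n) V hV
    let c : Matrix (Fin (n + 1)) (Fin (n + 1)) K →ₗ[K0] (Fin n → K) :=
      { toFun := fun M j => M (i.succAbove j) i
        map_add' := fun _ _ => rfl
        map_smul' := fun _ _ => rfl }
    let s : Matrix (Fin (n + 1)) (Fin (n + 1)) K →ₗ[K0] Matrix (Fin n) (Fin n) K :=
      { toFun := fun M => M.submatrix i.succAbove i.succAbove
        map_add' := fun _ _ => rfl
        map_smul' := fun _ _ => rfl }
    let φ : V →ₗ[K0] (Fin n → K) := c.comp V.subtype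
    let ψ : LinearMap.ker φ →ₗ[K0] Matrix (Fin n) (Fin n) K := (s.comp V.subtype).comp (LinearMap.ker φ).subtype
    have hker : ∀ x : LinearMap.ker φ, ∀ j, (x : V).1 (i.succAbove j) i = 0 := by
      intro x j
      exact congrFun (LinearMap.mem_ker.1 x.2) j
    have hψ : Function.Injective ψ := by
      suffices h : ∀ x, ψ x = 0 → x = 0 by
        intro x y hxy
        have hs : ψ (x - y) = 0 := by
          have : ψ (x - y) = ψ x - ψ y := rfl
          rw [this, hxy, sub_self]
        exact sub_eq_zero.1 (h _ hs)
      intro x hx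
      have hd := aux_diag i _ (hker x) (hV _ (x : V).2)
      apply Subtype.ext
      apply Subtype.ext
      apply hi _ (x : V).2
      intro j hj k
      obtain ⟨a, rfl⟩ := Fin.exists_succAbove_eq hj
      by_cases hk : k = i
      · subst hk
        exact hker x a
      · obtain ⟨b, rfl⟩ := Fin.exists_succAbove_eq hk
        exact congrFun (congrFun hx a) b
    have h1 := LinearMap.finrank_range_add_finrank_ker φ
    have h2 : Module.finrank K0 (LinearMap.range φ) ≤ n * Module.finrank K0 K := by
      refine (Submodule.finrank_le _).trans ?_
      rw [Module.finrank_pi_fintype]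
      simp
    have h3 := LinearMap.finrank_range_of_inj hψ
    have h4 := ih (LinearMap.range ψ) (by
      rintro _ ⟨x, rfl⟩
      exact aux_sub i _ (hker x) (hV _ (x : V).2))
    have h5 : (n + 1).choose 2 = n + n.choose 2 := by
      rw [Nat.choose_succ_succ' n 1, Nat.choose_one_right]
    rw [h5, mul_add, mul_comm _ n]
    omega


/-- Gerstenhaber inequality over a skew field: a `K0`-linear subspace of nilpotent
`n × n` matrices over `K` has dimension at most `q * (n choose 2)`, where
`q = dim_{K0} K`. -/
theorem stmt_0 (K : Type*) [DivisionRing K] (K0 : Type*) [Field K0] [Algebra K0 K]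
    [FiniteDimensional K0 K] (q n : ℕ) (hq : Module.finrank K0 K = q) (hn : 0 < n)
    (V : Submodule K0 (Matrix (Fin n) (Fin n) K))
    (hV : ∀ M ∈ V, IsNilpotent M) :
    Module.finrank K0 V ≤ q * n.choose 2 := by
  subst hq
  exact aux_main n V hV
end

section
/- Let K be a division ring, K0 a field contained in the center of K over which K has finite dimension q, and n a positive integer. If V is a K0-linear subspace of M_n(K) all of whose elements are nilpotent matrices and dim_{K0} V = q·(n choose 2), then there exists an invertible matrix P in M_n(K) such that P V P^{-1} equals the set NT_n(K) of all strictly upper-triangular n×n matrices over K (i.e. M ∈ V if and only if P M P^{-1} is strictly upper-triangular). -/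
set_option linter.unusedSectionVars false

namespace Gerst

theorem comb {ι : Type*} [DecidableEq ι] (r : ι → ι → Prop) (S0 : Finset ι) (hne : S0.Nonempty)
    (h : ∀ i ∈ S0, ∃ j ∈ S0, r i j) :
    ∃ S ⊆ S0, S.Nonempty ∧ ∃ σ : ι → ι, (∀ i ∈ S, σ i ∈ S) ∧ Set.InjOn σ S ∧
      ∀ i ∈ S, ∀ j ∈ S, r i j ↔ j = σ i := by
  classical
  obtain ⟨S, ⟨hS0, hSn, hS⟩, hmin⟩ := wellFounded_lt.has_min
    {S : Finset ι | S ⊆ S0 ∧ S.Nonempty ∧ ∀ i ∈ S, ∃ j ∈ S, r i j} ⟨S0, subset_rfl, hne, h⟩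
  have key : ∀ σ : ι → ι, (∀ i ∈ S, σ i ∈ S ∧ r i (σ i)) → Set.InjOn σ S := by
    intro σ hσ
    have hsub : S.image σ ⊆ S := by
      intro j hj
      obtain ⟨i, hi, rfl⟩ := Finset.mem_image.1 hj
      exact (hσ i hi).1
    have heq : S.image σ = S := by
      by_contra hc
      refine hmin (S.image σ) ⟨hsub.trans hS0, hSn.image σ, ?_⟩
        (Finset.ssubset_iff_subset_ne.2 ⟨hsub, hc⟩)
      intro i hi
      have := hσ i (hsub hi)
      exact ⟨σ i, Finset.mem_image_of_mem _ (hsub hi), this.2⟩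
    exact Finset.card_image_iff.1 (by rw [heq])
  choose! σ hσ using hS
  refine ⟨S, hS0, hSn, σ, fun i hi => (hσ i hi).1, key σ hσ, fun i hi j hj => ⟨fun hr => ?_, ?_⟩⟩
  · by_contra hne
    have h2 := key (Function.update σ i j) (by
      intro a ha
      by_cases hai : a = i
      · subst hai; simp [hj, hr]
      · simp [hai, hσ a ha])
    have h1 := key σ hσ
    have hsurj : S.image σ = S :=
      Finset.eq_of_subset_of_card_le (fun x hx => by
        obtain ⟨a, ha, rfl⟩ := Finset.mem_image.1 hx
        exact (hσ a ha).1) (by rw [Finset.card_image_of_injOn h1])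
    have hj' := hj
    rw [← hsurj] at hj'
    obtain ⟨a, ha, haj⟩ := Finset.mem_image.1 hj'
    have hai : a ≠ i := by rintro rfl; exact hne haj.symm
    exact hai (h2 ha hi (by simp [hai, haj]))
  · rintro rfl; exact (hσ i hi).2

section basic
variable {D : Type*} [DivisionRing D] {E : Type*} [AddCommGroup E] [Module D E]

/-- rank one endomorphism -/
abbrev rk (f : E →ₗ[D] D) (x : E) : Module.End D E := LinearMap.smulRight f x

theorem rk_apply (f : E →ₗ[D] D) (x e : E) : rk f x e = f e • x := rfl

theorem nil_eig {M : Module.End D E} (hM : IsNilpotent M) {x : E} (hx : x ≠ 0) {a : D}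
    (h : M x = a • x) : a = 0 := by
  obtain ⟨k, hk⟩ := hM
  have : ∀ j : ℕ, (M ^ j) x = a ^ j • x := by
    intro j
    induction j with
    | zero => simp
    | succ j ih =>
      rw [pow_succ, Module.End.mul_apply, h, map_smul, ih, smul_smul, pow_succ']
  have h1 := this k
  rw [hk, LinearMap.zero_apply] at h1
  have := (smul_eq_zero.1 h1.symm).resolve_right hx
  exact eq_zero_of_pow_eq_zero this

theorem nil_eig_dual {M : Module.End D E} (hM : IsNilpotent M) {f : E →ₗ[D] D} (hf : f ≠ 0) {a : D}
    (h : ∀ e, f (M e) = f e * a) : a = 0 := by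
  obtain ⟨k, hk⟩ := hM
  have : ∀ (j : ℕ) (e : E), f ((M ^ j) e) = f e * a ^ j := by
    intro j
    induction j with
    | zero => simp
    | succ j ih =>
      intro e
      rw [pow_succ, Module.End.mul_apply, ih, h, mul_assoc, pow_succ']
  by_contra ha
  apply hf
  ext e
  have h1 := this k e
  rw [hk, LinearMap.zero_apply, map_zero] at h1
  have := (mul_eq_zero.1 h1.symm).resolve_right (pow_ne_zero k ha)
  simpa using this

theorem pow_expand (M : Module.End D E) (f : E →ₗ[D] D) (x : E) (k : ℕ) :
    ((M + rk f x) ^ k) x = (M ^ k) x +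
      ∑ j ∈ Finset.range k, f (((M + rk f x) ^ j) x) • (M ^ (k - 1 - j)) x := by
  induction k with
  | zero => simp
  | succ k ih =>
    rw [pow_succ', Module.End.mul_apply]
    rw [LinearMap.add_apply, rk_apply]
    conv_lhs => rw [ih]
    rw [map_add, ← Module.End.mul_apply, ← pow_succ', Finset.sum_range_succ, map_sum, ← ih, add_assoc]
    congr 1
    congr 1
    · apply Finset.sum_congr rfl
      intro j hj
      have := Finset.mem_range.1 hj
      rw [map_smul, ← Module.End.mul_apply, ← pow_succ']
      congr 3
      omega
    · simp

/-- Lemma R -/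
theorem rank_one_orth {M : Module.End D E} {f : E →ₗ[D] D} {x : E} (hM : IsNilpotent M)
    (hN : IsNilpotent (M + rk f x)) (k : ℕ) : f ((M ^ k) x) = 0 := by
  classical
  by_contra hk
  set N := M + rk f x with hNdef
  obtain ⟨m, hm⟩ := hM
  obtain ⟨p, hp⟩ := hN
  have hMz : ∀ i, m ≤ i → (M ^ i) x = 0 := fun i hi => by
    rw [pow_eq_zero_of_le hi hm]; rfl
  have hNz : ∀ i, p ≤ i → (N ^ i) x = 0 := fun i hi => by
    rw [pow_eq_zero_of_le hi hp]; rfl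
  have hE : ∀ k, f ((N ^ k) x) = f ((M ^ k) x) +
      ∑ j ∈ Finset.range k, f ((N ^ j) x) * f ((M ^ (k - 1 - j)) x) := by
    intro k
    have := congrArg f (pow_expand M f x k)
    rw [map_add, map_sum] at this
    simpa using this
  -- last index for M
  have lastA : ∃ i, f ((M ^ i) x) ≠ 0 ∧ ∀ i' > i, f ((M ^ i') x) = 0 := by
    have hb : ∀ i, f ((M ^ i) x) ≠ 0 → i ≤ m := fun i hi => by
      by_contra hc; exact hi (by rw [hMz i (by omega), map_zero])
    refine ⟨Nat.findGreatest (fun i => f ((M ^ i) x) ≠ 0) m,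
      Nat.findGreatest_spec (P := fun i => f ((M ^ i) x) ≠ 0) (hb k hk) hk, fun i' hi' => ?_⟩
    by_contra hc
    have := Nat.le_findGreatest (P := fun i => f ((M ^ i) x) ≠ 0) (hb i' hc) hc
    omega
  have exB : ∃ j, f ((N ^ j) x) ≠ 0 := by
    by_contra hc
    push Not at hc
    apply hk
    have := hE k
    simpa [hc] using this.symm
  have lastB : ∃ i, f ((N ^ i) x) ≠ 0 ∧ ∀ i' > i, f ((N ^ i') x) = 0 := by
    obtain ⟨k, hk⟩ := exB
    have hb : ∀ i, f ((N ^ i) x) ≠ 0 → i ≤ p := fun i hi => by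
      by_contra hc; exact hi (by rw [hNz i (by omega), map_zero])
    refine ⟨Nat.findGreatest (fun i => f ((N ^ i) x) ≠ 0) p,
      Nat.findGreatest_spec (P := fun i => f ((N ^ i) x) ≠ 0) (hb k hk) hk, fun i' hi' => ?_⟩
    by_contra hc
    have := Nat.le_findGreatest (P := fun i => f ((N ^ i) x) ≠ 0) (hb i' hc) hc
    omega
  obtain ⟨i, hi, hi'⟩ := lastA
  obtain ⟨j, hj, hj'⟩ := lastB
  have h := hE (i + j + 1)
  rw [hi' _ (by omega), hj' _ (by omega), zero_add, Finset.sum_eq_single j] at h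
  · rw [show i + j + 1 - 1 - j = i by omega] at h
    exact mul_ne_zero hj hi h.symm
  · intro b hb hbj
    rcases lt_or_gt_of_ne hbj with h1 | h1
    · rw [hi' (i + j + 1 - 1 - b) (by omega), mul_zero]
    · rw [hj' b h1, zero_mul]
  · intro hc; exact absurd (Finset.mem_range.2 (by omega)) hc

/-- Lemma N -/
theorem nil_three {X : Module.End D E} (hX : IsNilpotent X) {y : E} (h2 : (X ^ 2) y ≠ 0)
    {a b c : D} (h : (X ^ 4) y = a • (X ^ 2) y + b • X y + c • y) : a = 0 ∧ b = 0 ∧ c = 0 := by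
  classical
  have hex : ∃ m, (X ^ m) y = 0 := by
    obtain ⟨k, hk⟩ := hX
    exact ⟨k, by rw [hk]; rfl⟩
  obtain ⟨m, hm, hmin⟩ : ∃ m, (X ^ (m + 3)) y = 0 ∧ (X ^ (m + 2)) y ≠ 0 := by
    have hle : ∀ j, j ≤ 2 → (X ^ j) y ≠ 0 := by
      intro j hj hc
      apply h2
      rw [show 2 = (2 - j) + j by omega, pow_add, Module.End.mul_apply, hc, map_zero]
    refine ⟨Nat.find hex - 3, ?_, ?_⟩
    · have h3 : 3 ≤ Nat.find hex := by
        by_contra hc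
        exact hle _ (by omega) (Nat.find_spec hex)
      rw [Nat.sub_add_cancel h3]; exact Nat.find_spec hex
    · have h3 : 3 ≤ Nat.find hex := by
        by_contra hc
        exact hle _ (by omega) (Nat.find_spec hex)
      exact Nat.find_min hex (by omega)
  have hz : ∀ j, m + 3 ≤ j → (X ^ j) y = 0 := by
    intro j hj
    rw [show j = (j - (m + 3)) + (m + 3) by omega, pow_add, Module.End.mul_apply, hm, map_zero]
  have hp : ∀ i, (X ^ (i + 4)) y = a • (X ^ (i + 2)) y + b • (X ^ (i + 1)) y + c • (X ^ i) y := by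
    intro i
    rw [pow_add, Module.End.mul_apply, h]
    simp only [map_add, map_smul, pow_add, pow_one, Module.End.mul_apply]
  have hc : c = 0 := by
    have := hp (m + 2)
    rw [hz _ (by omega), hz (m + 2 + 2) (by omega), hz (m + 2 + 1) (by omega)] at this
    simpa [hmin] using this.symm
  have hb : b = 0 := by
    have := hp (m + 1)
    rw [hz _ (by omega), hz (m + 1 + 2) (by omega), hc] at this
    simpa [hmin] using this.symm
  have ha : a = 0 := by
    have := hp m
    rw [hz _ (by omega), hb, hc] at this
    simpa [hmin] using this.symm
  exact ⟨ha, hb, hc⟩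

variable (V : AddSubgroup (Module.End D E))

theorem no_cycle (hV : ∀ M ∈ V, IsNilpotent M) {ι : Type*} [DecidableEq ι] (S : Finset ι)
    (hS : S.Nonempty) (x : ι → E) (f : ι → E →ₗ[D] D) (hxf : ∀ i ∈ S, rk (f i) (x i) ∈ V)
    (σ : ι → ι) (hσ : ∀ i ∈ S, σ i ∈ S) (hinj : Set.InjOn σ S)
    (hr : ∀ i ∈ S, ∀ j ∈ S, f i (x j) ≠ 0 ↔ j = σ i) : False := by
  obtain ⟨k, hk⟩ := hV (∑ i ∈ S, rk (f i) (x i)) (V.sum_mem hxf)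
  set M := ∑ i ∈ S, rk (f i) (x i) with hMdef
  have h1 : ∀ i ∈ S, M (x (σ i)) = f i (x (σ i)) • x i := by
    intro i hi
    rw [hMdef, LinearMap.sum_apply, Finset.sum_eq_single i]
    · rfl
    · intro b hb hbi
      have : f b (x (σ i)) = 0 := by
        by_contra hc
        exact hbi (hinj hi hb ((hr b hb _ (hσ i hi)).1 hc)).symm
      rw [rk_apply, this, zero_smul]
    · intro hc; exact absurd hi hc
  have hnz : ∀ i ∈ S, f i (x (σ i)) ≠ 0 := fun i hi => (hr i hi _ (hσ i hi)).2 rfl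
  have hx : ∀ i ∈ S, x i ≠ 0 := by
    intro i hi hc
    have : S.image σ = S :=
      Finset.eq_of_subset_of_card_le (fun x hx => by
        obtain ⟨a, ha, rfl⟩ := Finset.mem_image.1 hx
        exact hσ a ha) (by rw [Finset.card_image_of_injOn hinj])
    have hi' := hi
    rw [← this] at hi'
    obtain ⟨a, ha, rfl⟩ := Finset.mem_image.1 hi'
    exact hnz a ha (by rw [hc, map_zero])
  have h2 : ∀ k : ℕ, ∀ i ∈ S, ∃ j ∈ S, ∃ c : D, c ≠ 0 ∧ (M ^ k) (x j) = c • x i := by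
    intro k
    induction k with
    | zero => exact fun i hi => ⟨i, hi, 1, one_ne_zero, by simp⟩
    | succ k ih =>
      intro i hi
      obtain ⟨j, hj, c, hc, hcj⟩ := ih i hi
      refine ⟨σ j, hσ j hj, f j (x (σ j)) * c, mul_ne_zero (hnz j hj) hc, ?_⟩
      rw [pow_succ, Module.End.mul_apply, h1 j hj, map_smul, hcj, smul_smul]
  obtain ⟨i, hi⟩ := hS
  obtain ⟨j, hj, c, hc, hcj⟩ := h2 k i hi
  rw [hk, LinearMap.zero_apply] at hcj
  exact (smul_ne_zero hc (hx i hi)) hcj.symm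

theorem exists_sink (hV : ∀ M ∈ V, IsNilpotent M) {ι : Type*} [DecidableEq ι] (S : Finset ι)
    (hS : S.Nonempty) (x : ι → E) (f : ι → E →ₗ[D] D) (hxf : ∀ i ∈ S, rk (f i) (x i) ∈ V) :
    ∃ i ∈ S, ∀ j ∈ S, f i (x j) = 0 := by
  by_contra hc
  push Not at hc
  obtain ⟨S', hS', hn, σ, h1, h2, h3⟩ := comb (fun i j => f i (x j) ≠ 0) S hS hc
  exact no_cycle V hV S' hn x f (fun i hi => hxf i (hS' hi)) σ h1 h2 h3

theorem exists_source (hV : ∀ M ∈ V, IsNilpotent M) {ι : Type*} [DecidableEq ι] (S : Finset ι)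
    (hS : S.Nonempty) (x : ι → E) (f : ι → E →ₗ[D] D) (hxf : ∀ i ∈ S, rk (f i) (x i) ∈ V) :
    ∃ j ∈ S, ∀ i ∈ S, f i (x j) = 0 := by
  by_contra hc
  push Not at hc
  obtain ⟨S', hS', hn, σ, h1, h2, h3⟩ := comb (fun i j => f j (x i) ≠ 0) S hS hc
  have hs : Set.SurjOn σ S' S' := by
    have : S'.image σ = S' :=
      Finset.eq_of_subset_of_card_le (fun x hx => by
        obtain ⟨a, ha, rfl⟩ := Finset.mem_image.1 hx
        exact h1 a ha) (by rw [Finset.card_image_of_injOn h2])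
    intro i hi
    have hi' : i ∈ S' := hi
    rw [← this] at hi'
    simpa using hi'
  choose! τ hτ using hs
  refine no_cycle V hV S' hn x f (fun i hi => hxf i (hS' hi)) τ (fun i hi => (hτ hi).1) ?_ ?_
  · intro a ha b hb hab
    rw [← (hτ ha).2, ← (hτ hb).2, hab]
  · intro i hi j hj
    rw [h3 j hj i hi]
    constructor
    · rintro rfl
      exact (h2 (hτ hi).1 hj (hτ hi).2).symm
    · rintro rfl
      exact (hτ hi).2.symm

theorem exists_adapted [FiniteDimensional D E] [Nontrivial E] (hV : ∀ M ∈ V, IsNilpotent M) :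
    ∃ H : Submodule D E, H ≠ ⊤ ∧ ∀ y ∉ H, ∀ f : E →ₗ[D] D, rk f y ∈ V → f = 0 := by
  classical
  let A : Set (Submodule D E) := {H | ∃ t : Finset ((E →ₗ[D] D) × E),
    (∀ p ∈ t, rk p.1 p.2 ∈ V ∧ p.1 ≠ 0) ∧ H = Submodule.span D (t.image Prod.snd)}
  obtain ⟨H, ⟨t, ht, rfl⟩, hmax⟩ := set_has_maximal_iff_noetherian.2
    (inferInstance : IsNoetherian D E) A ⟨_, ∅, by simp, rfl⟩
  refine ⟨Submodule.span D (t.image Prod.snd : Set E), ?_, ?_⟩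
  · intro htop
    rcases t.eq_empty_or_nonempty with rfl | hne
    · simp at htop
    · obtain ⟨i, hi, hi'⟩ := exists_sink V hV t hne Prod.snd Prod.fst (fun p hp => (ht p hp).1)
      apply (ht i hi).2
      have : Submodule.span D (t.image Prod.snd : Set E) ≤ LinearMap.ker i.1 := by
        rw [Submodule.span_le]
        intro e he
        simp only [Finset.coe_image, Set.mem_image] at he
        obtain ⟨p, hp, rfl⟩ := he
        exact hi' p hp
      rw [htop, top_le_iff] at this
      exact LinearMap.ker_eq_top.1 this
  · intro y hy f hf
    by_contra hf0
    apply hmax _ ⟨insert (f, y) t, by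
      intro p hp
      rcases Finset.mem_insert.1 hp with rfl | hp
      · exact ⟨hf, hf0⟩
      · exact ht p hp, rfl⟩
    refine lt_of_le_of_ne (Submodule.span_mono ?_) ?_
    · intro e he
      rw [Finset.mem_coe] at he ⊢
      rw [Finset.image_insert]
      exact Finset.mem_insert_of_mem he
    · intro heq
      apply hy
      rw [heq]
      apply Submodule.subset_span
      rw [Finset.mem_coe, Finset.image_insert]
      exact Finset.mem_insert_self _ _

theorem exists_dual_adapted [FiniteDimensional D E] [Nontrivial E]
    (hV : ∀ M ∈ V, IsNilpotent M) :
    ∃ x : E, x ≠ 0 ∧ ∀ f : E →ₗ[D] D, f x ≠ 0 → ∀ u, rk f u ∈ V → u = 0 := by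
  classical
  let A : Set (Submodule D E) := {H | ∃ t : Finset ((E →ₗ[D] D) × E),
    (∀ p ∈ t, rk p.1 p.2 ∈ V ∧ p.2 ≠ 0) ∧ H = t.inf (fun p => LinearMap.ker p.1)}
  obtain ⟨H, ⟨t, ht, rfl⟩, hmax⟩ := IsArtinian.set_has_minimal (R := D) (M := E) A
    ⟨_, ∅, by simp, rfl⟩
  have hbot : t.inf (fun p => LinearMap.ker p.1) ≠ ⊥ := by
    rcases t.eq_empty_or_nonempty with rfl | hne
    · simp
    · obtain ⟨i, hi, hi'⟩ := exists_source V hV t hne Prod.snd Prod.fst (fun p hp => (ht p hp).1)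
      intro hb
      apply (ht i hi).2
      rw [← Submodule.mem_bot D, ← hb, Submodule.mem_finsetInf]
      exact fun j hj => hi' j hj
  obtain ⟨x, hx, hx0⟩ := (Submodule.ne_bot_iff _).1 hbot
  refine ⟨x, hx0, fun f hfx u hu => ?_⟩
  by_contra hu0
  apply hmax _ ⟨insert (f, u) t, by
      intro p hp
      rcases Finset.mem_insert.1 hp with rfl | hp
      · exact ⟨hu, hu0⟩
      · exact ht p hp, rfl⟩
  rw [Finset.inf_insert]
  refine lt_of_le_of_ne inf_le_right ?_
  intro heq
  rw [← heq] at hx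
  exact hfx hx.1

theorem not_cover {A B : Submodule D E} (hA : A ≠ ⊤) (hB : B ≠ ⊤) : ∃ y, y ∉ A ∧ y ∉ B := by
  obtain ⟨a, ha⟩ : ∃ a, a ∉ A := by
    by_contra hc; push Not at hc; exact hA (eq_top_iff.2 fun x _ => hc x)
  obtain ⟨b, hb⟩ : ∃ a, a ∉ B := by
    by_contra hc; push Not at hc; exact hB (eq_top_iff.2 fun x _ => hc x)
  by_cases h1 : a ∈ B
  · by_cases h2 : b ∈ A
    · refine ⟨a + b, fun h => ha ?_, fun h => hb ?_⟩
      · simpa using A.sub_mem h h2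
      · simpa using B.sub_mem h h1
    · exact ⟨b, h2, hb⟩
  · exact ⟨a, ha, h1⟩

/-- A form vanishing on `p` and nonzero on two given vectors outside `p`. -/
theorem exists_form {p : Submodule D E} {a b : E} (ha : a ∉ p) (hb : b ∉ p) :
    ∃ f : E →ₗ[D] D, (∀ e ∈ p, f e = 0) ∧ f a ≠ 0 ∧ f b ≠ 0 := by
  obtain ⟨f1, h1, h1'⟩ := Submodule.exists_le_ker_of_notMem ha
  obtain ⟨f2, h2, h2'⟩ := Submodule.exists_le_ker_of_notMem hb
  by_cases h3 : f1 b = 0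
  · by_cases h4 : f2 a = 0
    · refine ⟨f1 + f2, fun e he => ?_, ?_, ?_⟩
      · have e1 : f1 e = 0 := h1' he
        have e2 : f2 e = 0 := h2' he
        simp [e1, e2]
      · simpa [h4] using h1
      · simpa [h3] using h2
    · exact ⟨f2, fun e he => h2' he, h4, h2⟩
  · exact ⟨f1, fun e he => h1' he, h1, h3⟩

end basic
end Gerst


namespace Gerst

theorem zmod2_bash : ∀ a b c d e t s : ZMod 2, (∀ σ τ : ZMod 2,
    (a + τ * (s + σ) + t) * a + (b + τ * c + t * τ) * (s + σ) + (d + σ + τ + τ * e + t * t) = 0 ∧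
    (a + τ * (s + σ) + t) * b + (b + τ * c + t * τ) * c + (d + σ + τ + τ * e + t * t) * τ = 0 ∧
    (a + τ * (s + σ) + t) * (d + σ + τ) + (b + τ * c + t * τ) * e +
      (d + σ + τ + τ * e + t * t) * t = 0) → False := by
  decide +kernel

theorem two_bash {D : Type*} [DivisionRing D] (h01 : ∀ c : D, c = 0 ∨ c = 1) (h11 : (1 : D) + 1 = 0)
    (a b c d e t s : D) (H : ∀ σ τ : D,
    (a + τ * (s + σ) + t) * a + (b + τ * c + t * τ) * (s + σ) + (d + σ + τ + τ * e + t * t) = 0 ∧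
    (a + τ * (s + σ) + t) * b + (b + τ * c + t * τ) * c + (d + σ + τ + τ * e + t * t) * τ = 0 ∧
    (a + τ * (s + σ) + t) * (d + σ + τ) + (b + τ * c + t * τ) * e +
      (d + σ + τ + τ * e + t * t) * t = 0) : False := by
  have : CharP D 2 := CharTwo.of_one_ne_zero_of_two_eq_zero one_ne_zero (by rw [← h11]; norm_num)
  let φ : ZMod 2 →+* D := ZMod.castHom (dvd_refl 2) D
  have hs : ∀ c : D, ∃ c', φ c' = c := by
    intro c
    rcases h01 c with rfl | rfl
    · exact ⟨0, map_zero φ⟩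
    · exact ⟨1, map_one φ⟩
  obtain ⟨a, rfl⟩ := hs a
  obtain ⟨b, rfl⟩ := hs b
  obtain ⟨c, rfl⟩ := hs c
  obtain ⟨d, rfl⟩ := hs d
  obtain ⟨e, rfl⟩ := hs e
  obtain ⟨t, rfl⟩ := hs t
  obtain ⟨s, rfl⟩ := hs s
  refine zmod2_bash a b c d e t s fun σ τ => ?_
  have := H (φ σ) (φ τ)
  simpa only [← map_mul, ← map_add, map_eq_zero] using this

section core
variable {D : Type*} [DivisionRing D] {E : Type*} [AddCommGroup E] [Module D E]

theorem pair_rel {e1 y : E} {g h : E →ₗ[D] D} (hg1 : g e1 = 1) (hgy : g y = 0) (hhy : h y = 1)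
    (hh1 : h e1 = 0) {r φ : E →ₗ[D] D} {u ψ : E} (hry : r y = 0) (hr1 : r e1 = 0)
    (hφ : φ y = 0) (hgu : g u = 0) (hhu : h u = 0) (hψ : g ψ = 0)
    (hX : IsNilpotent ((rk r e1 + rk φ y) + (rk h u + rk g ψ))) :
    (r u = 0 → φ u = 0 ∧ r ψ = 0) ∧
    (r u ≠ 0 → r u * r ψ + φ u * r u = 0 ∧ φ e1 + h ψ = 0) := by
  set X := (rk r e1 + rk φ y) + (rk h u + rk g ψ) with hXdef
  have hXa : ∀ e, X e = r e • e1 + φ e • y + (h e • u + g e • ψ) := fun e => rfl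
  have hy0 : y ≠ 0 := by rintro rfl; simp at hhy
  have hg0 : g ≠ 0 := by rintro rfl; simp at hg1
  have Xy : X y = u := by simp [hXa, hry, hφ, hhy, hgy]
  have Xu : X u = r u • e1 + φ u • y := by simp [hXa, hgu, hhu]
  have X1 : X e1 = φ e1 • y + ψ := by simp [hXa, hr1, hh1, hg1]
  have Xψ : X ψ = r ψ • e1 + φ ψ • y + h ψ • u := by simp [hXa, hψ]
  constructor
  · intro hk
    have h2 : IsNilpotent (X * X) := by
      rw [← pow_two]; exact hX.pow_succ 1
    constructor
    · refine nil_eig h2 hy0 ?_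
      rw [Module.End.mul_apply, Xy, Xu, hk, zero_smul, zero_add]
    · refine nil_eig_dual h2 hg0 ?_
      intro e
      have e1' : ∀ e, g (X e) = r e := by
        intro e; simp [hXa, hg1, hgy, hgu, hψ]
      rw [Module.End.mul_apply, e1', hXa]
      simp [hr1, hry, hk]
  · intro hk
    have X2y : (X ^ 2) y = r u • e1 + φ u • y := by
      rw [pow_two, Module.End.mul_apply, Xy, Xu]
    have hne : (X ^ 2) y ≠ 0 := by
      rw [X2y]; intro hc
      have := congrArg g hc
      simp [hg1, hgy, hk] at this
    have he1 : e1 = (r u)⁻¹ • (X ^ 2) y - ((r u)⁻¹ * φ u) • y := by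
      rw [X2y, smul_add, smul_smul, inv_mul_cancel₀ hk, smul_smul, one_smul]; abel
    have X4 : (X ^ 4) y = (r u * r ψ + φ u * r u) • e1 + (r u * (φ e1 + h ψ)) • u
        + (r u * φ ψ + φ u * φ u) • y := by
      rw [show (4 : ℕ) = 2 + 2 from rfl, pow_add, Module.End.mul_apply, X2y, pow_two,
        Module.End.mul_apply, map_add, map_smul, map_smul, X1, Xy]
      simp only [map_add, map_smul, Xy, Xu, Xψ, smul_add, smul_smul, mul_add, add_smul]
      abel
    have := nil_three (a := (r u * r ψ + φ u * r u) * (r u)⁻¹) (b := r u * (φ e1 + h ψ))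
      (c := (r u * φ ψ + φ u * φ u) - (r u * r ψ + φ u * r u) * ((r u)⁻¹ * φ u)) hX hne (by
        have h5 := congrArg (fun v => (r u * r ψ + φ u * r u) • v) he1
        simp only [smul_sub, smul_smul] at h5
        rw [X4, Xy, h5, sub_smul]
        abel)
    obtain ⟨h1, h2, -⟩ := this
    exact ⟨(mul_eq_zero.1 h1).resolve_right (inv_ne_zero hk), (mul_eq_zero.1 h2).resolve_left hk⟩

/-- right scaling of a form -/
def rs (f : E →ₗ[D] D) (c : D) : E →ₗ[D] D := (LinearMap.toSpanSingleton D D c).comp f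

theorem rs_apply (f : E →ₗ[D] D) (c : D) (e : E) : rs f c e = f e * c := by
  simp [rs]

variable (V : AddSubgroup (Module.End D E))

theorem core_finish (hV : ∀ M ∈ V, IsNilpotent M) {e1 y x u0 : E} {g h f r0 : E →ₗ[D] D}
    (hg1 : g e1 = 1) (hgy : g y = 0) (hhy : h y = 1)
    (hh1 : h e1 = 0) {l : D} (hx : x = e1 + l • y) (hf : f = h - rs g l)
    (hr0 : r0 u0 = 1) (hr0y : r0 y = 0) (hr01 : r0 e1 = 0)
    (hT : ∀ r : E →ₗ[D] D, r y = 0 → r e1 = 0 → rk r x ∈ V) (hS : rk f u0 ∈ V) :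
    ∃ x : E, x ≠ 0 ∧ ∀ M ∈ V, M x = 0 := by
  have hfx : f x = 0 := by
    simp [hf, hx, rs_apply, hh1, hhy, hg1, hgy]
  have hfy : f y = 1 := by simp [hf, rs_apply, hhy, hgy]
  have hgx : g x = 1 := by simp [hx, hg1, hgy]
  have hx0 : x ≠ 0 := by rintro rfl; simp at hgx
  refine ⟨x, hx0, fun M hM => ?_⟩
  have hrM : ∀ N ∈ V, ∀ r : E →ₗ[D] D, r y = 0 → r e1 = 0 → ∀ k : ℕ, r ((N ^ k) x) = 0 :=
    fun N hN r hry hr1 k => rank_one_orth (hV N hN) (hV _ (V.add_mem hN (hT r hry hr1))) k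
  have hfM : f (M x) = 0 := by
    have h1 := hrM M hM r0 hr0y hr01 2
    have h2 := hrM (M + rk f u0) (V.add_mem hM hS) r0 hr0y hr01 2
    rw [pow_two, Module.End.mul_apply] at h1 h2
    have e : (M + rk f u0) x = M x := by
      rw [LinearMap.add_apply, rk_apply, hfx, zero_smul, add_zero]
    rw [e, LinearMap.add_apply, map_add, h1, zero_add, rk_apply, map_smul, hr0] at h2
    simpa using h2
  have hmem : M x ∈ Submodule.span D {e1, y} := by
    by_contra hc
    obtain ⟨r, hr, hr', -⟩ := exists_form hc hc
    refine hr' ?_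
    have := hrM M hM r (hr _ (Submodule.subset_span (by simp))) (hr _ (Submodule.subset_span (by simp))) 1
    simpa using this
  obtain ⟨a, b, hab⟩ := Submodule.mem_span_pair.1 hmem
  have hMx : M x = a • x + (b - a * l) • y := by
    rw [← hab, hx, smul_add, smul_smul, sub_smul]; abel
  have hb : b - a * l = 0 := by
    rw [hMx] at hfM
    simpa [hfx, hfy] using hfM
  rw [hb, zero_smul, add_zero] at hMx
  rw [hMx, nil_eig (hV M hM) hx0 hMx, zero_smul]

theorem core [FiniteDimensional D E] (hV : ∀ M ∈ V, IsNilpotent M) {e1 y : E} {g h : E →ₗ[D] D}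
    (hg1 : g e1 = 1) (hgy : g y = 0) (hhy : h y = 1) (hh1 : h e1 = 0)
    (hT : ∀ r : E →ₗ[D] D, r y = 0 → r e1 = 0 → ∃ φ : E →ₗ[D] D, φ y = 0 ∧ rk r e1 + rk φ y ∈ V)
    (hS : ∀ u, g u = 0 → h u = 0 → ∃ ψ, g ψ = 0 ∧ rk h u + rk g ψ ∈ V)
    (hN : ∃ N ∈ V, ∃ c : D, N y = e1 + c • y)
    (hdim : 3 ≤ Module.finrank D E) :
    ∃ x : E, x ≠ 0 ∧ ∀ M ∈ V, M x = 0 := by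
  -- decomposition
  have hpairmem : ∀ e, g e = 0 → h e = 0 → e ∈ Submodule.span D {e1, y} → e = 0 := by
    intro e hge hhe he
    obtain ⟨a, b, rfl⟩ := Submodule.mem_span_pair.1 he
    have ha : a = 0 := by simpa [hg1, hgy] using hge
    have hb : b = 0 := by simpa [hhy, hh1] using hhe
    simp [ha, hb]
  have hmid : ∀ e, g (e - g e • e1 - h e • y) = 0 ∧ h (e - g e • e1 - h e • y) = 0 := by
    intro e
    simp [hg1, hgy, hhy, hh1]
  have hrmid : ∀ r : E →ₗ[D] D, r y = 0 → r e1 = 0 → ∀ e, r (e - g e • e1 - h e • y) = r e := by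
    intro r hry hr1 e; simp [hry, hr1]
  have he1m : e1 ∈ Submodule.span D {e1, y} := Submodule.subset_span (by simp)
  have hym : y ∈ Submodule.span D {e1, y} := Submodule.subset_span (by simp)
  obtain ⟨u0, hgu0, hhu0, hu0⟩ : ∃ u0, g u0 = 0 ∧ h u0 = 0 ∧ u0 ≠ 0 := by
    have hlt : Submodule.span D {e1, y} ≠ ⊤ := by
      intro htop
      have h1 : Module.finrank D (Submodule.span D ({e1, y} : Set E)) ≤ 2 := by
        classical
        have := finrank_span_finset_le_card (R := D) ({e1, y} : Finset E)
        simp only [Finset.coe_insert, Finset.coe_singleton] at this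
        exact this.trans Finset.card_le_two
      rw [htop, finrank_top] at h1
      omega
    obtain ⟨e, he, -⟩ := not_cover hlt hlt
    refine ⟨_, (hmid e).1, (hmid e).2, fun hc => he ?_⟩
    rw [sub_sub, sub_eq_zero] at hc
    rw [hc]
    exact Submodule.add_mem _ (Submodule.smul_mem _ _ he1m) (Submodule.smul_mem _ _ hym)
  have hmidnot : ∀ u, g u = 0 → h u = 0 → u ≠ 0 → u ∉ Submodule.span D {e1, y} :=
    fun u h1 h2 h3 h4 => h3 (hpairmem u h1 h2 h4)
  have hpair : ∀ r φ : E →ₗ[D] D, r y = 0 → r e1 = 0 → φ y = 0 → rk r e1 + rk φ y ∈ V →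
      ∀ u ψ, g u = 0 → h u = 0 → g ψ = 0 → rk h u + rk g ψ ∈ V →
      (r u = 0 → φ u = 0 ∧ r ψ = 0) ∧
      (r u ≠ 0 → r u * r ψ + φ u * r u = 0 ∧ φ e1 + h ψ = 0) := by
    intro r φ h1 h2 h3 h4 u ψ h5 h6 h7 h8
    exact pair_rel hg1 hgy hhy hh1 h1 h2 h3 h5 h6 h7 (hV _ (V.add_mem h4 h8))
  -- structure of φ
  have hL : ∀ r φ : E →ₗ[D] D, r y = 0 → r e1 = 0 → r ≠ 0 → φ y = 0 → rk r e1 + rk φ y ∈ V →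
      ∃ l, ∀ e, φ e = r e * l + g e * φ e1 := by
    intro r φ h1 h2 h0 h3 h4
    obtain ⟨e, he⟩ : ∃ e, r e ≠ 0 := by
      by_contra hc; push Not at hc; exact h0 (LinearMap.ext hc)
    set u1 := e - g e • e1 - h e • y with hu1
    have hru1 : r u1 ≠ 0 := by rw [hu1, hrmid r h1 h2]; exact he
    have hgu1 : g u1 = 0 := (hmid e).1
    have hhu1 : h u1 = 0 := (hmid e).2
    refine ⟨(r u1)⁻¹ * φ u1, fun e' => ?_⟩
    set u2 := e' - g e' • e1 - h e' • y with hu2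
    have hu2' : e' = u2 + g e' • e1 + h e' • y := by rw [hu2]; abel
    set w := u2 - (r u2 * (r u1)⁻¹) • u1 with hw
    have hgw : g w = 0 := by simp [hw, hgu1, hu2, (hmid e').1]
    have hhw : h w = 0 := by simp [hw, hhu1, hu2, (hmid e').2]
    have hrw : r w = 0 := by simp [hw, hru1]
    obtain ⟨ψ, hψ1, hψ2⟩ := hS w hgw hhw
    have := ((hpair r φ h1 h2 h3 h4 w ψ hgw hhw hψ1 hψ2).1 hrw).1
    rw [hw, map_sub, map_smul, sub_eq_zero, smul_eq_mul] at this
    have hr2 : r u2 = r e' := hrmid r h1 h2 e'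
    conv_lhs => rw [hu2']
    rw [map_add, map_add, map_smul, map_smul, h3, this, hr2]
    simp [mul_assoc]
  have hM : ∀ u ψ, g u = 0 → h u = 0 → g ψ = 0 → rk h u + rk g ψ ∈ V →
      ∃ m : D, ψ = m • u + h ψ • y := by
    intro u ψ h1 h2 h3 h4
    have hmem : ψ - h ψ • y ∈ Submodule.span D {u, e1, y} := by
      by_contra hc
      obtain ⟨r, hr, hr', -⟩ := exists_form hc hc
      have hry : r y = 0 := hr _ (Submodule.subset_span (by simp))
      have hr1 : r e1 = 0 := hr _ (Submodule.subset_span (by simp))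
      have hru : r u = 0 := hr _ (Submodule.subset_span (by simp))
      obtain ⟨φ, hφ1, hφ2⟩ := hT r hry hr1
      have := ((hpair r φ hry hr1 hφ1 hφ2 u ψ h1 h2 h3 h4).1 hru).2
      exact hr' (by simp [this, hry])
    obtain ⟨m, a, b, hab⟩ := Submodule.mem_span_triple.1 hmem
    have ha : a = 0 := by
      have := congrArg g hab
      simpa [h1, hg1, hgy, h3] using this
    have hb : b = 0 := by
      have := congrArg h hab
      simpa [h2, hh1, hhy, h3] using this
    refine ⟨m, ?_⟩
    rw [ha, hb] at hab
    simp only [zero_smul, add_zero] at hab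
    rw [hab]; abel
  have hLM : ∀ r φ : E →ₗ[D] D, r y = 0 → r e1 = 0 → φ y = 0 → rk r e1 + rk φ y ∈ V →
      ∀ u ψ, g u = 0 → h u = 0 → g ψ = 0 → rk h u + rk g ψ ∈ V → r u ≠ 0 →
      ∀ l m : D, (∀ e, φ e = r e * l + g e * φ e1) → ψ = m • u + h ψ • y → m = -l ∧ h ψ = - φ e1 := by
    intro r φ h1 h2 h3 h4 u ψ h5 h6 h7 h8 hru l m hl hm
    obtain ⟨k1, k2⟩ := (hpair r φ h1 h2 h3 h4 u ψ h5 h6 h7 h8).2 hru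
    refine ⟨?_, (neg_eq_of_add_eq_zero_right k2).symm⟩
    have hrψ : r ψ = m * r u := by
      rw [hm]; simp [h1]
    rw [hrψ, hl u, h5, zero_mul, add_zero, mul_assoc, ← mul_add, ← add_mul] at k1
    have := (mul_eq_zero.1 ((mul_eq_zero.1 k1).resolve_left hru)).resolve_right hru
    exact eq_neg_of_add_eq_zero_left this
  obtain ⟨ψ0, hgψ0, hVψ0⟩ := hS u0 hgu0 hhu0
  obtain ⟨m0, hm0⟩ := hM u0 ψ0 hgu0 hhu0 hgψ0 hVψ0
  obtain ⟨l, hl⟩ : ∃ l, l = -m0 := ⟨_, rfl⟩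
  obtain ⟨p, hp⟩ : ∃ p, p = -h ψ0 := ⟨_, rfl⟩
  have claimA : ∀ r φ : E →ₗ[D] D, r y = 0 → r e1 = 0 → r ≠ 0 → φ y = 0 → rk r e1 + rk φ y ∈ V →
      ∀ e, φ e = r e * l + g e * p := by
    intro r φ h1 h2 h0 h3 h4 
    obtain ⟨l', hl'⟩ := hL r φ h1 h2 h0 h3 h4
    obtain ⟨e, he⟩ : ∃ e, r e ≠ 0 := by
      by_contra hc; push Not at hc; exact h0 (LinearMap.ext hc)
    set u1 := e - g e • e1 - h e • y with hu1
    have hru1 : r u1 ≠ 0 := by rw [hu1, hrmid r h1 h2]; exact he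
    have hgu1 : g u1 = 0 := (hmid e).1
    have hhu1 : h u1 = 0 := (hmid e).2
    have hu10 : u1 ≠ 0 := by intro hc; rw [hc, map_zero] at hru1; exact hru1 rfl
    obtain ⟨r1, hr1, hr1a, hr1b⟩ := exists_form (hmidnot u1 hgu1 hhu1 hu10)
      (hmidnot u0 hgu0 hhu0 hu0)
    obtain ⟨φ1, hφ1, hVφ1⟩ := hT r1 (hr1 _ hym) (hr1 _ he1m)
    obtain ⟨l1, hl1⟩ := hL r1 φ1 (hr1 _ hym) (hr1 _ he1m) (by rintro rfl; simp at hr1a) hφ1 hVφ1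
    obtain ⟨ψ1, hψ1, hVψ1⟩ := hS u1 hgu1 hhu1
    obtain ⟨m1, hm1⟩ := hM u1 ψ1 hgu1 hhu1 hψ1 hVψ1
    have c1 := hLM r φ h1 h2 h3 h4 u1 ψ1 hgu1 hhu1 hψ1 hVψ1 hru1 l' m1 hl' hm1
    have c2 := hLM r1 φ1 (hr1 _ hym) (hr1 _ he1m) hφ1 hVφ1 u1 ψ1 hgu1 hhu1 hψ1 hVψ1 hr1a l1 m1 hl1 hm1
    have c3 := hLM r1 φ1 (hr1 _ hym) (hr1 _ he1m) hφ1 hVφ1 u0 ψ0 hgu0 hhu0 hgψ0 hVψ0 hr1b l1 m0 hl1 hm0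
    have e1' : l' = l := by
      rw [hl, c3.1, ← c2.1, c1.1, neg_neg]
    have e2' : φ e1 = p := by
      rw [hp, c3.2, ← c2.2, c1.2, neg_neg]
    intro e
    rw [hl' e, e1', e2']
  have hψ0' : ψ0 = -l • u0 - p • y := by
    rw [hl, hp]; simp only [neg_neg, neg_smul, sub_neg_eq_add]; exact hm0
  obtain ⟨r1, hr1, hr1a, -⟩ := exists_form (hmidnot u0 hgu0 hhu0 hu0) (hmidnot u0 hgu0 hhu0 hu0)
  have hr1y : r1 y = 0 := hr1 _ hym
  have hr1e : r1 e1 = 0 := hr1 _ he1m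
  obtain ⟨r0, hr0y, hr0e, hr0⟩ : ∃ r0 : E →ₗ[D] D, r0 y = 0 ∧ r0 e1 = 0 ∧ r0 u0 = 1 :=
    ⟨rs r1 (r1 u0)⁻¹, by simp [rs_apply, hr1y], by simp [rs_apply, hr1e], by simp [rs_apply, hr1a]⟩
  have hr00 : r0 ≠ 0 := by rintro rfl; simp at hr0
  set x := e1 + l • y with hx
  set f := h - rs g l with hf
  by_cases hp0 : p = 0
  · refine core_finish V hV hg1 hgy hhy hh1 hx hf hr0 hr0y hr0e ?_ ?_
    · intro r hry hre
      by_cases hr : r = 0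
      · subst hr
        have : rk (0 : E →ₗ[D] D) x = 0 := by ext e; simp
        rw [this]; exact V.zero_mem
      obtain ⟨φ, hφ, hφV⟩ := hT r hry hre
      have hA := claimA r φ hry hre hr hφ hφV
      convert hφV using 1
      ext e
      simp [hA, hp0, hx, smul_smul]
    · convert hVψ0 using 1
      ext e
      simp [hψ0', hp0, hf, rs_apply, smul_smul, sub_eq_add_neg, add_smul, neg_smul]
  · exfalso
    have hsum : ∀ r r' : E →ₗ[D] D, r y = 0 → r e1 = 0 → r' y = 0 → r' e1 = 0 →
        r ≠ 0 → r' ≠ 0 → r + r' = 0 := by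
      intro r r' h1 h2 h1' h2' h3 h3'
      by_contra hc
      obtain ⟨φ, hφ, hφV⟩ := hT r h1 h2
      obtain ⟨φ', hφ', hφV'⟩ := hT r' h1' h2'
      have a1 := claimA r φ h1 h2 h3 hφ hφV e1
      have a2 := claimA r' φ' h1' h2' h3' hφ' hφV' e1
      have a3 := claimA (r + r') (φ + φ') (by simp [h1, h1']) (by simp [h2, h2']) hc
        (by simp [hφ, hφ']) (by
          convert V.add_mem hφV hφV' using 1
          ext e; simp [add_smul]; abel) e1
      simp [a1, a2, h2, h2', hg1] at a3
      exact hp0 a3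
    have hneg : ∀ c : D, c ≠ 0 → c = -1 := by
      intro c hc
      have := hsum (rs r0 c) r0 (by simp [rs_apply, hr0y]) (by simp [rs_apply, hr0e]) hr0y hr0e
        (by
          intro h0
          have := congrArg (fun k => k u0) h0
          simp [rs_apply, hr0, hc] at this) hr00
      have := congrArg (fun k => k u0) this
      simp [rs_apply, hr0] at this
      exact eq_neg_of_add_eq_zero_left this
    have h1n : (1 : D) = -1 := hneg 1 one_ne_zero
    have h01 : ∀ c : D, c = 0 ∨ c = 1 := by
      intro c
      by_cases hc : c = 0
      · exact Or.inl hc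
      · exact Or.inr (by rw [h1n]; exact hneg c hc)
    have h11 : (1 : D) + 1 = 0 := by nth_rewrite 2 [h1n]; simp
    have hp1 : p = 1 := (h01 p).resolve_left hp0
    have hnegD : ∀ c : D, -c = c := by
      intro c
      rcases h01 c with rfl | rfl
      · simp
      · exact h1n.symm
    have hnegE : ∀ e : E, -e = e := by
      intro e
      have : (-1 : D) • e = (1 : D) • e := by rw [← h1n]
      simpa using this
    have hspan : ∀ e, ∃ a b c : D, e = a • x + b • u0 + c • y := by
      intro e
      have hmem : e ∈ Submodule.span D {u0, e1, y} := by
        by_contra hc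
        obtain ⟨r, hr, hr', -⟩ := exists_form hc hc
        have hry : r y = 0 := hr _ (Submodule.subset_span (by simp))
        have hr1 : r e1 = 0 := hr _ (Submodule.subset_span (by simp))
        have hru : r u0 = 0 := hr _ (Submodule.subset_span (by simp))
        have h3 := hsum r r0 hry hr1 hr0y hr0e (by rintro rfl; simp at hr') hr00
        have := congrArg (fun k => k u0) h3
        simp [hru, hr0] at this
      obtain ⟨a, b, c, habc⟩ := Submodule.mem_span_triple.1 hmem
      refine ⟨b, a, c - b * l, ?_⟩
      rw [← habc, hx, smul_add, smul_smul, sub_smul]; abel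
    have hfin : Module.finrank D E ≤ 3 := by
      classical
      have htop : Submodule.span D (({x, u0, y} : Finset E) : Set E) = ⊤ := by
        rw [eq_top_iff]
        rintro e -
        obtain ⟨a, b, c, rfl⟩ := hspan e
        refine Submodule.add_mem _ (Submodule.add_mem _ ?_ ?_) ?_ <;>
          exact Submodule.smul_mem _ _ (Submodule.subset_span (by simp))
      have h1 := finrank_span_finset_le_card (R := D) ({x, u0, y} : Finset E)
      rw [Set.finrank, htop, finrank_top] at h1
      exact h1.trans Finset.card_le_three
    have hcube : ∀ X ∈ V, (X ^ 3) y = 0 := by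
      intro X hX
      obtain ⟨k, hk⟩ := hV X hX
      have h1 : LinearMap.ker (X ^ k) ≤ _ := Module.End.ker_pow_le_ker_pow_finrank X k
      rw [hk] at h1
      have h2 : y ∈ LinearMap.ker (X ^ Module.finrank D E) := h1 (by simp)
      rw [show 3 = (3 - Module.finrank D E) + Module.finrank D E by omega, pow_add,
        Module.End.mul_apply, LinearMap.mem_ker.1 h2, map_zero]
    have hfx : f x = 0 := by simp [hf, hx, rs_apply, hh1, hhy, hg1, hgy]
    have hfy : f y = 1 := by simp [hf, rs_apply, hhy, hgy]
    have hfu : f u0 = 0 := by simp [hf, rs_apply, hhu0, hgu0]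
    have hgx : g x = 1 := by simp [hx, hg1, hgy]
    have hr0x : r0 x = 0 := by simp [hx, hr0e, hr0y]
    have hcoord : ∀ a b c : D, a • x + b • u0 + c • y = 0 → a = 0 ∧ b = 0 ∧ c = 0 := by
      intro a b c habc
      refine ⟨?_, ?_, ?_⟩
      · simpa [hgx, hgu0, hgy] using congrArg g habc
      · simpa [hr0x, hr0, hr0y] using congrArg r0 habc
      · simpa [hfx, hfu, hfy] using congrArg f habc
    have hTV : rk r0 x + rk g y ∈ V := by
      obtain ⟨φ, hφ, hφV⟩ := hT r0 hr0y hr0e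
      have hA := claimA r0 φ hr0y hr0e hr00 hφ hφV
      convert hφV using 1
      ext e
      simp [hA, hp1, hx, smul_smul, add_smul, add_assoc]
    have hSV : rk f u0 + rk g y ∈ V := by
      convert hVψ0 using 1
      ext e
      simp only [LinearMap.add_apply, rk_apply, hψ0', hp1, hf, rs_apply, LinearMap.sub_apply,
        smul_sub, sub_smul, smul_smul, one_smul, neg_smul, smul_neg]
      rw [sub_eq_add_neg (-((g e * l) • u0)), hnegE (g e • y)]
      abel
    obtain ⟨N, hNV, c0, hNy⟩ := hN
    obtain ⟨a, b, d, hNx⟩ := hspan (N x)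
    obtain ⟨s, c, e, hNu⟩ := hspan (N u0)
    have hNy' : N y = x + (c0 - l) • y := by rw [hNy, hx, sub_smul]; abel
    refine two_bash h01 h11 a b c d e (c0 - l) s fun σ τ => ?_
    have hmulV : ∀ (σ : D) (X : Module.End D E), X ∈ V → ∃ Y ∈ V, ∀ e, Y e = σ • X e := by
      intro σ X hX
      rcases h01 σ with rfl | rfl
      · exact ⟨0, V.zero_mem, by simp⟩
      · exact ⟨X, hX, by simp⟩
    obtain ⟨T, hTV', hTa⟩ := hmulV σ _ hTV
    obtain ⟨S, hSV', hSa⟩ := hmulV τ _ hSV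
    set t := c0 - l with ht
    have h3 := hcube (N + T + S) (V.add_mem (V.add_mem hNV hTV') hSV')
    have Yy : (N + T + S) y = x + τ • u0 + t • y := by
      simp [hNy', hTa, hSa, hr0y, hgy, hfy]; abel
    have Yx : (N + T + S) x = a • x + b • u0 + (d + σ + τ) • y := by
      simp [hNx, hTa, hSa, hr0x, hgx, hfx, add_smul]; abel
    have Yu : (N + T + S) u0 = (s + σ) • x + c • u0 + e • y := by
      simp [hNu, hTa, hSa, hr0, hgu0, hfu, add_smul]; abel
    rw [show (3 : ℕ) = 1 + 1 + 1 from rfl, pow_add, pow_add, pow_one, Module.End.mul_apply,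
      Module.End.mul_apply, Yy] at h3
    apply hcoord
    rw [← h3]
    simp only [map_add, map_smul, Yx, Yu, Yy, smul_add, smul_smul, add_smul, mul_add, add_mul,
      mul_assoc]
    abel

end core
end Gerst


namespace Gerst
section Dim
open Module

variable {K0 D E F : Type*} [Field K0] [DivisionRing D] [Algebra K0 D] [FiniteDimensional K0 D]
  [AddCommGroup E] [Module D E] [Module K0 E] [IsScalarTower K0 D E] [FiniteDimensional D E]
  [AddCommGroup F] [Module D F] [Module K0 F] [IsScalarTower K0 D F] [FiniteDimensional D F]

theorem fin_hom (K0 D E F : Type*) [Field K0] [DivisionRing D] [Algebra K0 D] [FiniteDimensional K0 D]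
  [AddCommGroup E] [Module D E] [FiniteDimensional D E]
  [AddCommGroup F] [Module D F] [Module K0 F] [IsScalarTower K0 D F] [FiniteDimensional D F] :
    FiniteDimensional K0 (E →ₗ[D] F) := by
  have : FiniteDimensional K0 F := Module.Finite.trans D F
  exact Module.Finite.equiv ((Module.finBasis D E).constr K0 : _ ≃ₗ[K0] (E →ₗ[D] F))

theorem finrank_form (K0 D E : Type*) [Field K0] [DivisionRing D] [Algebra K0 D]
  [FiniteDimensional K0 D] [AddCommGroup E] [Module D E] [FiniteDimensional D E] :
    finrank K0 (E →ₗ[D] D) = finrank K0 D * finrank D E := by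
  rw [← ((Module.finBasis D E).constr K0 : _ ≃ₗ[K0] (E →ₗ[D] D)).finrank_eq]
  rw [Module.finrank_pi_fintype]
  simp [mul_comm]

theorem finrank_split {X Y : Type*} [AddCommGroup X] [Module K0 X] [AddCommGroup Y] [Module K0 Y]
    [FiniteDimensional K0 X] (f : X →ₗ[K0] Y) (V : Submodule K0 X) :
    finrank K0 V = finrank K0 (V.map f) + finrank K0 (V ⊓ LinearMap.ker f : Submodule K0 X) := by
  have h := LinearMap.finrank_range_add_finrank_ker (f.domRestrict V)
  rw [LinearMap.range_domRestrict, LinearMap.ker_domRestrict] at h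
  rw [← h]
  congr 1
  rw [← Submodule.map_comap_subtype]
  exact (Submodule.finrank_map_subtype_eq V _).symm

/-- compression -/
def cmp (π : E →ₗ[D] F) (s : F →ₗ[D] E) : Module.End D E →ₗ[K0] Module.End D F where
  toFun M := π ∘ₗ M ∘ₗ s
  map_add' M N := by ext; simp
  map_smul' c M := by
    ext e
    simp only [LinearMap.comp_apply, LinearMap.smul_apply, RingHom.id_apply]
    exact LinearMap.map_smul_of_tower π c _

theorem cmp_apply (π : E →ₗ[D] F) (s : F →ₗ[D] E) (M : Module.End D E) (e : F) :
    cmp (K0 := K0) π s M e = π (M (s e)) := rfl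

def ev (π : E →ₗ[D] F) (y : E) : Module.End D E →ₗ[K0] F where
  toFun M := π (M y)
  map_add' M N := by simp
  map_smul' c M := by
    simp only [LinearMap.smul_apply, RingHom.id_apply]
    exact LinearMap.map_smul_of_tower π c _

theorem ev_apply (π : E →ₗ[D] F) (y : E) (M : Module.End D E) :
    ev (K0 := K0) π y M = π (M y) := rfl

def dv (g : E →ₗ[D] D) (s : F →ₗ[D] E) : Module.End D E →ₗ[K0] (F →ₗ[D] D) where
  toFun M := g ∘ₗ M ∘ₗ s
  map_add' M N := by ext; simp
  map_smul' c M := by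
    ext e
    simp only [LinearMap.comp_apply, LinearMap.smul_apply, RingHom.id_apply]
    exact LinearMap.map_smul_of_tower g c _

theorem dv_apply (g : E →ₗ[D] D) (s : F →ₗ[D] E) (M : Module.End D E) (e : F) :
    dv (K0 := K0) g s M e = g (M (s e)) := rfl

theorem exists_case1 {y : E} (hy : y ≠ 0) : ∃ (F : Submodule D E) (π : E →ₗ[D] F),
    (∀ x : F, π x = x) ∧ (∀ e, π e = 0 ↔ ∃ c : D, e = c • y) ∧ finrank D F + 1 = finrank D E := by
  obtain ⟨g, hg⟩ : ∃ g : E →ₗ[D] D, g y = 1 := by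
    obtain ⟨f, -, hf, -⟩ := exists_form (D := D) (p := (⊥ : Submodule D E)) (a := y) (b := y)
      (by simpa using hy) (by simpa using hy)
    exact ⟨rs f (f y)⁻¹, by rw [rs_apply, mul_inv_cancel₀ hf]⟩
  have hm : ∀ e, (LinearMap.id - rk g y : E →ₗ[D] E) e ∈ LinearMap.ker g := by
    intro e; simp [hg]
  have hc : ∀ e, ((LinearMap.codRestrict (LinearMap.ker g) (LinearMap.id - rk g y) hm e :
      LinearMap.ker g) : E) = e - g e • y := fun e => rfl
  refine ⟨LinearMap.ker g, LinearMap.codRestrict _ (LinearMap.id - rk g y) hm, ?_, ?_, ?_⟩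
  · rintro ⟨x, hx⟩
    have : g x = 0 := hx
    apply Subtype.ext
    rw [hc, this, zero_smul, sub_zero]
  · intro e
    rw [Subtype.ext_iff, hc]
    constructor
    · intro h
      exact ⟨g e, sub_eq_zero.1 h⟩
    · rintro ⟨c, rfl⟩
      simp [hg]
  · have := LinearMap.finrank_range_add_finrank_ker g
    rw [LinearMap.range_eq_top.2, finrank_top, Module.finrank_self] at this
    · omega
    · intro a; exact ⟨a • y, by simp [hg]⟩

theorem exists_case2 {g : E →ₗ[D] D} (hg : g ≠ 0) : ∃ (π : E →ₗ[D] LinearMap.ker g),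
    (∀ x : LinearMap.ker g, π x = x) ∧ finrank D (LinearMap.ker g) + 1 = finrank D E := by
  obtain ⟨π, hπ⟩ := LinearMap.exists_leftInverse_of_injective (LinearMap.ker g).subtype
    (LinearMap.ker_eq_bot.2 Subtype.val_injective)
  refine ⟨π, fun x => LinearMap.congr_fun hπ x, ?_⟩
  have := LinearMap.finrank_range_add_finrank_ker g
  rw [LinearMap.range_eq_top.2 (LinearMap.surjective hg), finrank_top, Module.finrank_self] at this
  omega

/-- Case 1 package. -/
structure C1 (π : E →ₗ[D] F) (s : F →ₗ[D] E) (y : E) : Prop where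
  y0 : y ≠ 0
  ps : ∀ x, π (s x) = x
  ker : ∀ e, π e = 0 ↔ ∃ c : D, e = c • y
  dim : finrank D F + 1 = finrank D E

structure C2 (π : E →ₗ[D] F) (s : F →ₗ[D] E) (g : E →ₗ[D] D) : Prop where
  g0 : g ≠ 0
  ps : ∀ x, π (s x) = x
  gs : ∀ x, g (s x) = 0
  sp : ∀ e, g e = 0 → s (π e) = e
  dim : finrank D F + 1 = finrank D E

theorem C1.lift {π : E →ₗ[D] F} {s : F →ₗ[D] E} {y : E} (h : C1 π s y) (e : E) :
    ∃ c : D, e = s (π e) + c • y := by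
  obtain ⟨c, hc⟩ := (h.ker (e - s (π e))).1 (by rw [map_sub, h.ps, sub_self])
  exact ⟨c, by rw [← hc]; abel⟩

theorem C1.cmp_eq {π : E →ₗ[D] F} {s : F →ₗ[D] E} {y : E} (h : C1 π s y) {M : Module.End D E}
    (hM : M y = 0) (e : E) : π (M (s (π e))) = π (M e) := by
  obtain ⟨c, hc⟩ := h.lift e
  conv_rhs => rw [hc]
  simp [hM]

theorem C1.nil {π : E →ₗ[D] F} {s : F →ₗ[D] E} {y : E} (h : C1 π s y) {M : Module.End D E}
    (hM : M y = 0) (hn : IsNilpotent M) : IsNilpotent (cmp (K0 := K0) π s M) := by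
  obtain ⟨k, hk⟩ := hn
  refine ⟨k, ?_⟩
  have key : ∀ k : ℕ, ∀ e, ((Gerst.cmp (K0 := K0) π s M) ^ k) (π e) = π ((M ^ k) e) := by
    intro k
    induction k with
    | zero => intro e; rfl
    | succ k ih => intro e; rw [pow_succ, pow_succ, Module.End.mul_apply, cmp_apply, h.cmp_eq hM, ih]; rfl
  ext x
  rw [← h.ps x, key, hk]; simp

theorem C2.nil {π : E →ₗ[D] F} {s : F →ₗ[D] E} {g : E →ₗ[D] D} (h : C2 π s g)
    {M : Module.End D E}
    (hM : ∀ e, g (M e) = 0) (hn : IsNilpotent M) : IsNilpotent (cmp (K0 := K0) π s M) := by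
  obtain ⟨k, hk⟩ := hn
  refine ⟨k, ?_⟩
  have key : ∀ k : ℕ, ∀ x, s (((Gerst.cmp (K0 := K0) π s M) ^ k) x) = (M ^ k) (s x) := by
    intro k
    induction k with
    | zero => intro e; rfl
    | succ k ih =>
      intro e
      rw [pow_succ, pow_succ, Module.End.mul_apply, ih, cmp_apply, h.sp _ (hM _)]; rfl
  ext x
  rw [← h.ps (((Gerst.cmp (K0 := K0) π s M) ^ k) x), key, hk]; simp

/-- the subspace W -/
def W1 (V : Submodule K0 (Module.End D E)) (π : E →ₗ[D] F) (y : E) :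
    Submodule K0 (Module.End D E) := V ⊓ LinearMap.ker (ev (K0 := K0) π y)

def W2 (V : Submodule K0 (Module.End D E)) (g : E →ₗ[D] D) (s : F →ₗ[D] E) :
    Submodule K0 (Module.End D E) := V ⊓ LinearMap.ker (dv (K0 := K0) g s)

theorem mem_W1 {V : Submodule K0 (Module.End D E)} (hV : ∀ M ∈ V, IsNilpotent M)
    {π : E →ₗ[D] F} {s : F →ₗ[D] E} {y : E} (h : C1 π s y) {M : Module.End D E} :
    M ∈ W1 V π y ↔ M ∈ V ∧ M y = 0 := by
  rw [W1, Submodule.mem_inf, LinearMap.mem_ker, ev_apply, h.ker]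
  constructor
  · rintro ⟨hM, c, hc⟩
    refine ⟨hM, ?_⟩
    rw [hc, nil_eig (hV M hM) h.y0 hc, zero_smul]
  · rintro ⟨hM, hc⟩
    exact ⟨hM, 0, by rw [hc, zero_smul]⟩

theorem mem_W2 {V : Submodule K0 (Module.End D E)} (hV : ∀ M ∈ V, IsNilpotent M)
    {π : E →ₗ[D] F} {s : F →ₗ[D] E} {g : E →ₗ[D] D} (h : C2 π s g) {M : Module.End D E} :
    M ∈ W2 V g s ↔ M ∈ V ∧ ∀ e, g (M e) = 0 := by
  rw [W2, Submodule.mem_inf, LinearMap.mem_ker]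
  constructor
  · rintro ⟨hM, hc⟩
    refine ⟨hM, ?_⟩
    have hc' : ∀ e, g e = 0 → g (M e) = 0 := by
      intro e he
      rw [← h.sp e he]
      exact LinearMap.congr_fun hc (π e)
    obtain ⟨z, hz⟩ := LinearMap.surjective h.g0 1
    have h1 : ∀ e, g (M e) = g e * g (M z) := by
      intro e
      have := hc' (e - g e • z) (by simp [hz])
      rw [map_sub, map_sub, sub_eq_zero] at this
      rw [this]; simp
    have h2 := nil_eig_dual (hV M hM) h.g0 h1
    intro e; rw [h1, h2, mul_zero]
  · rintro ⟨hM, hc⟩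
    refine ⟨hM, ?_⟩
    ext x
    exact hc _

theorem finrank_F : finrank K0 F = finrank K0 D * finrank D F :=
  (Module.finrank_mul_finrank K0 D F).symm

end Dim
end Gerst


namespace Gerst
section Dim
open Module
universe u

variable {K0 D : Type*} {E F : Type u} [Field K0] [DivisionRing D] [Algebra K0 D]
  [FiniteDimensional K0 D]
  [AddCommGroup E] [Module D E] [Module K0 E] [IsScalarTower K0 D E] [FiniteDimensional D E]
  [AddCommGroup F] [Module D F] [Module K0 F] [IsScalarTower K0 D F] [FiniteDimensional D F]

theorem choose2 (n : ℕ) : (n + 1).choose 2 = n + n.choose 2 := by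
  rw [Nat.choose_succ_succ' n 1, Nat.choose_one_right]

theorem C1.eq_rk {π : E →ₗ[D] F} {s : F →ₗ[D] E} {y : E} (h : C1 π s y) {M : Module.End D E}
    (hM : ∀ e, π (M e) = 0) : ∃ φ : E →ₗ[D] D, M = rk φ y := by
  obtain ⟨f, -, hf, -⟩ := exists_form (D := D) (p := (⊥ : Submodule D E)) (a := y) (b := y)
      (by simpa using h.y0) (by simpa using h.y0)
  refine ⟨rs (f ∘ₗ M) (f y)⁻¹, ?_⟩
  ext e
  obtain ⟨c, hc⟩ := (h.ker _).1 (hM e)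
  rw [rk_apply, rs_apply, LinearMap.comp_apply, hc, map_smul, smul_eq_mul, mul_assoc,
    mul_inv_cancel₀ hf, mul_one]

theorem step1 {V : Submodule K0 (Module.End D E)} (hV : ∀ M ∈ V, IsNilpotent M)
    {π : E →ₗ[D] F} {s : F →ₗ[D] E} {y : E} (h : C1 π s y)
    (ha : ∀ φ, rk φ y ∈ V → φ = 0) :
    finrank K0 V = finrank K0 (V.map (ev (K0 := K0) π y)) +
      finrank K0 ((W1 V π y).map (cmp (K0 := K0) π s)) := by
  have := fin_hom K0 D E E
  rw [finrank_split (ev (K0 := K0) π y) V]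
  congr 1
  have h2 := finrank_split (cmp (K0 := K0) π s) (W1 V π y)
  have h3 : (W1 V π y ⊓ LinearMap.ker (cmp (K0 := K0) π s)) = ⊥ := by
    rw [eq_bot_iff]
    rintro M ⟨hM, hk⟩
    rw [SetLike.mem_coe, mem_W1 hV h] at hM
    have hk' : ∀ e, π (M e) = 0 := by
      intro e
      rw [← h.cmp_eq hM.2]
      exact LinearMap.congr_fun hk (π e)
    obtain ⟨φ, rfl⟩ := h.eq_rk hk'
    have := ha φ hM.1
    subst this
    ext; simp
  rw [h3, finrank_bot, add_zero] at h2
  exact h2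

theorem step2 {V : Submodule K0 (Module.End D E)} (hV : ∀ M ∈ V, IsNilpotent M)
    {π : E →ₗ[D] F} {s : F →ₗ[D] E} {g : E →ₗ[D] D} (h : C2 π s g)
    (ha : ∀ u, rk g u ∈ V → u = 0) :
    finrank K0 V = finrank K0 (V.map (dv (K0 := K0) g s)) +
      finrank K0 ((W2 V g s).map (cmp (K0 := K0) π s)) := by
  have := fin_hom K0 D E E
  rw [finrank_split (dv (K0 := K0) g s) V]
  congr 1
  have h2 := finrank_split (cmp (K0 := K0) π s) (W2 V g s)
  have h3 : (W2 V g s ⊓ LinearMap.ker (cmp (K0 := K0) π s)) = ⊥ := by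
    rw [eq_bot_iff]
    rintro M ⟨hM, hk⟩
    rw [SetLike.mem_coe, mem_W2 hV h] at hM
    have hk' : ∀ e, g e = 0 → M e = 0 := by
      intro e he
      have h1 : π (M (s (π e))) = 0 := LinearMap.congr_fun hk (π e)
      rw [h.sp e he] at h1
      rw [← h.sp (M e) (hM.2 e), h1, map_zero]
    obtain ⟨z, hz⟩ := LinearMap.surjective h.g0 1
    have h4 : M = rk g (M z) := by
      ext e
      have := hk' (e - g e • z) (by simp [hz])
      rw [map_sub, sub_eq_zero] at this
      rw [this]; simp
    have h5 := ha (M z) (h4 ▸ hM.1)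
    rw [h4, h5]
    ext; simp
  rw [h3, finrank_bot, add_zero] at h2
  exact h2

theorem nil1 {V : Submodule K0 (Module.End D E)} (hV : ∀ M ∈ V, IsNilpotent M)
    {π : E →ₗ[D] F} {s : F →ₗ[D] E} {y : E} (h : C1 π s y) :
    ∀ M ∈ (W1 V π y).map (cmp (K0 := K0) π s), IsNilpotent M := by
  rintro _ ⟨M, hM, rfl⟩
  rw [SetLike.mem_coe, mem_W1 hV h] at hM
  exact h.nil hM.2 (hV M hM.1)

theorem nil2 {V : Submodule K0 (Module.End D E)} (hV : ∀ M ∈ V, IsNilpotent M)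
    {π : E →ₗ[D] F} {s : F →ₗ[D] E} {g : E →ₗ[D] D} (h : C2 π s g) :
    ∀ M ∈ (W2 V g s).map (cmp (K0 := K0) π s), IsNilpotent M := by
  rintro _ ⟨M, hM, rfl⟩
  rw [SetLike.mem_coe, mem_W2 hV h] at hM
  exact h.nil hM.2 (hV M hM.1)

theorem mkC1 {y : E} (hy : y ≠ 0) : ∃ (F : Submodule D E) (π : E →ₗ[D] F), C1 π F.subtype y := by
  obtain ⟨F, π, h1, h2, h3⟩ := exists_case1 (D := D) hy
  exact ⟨F, π, hy, h1, h2, h3⟩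

theorem mkC2 {g : E →ₗ[D] D} (hg : g ≠ 0) : ∃ (π : E →ₗ[D] LinearMap.ker g),
    C2 π (LinearMap.ker g).subtype g := by
  obtain ⟨π, h1, h3⟩ := exists_case2 (D := D) hg
  refine ⟨π, hg, h1, fun x => x.2, ?_, h3⟩
  intro e he
  exact congrArg Subtype.val (h1 ⟨e, he⟩)

variable (K0 D) in
theorem bound (n : ℕ) : ∀ (E : Type u) [AddCommGroup E] [Module D E] [Module K0 E]
    [IsScalarTower K0 D E] [FiniteDimensional D E], finrank D E = n →
    ∀ V : Submodule K0 (Module.End D E), (∀ M ∈ V, IsNilpotent M) →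
    finrank K0 V ≤ finrank K0 D * n.choose 2 := by
  induction n with
  | zero =>
    intro E _ _ _ _ _ hn V hV
    have : Subsingleton E := Module.finrank_zero_iff.1 hn
    have : Subsingleton (Module.End D E) := inferInstance
    have : finrank K0 V = 0 := Module.finrank_zero_of_subsingleton
    simp [this]
  | succ n ih =>
    intro E _ _ _ _ _ hn V hV
    have : Nontrivial E := Module.nontrivial_of_finrank_pos (R := D) (by omega)
    have := fin_hom K0 D E E
    obtain ⟨H, hH, hH2⟩ := exists_adapted V.toAddSubgroup hV
    obtain ⟨y, hy, -⟩ := not_cover hH hH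
    have hy0 : y ≠ 0 := by rintro rfl; exact hy H.zero_mem
    obtain ⟨F, π, h⟩ := mkC1 (D := D) hy0
    rw [step1 hV h (hH2 y hy)]
    have hF : finrank D F = n := by have := h.dim; omega
    have h1 := ih F hF _ (nil1 hV h)
    have : FiniteDimensional K0 F := Module.Finite.trans D F
    have h2 := Submodule.finrank_le (V.map (ev (K0 := K0) π y))
    rw [finrank_F (K0 := K0) (D := D) (F := F), hF] at h2
    rw [choose2, mul_add]
    omega

theorem eq1 {V : Submodule K0 (Module.End D E)} (hV : ∀ M ∈ V, IsNilpotent M)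
    {π : E →ₗ[D] F} {s : F →ₗ[D] E} {y : E} (h : C1 π s y)
    (ha : ∀ φ, rk φ y ∈ V → φ = 0)
    (hd : finrank K0 V = finrank K0 D * (finrank D E).choose 2) :
    finrank K0 ((W1 V π y).map (cmp (K0 := K0) π s)) = finrank K0 D * (finrank D F).choose 2 ∧
    ∀ e : F, ∃ M ∈ V, π (M y) = e := by
  have h0 := step1 hV h ha
  have h1 := bound K0 D _ F rfl _ (nil1 hV h)
  have : FiniteDimensional K0 F := Module.Finite.trans D F
  have h2 := Submodule.finrank_le (V.map (ev (K0 := K0) π y))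
  have h3 := finrank_F (K0 := K0) (D := D) (F := F)
  rw [← h.dim, choose2, mul_add] at hd
  refine ⟨by omega, ?_⟩
  have h4 : V.map (ev (K0 := K0) π y) = ⊤ := Submodule.eq_top_of_finrank_eq (by omega)
  intro e
  have : e ∈ V.map (ev (K0 := K0) π y) := by rw [h4]; trivial
  exact this

theorem eq2 {V : Submodule K0 (Module.End D E)} (hV : ∀ M ∈ V, IsNilpotent M)
    {π : E →ₗ[D] F} {s : F →ₗ[D] E} {g : E →ₗ[D] D} (h : C2 π s g)
    (ha : ∀ u, rk g u ∈ V → u = 0)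
    (hd : finrank K0 V = finrank K0 D * (finrank D E).choose 2) :
    finrank K0 ((W2 V g s).map (cmp (K0 := K0) π s)) = finrank K0 D * (finrank D F).choose 2 := by
  have h0 := step2 hV h ha
  have h1 := bound K0 D _ F rfl _ (nil2 hV h)
  have := fin_hom K0 D F D
  have h2 := Submodule.finrank_le (V.map (dv (K0 := K0) g s))
  have h3 := finrank_form K0 D F
  rw [← h.dim, choose2, mul_add] at hd
  omega

/-- `s ↦ rk (s ∘ π) x` -/
def rkmap (π : E →ₗ[D] F) (x : E) : (F →ₗ[D] D) →ₗ[K0] Module.End D E where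
  toFun r := rk (r ∘ₗ π) x
  map_add' M N := by ext; simp [add_smul]
  map_smul' c M := by
    ext e
    simp

theorem W1_eq {V : Submodule K0 (Module.End D E)} 
    {π : E →ₗ[D] F} {x : E} (hx : ∀ M ∈ V, M x = 0) : W1 V π x = V := by
  rw [W1, inf_eq_left]
  intro M hM
  rw [LinearMap.mem_ker, ev_apply, hx M hM, map_zero]

theorem corA {V : Submodule K0 (Module.End D E)} (hV : ∀ M ∈ V, IsNilpotent M)
    {π : E →ₗ[D] F} {s : F →ₗ[D] E} {x : E} (h : C1 π s x) (hx : ∀ M ∈ V, M x = 0)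
    (hd : finrank K0 V = finrank K0 D * (finrank D E).choose 2) :
    finrank K0 (V.map (cmp (K0 := K0) π s)) = finrank K0 D * (finrank D F).choose 2 ∧
    ∀ r : E →ₗ[D] D, r x = 0 → rk r x ∈ V := by
  have h1 := bound K0 D _ F rfl _ (nil1 hV h)
  rw [W1_eq hx] at h1
  have := fin_hom K0 D E E
  have := fin_hom K0 D F D
  have h2 := finrank_split (cmp (K0 := K0) π s) V
  have h3 := finrank_form K0 D F
  have h4 := LinearMap.finrank_range_le (rkmap (K0 := K0) π x)
  have hle : (V ⊓ LinearMap.ker (cmp (K0 := K0) π s)) ≤ LinearMap.range (rkmap (K0 := K0) π x) := by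
    rintro M ⟨hM, hk⟩
    have hMx := hx M hM
    have hk' : ∀ e, π (M e) = 0 := by
      intro e
      rw [← h.cmp_eq hMx]
      exact LinearMap.congr_fun hk (π e)
    obtain ⟨φ, rfl⟩ := h.eq_rk hk'
    rw [rk_apply, smul_eq_zero, or_iff_left h.y0] at hMx
    refine ⟨φ ∘ₗ s, ?_⟩
    ext e
    change φ (s (π e)) • x = φ e • x
    obtain ⟨c, hc⟩ := h.lift e
    conv_rhs => rw [hc]
    simp [hMx]
  have h5 := Submodule.finrank_mono hle
  rw [← h.dim, choose2, mul_add] at hd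
  refine ⟨by omega, ?_⟩
  have h6 := Submodule.eq_of_le_of_finrank_le hle (by omega)
  intro r hr
  have : rk r x ∈ LinearMap.range (rkmap (K0 := K0) π x) := by
    refine ⟨r ∘ₗ s, ?_⟩
    ext e
    change r (s (π e)) • x = r e • x
    obtain ⟨c, hc⟩ := h.lift e
    conv_rhs => rw [hc]
    simp [hr]
  rw [← h6] at this
  exact this.1

end Dim
end Gerst


namespace Gerst
section Dim
open Module
universe u

variable {K0 D : Type*} {E F : Type u} [Field K0] [DivisionRing D] [Algebra K0 D]
  [FiniteDimensional K0 D]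
  [AddCommGroup E] [Module D E] [Module K0 E] [IsScalarTower K0 D E] [FiniteDimensional D E]
  [AddCommGroup F] [Module D F] [Module K0 F] [IsScalarTower K0 D F] [FiniteDimensional D F]

variable (K0 D) in
def EqP (n : ℕ) : Prop := ∀ (E : Type u) [AddCommGroup E] [Module D E] [Module K0 E]
    [IsScalarTower K0 D E] [FiniteDimensional D E], finrank D E = n →
    ∀ V : Submodule K0 (Module.End D E), (∀ M ∈ V, IsNilpotent M) →
    finrank K0 V = finrank K0 D * n.choose 2 → ∃ x : E, x ≠ 0 ∧ ∀ M ∈ V, M x = 0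

variable (K0 D) in
theorem corB (n : ℕ) (IH : ∀ m ≤ n + 1, 0 < m → EqP.{u} K0 D m) :
    ∀ (E : Type u) [AddCommGroup E] [Module D E] [Module K0 E]
    [IsScalarTower K0 D E] [FiniteDimensional D E], finrank D E = n + 1 →
    ∀ V : Submodule K0 (Module.End D E), (∀ M ∈ V, IsNilpotent M) →
    finrank K0 V = finrank K0 D * (n + 1).choose 2 →
    ∃ h : E →ₗ[D] D, h ≠ 0 ∧ ∀ u, h u = 0 → rk h u ∈ V := by
  induction n with
  | zero =>
    intro E _ _ _ _ _ hn V hV hd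
    have : Nontrivial E := Module.nontrivial_of_finrank_pos (R := D) (by omega)
    obtain ⟨x, hx⟩ := exists_ne (0 : E)
    obtain ⟨f, -, hf, -⟩ := exists_form (D := D) (p := (⊥ : Submodule D E)) (a := x) (b := x)
      (by simpa using hx) (by simpa using hx)
    refine ⟨f, fun h => hf (by simp [h]), ?_⟩
    intro u hu
    obtain ⟨v, hv, hv2⟩ := finrank_eq_one_iff'.1 hn
    have hfv : f v ≠ 0 := by
      intro h0
      obtain ⟨c, rfl⟩ := hv2 x
      simp [h0] at hf
    obtain ⟨c, rfl⟩ := hv2 u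
    have : c = 0 := by simpa [hfv] using hu
    subst this
    have : rk f ((0 : D) • v) = 0 := by ext; simp
    rw [this]; exact V.zero_mem
  | succ n ih =>
    intro E _ _ _ _ _ hn V hV hd
    obtain ⟨x, hx, hx2⟩ := IH (n + 1 + 1) le_rfl (by omega) E hn V hV hd
    obtain ⟨F, π, h⟩ := mkC1 (D := D) hx
    rw [← hn] at hd
    obtain ⟨hA1, hA2⟩ := corA hV h hx2 hd
    have hF : finrank D F = n + 1 := by have := h.dim; omega
    have hnil := nil1 hV h
    rw [W1_eq hx2] at hnil
    rw [hF] at hA1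
    obtain ⟨k, hk, hk2⟩ := ih (fun m hm => IH m (by omega)) F hF _ hnil hA1
    refine ⟨k ∘ₗ π, ?_, ?_⟩
    · intro h0
      apply hk
      ext z
      have := LinearMap.congr_fun h0 (F.subtype z)
      rw [LinearMap.comp_apply, h.ps] at this
      exact this
    · intro u hu
      obtain ⟨M, hM, hMe⟩ := hk2 (π u) hu
      have h1 : ∀ e, π ((M - rk (k ∘ₗ π) u) e) = 0 := by
        intro e
        have h2 := LinearMap.congr_fun hMe (π e)
        rw [cmp_apply, h.cmp_eq (hx2 M hM)] at h2
        rw [LinearMap.sub_apply, map_sub, h2]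
        simp
      obtain ⟨φ, hφ⟩ := h.eq_rk h1
      have h3 : φ x = 0 := by
        have h4 := LinearMap.congr_fun hφ x
        have h5 : π x = 0 := (h.ker x).2 ⟨1, by simp⟩
        rw [LinearMap.sub_apply, hx2 M hM, rk_apply, rk_apply, LinearMap.comp_apply, h5, map_zero,
          zero_smul, sub_zero] at h4
        simpa [hx] using h4.symm
      have h6 := V.sub_mem hM (hA2 φ h3)
      rw [← hφ, sub_sub_cancel] at h6
      exact h6

theorem nil_one (h1 : finrank D E = 1) {M : Module.End D E} (hM : IsNilpotent M) : M = 0 := by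
  obtain ⟨v, hv, hv2⟩ := finrank_eq_one_iff'.1 h1
  obtain ⟨a, ha⟩ := hv2 (M v)
  have := nil_eig hM hv ha.symm
  ext w
  obtain ⟨c, rfl⟩ := hv2 w
  rw [map_smul, ← ha, this]; simp

theorem nil_ker [Nontrivial E] {M : Module.End D E} (hM : IsNilpotent M) : ∃ x, x ≠ 0 ∧ M x = 0 := by
  by_contra hcon
  push Not at hcon
  have hi : Function.Injective M := by
    rw [injective_iff_map_eq_zero]
    intro a ha
    by_contra h
    exact hcon a h ha
  obtain ⟨k, hk⟩ := hM
  have h2 := hi.iterate k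
  rw [← Module.End.coe_pow, hk] at h2
  obtain ⟨x, hx⟩ := exists_ne (0 : E)
  exact hx (h2 (by simp))

variable (K0 D) in
theorem eq_one : EqP.{u} K0 D 1 := by
  intro E _ _ _ _ _ hn V hV hd
  have : Nontrivial E := Module.nontrivial_of_finrank_pos (R := D) (by omega)
  obtain ⟨x, hx⟩ := exists_ne (0 : E)
  exact ⟨x, hx, fun M hM => by rw [nil_one hn (hV M hM)]; rfl⟩

variable (K0 D) in
theorem eq_two : EqP.{u} K0 D 2 := by
  intro E _ _ _ _ _ hn V hV hd
  have : Nontrivial E := Module.nontrivial_of_finrank_pos (R := D) (by omega)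
  have hq : 0 < finrank K0 D := finrank_pos
  have hne : V ≠ ⊥ := by
    rintro rfl
    rw [finrank_bot] at hd
    simp at hd
    omega
  obtain ⟨M, hM, hM0⟩ := Submodule.exists_mem_ne_zero_of_ne_bot hne
  obtain ⟨x, hx, hMx⟩ := nil_ker (hV M hM)
  obtain ⟨F, π, h⟩ := mkC1 (D := D) hx
  have hF : finrank D F = 1 := by have := h.dim; omega
  have h1 := nil_one hF (h.nil (K0 := K0) hMx (hV M hM))
  obtain ⟨f, rfl⟩ := h.eq_rk (M := M) (by
    intro e
    rw [← h.cmp_eq hMx]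
    exact LinearMap.congr_fun h1 (π e))
  have hfx : f x = 0 := by simpa [hx] using hMx
  have hfp : ∀ e, f (F.subtype (π e)) = f e := by
    intro e
    obtain ⟨c, hc⟩ := h.lift e
    conv_rhs => rw [hc]
    rw [map_add, map_smul, hfx, smul_zero, add_zero]
  obtain ⟨v, hv, hv2⟩ := finrank_eq_one_iff'.1 hF
  have hfv : f (F.subtype v) ≠ 0 := by
    intro h0
    apply hM0
    ext e
    obtain ⟨c, hc⟩ := hv2 (π e)
    rw [rk_apply, ← hfp, ← hc, map_smul, map_smul, h0]; simp
  refine ⟨x, hx, ?_⟩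
  intro N hN
  have h2 := rank_one_orth (hV N hN) (hV _ (V.add_mem hN hM)) 1
  rw [pow_one, ← hfp] at h2
  obtain ⟨c, hc⟩ := hv2 (π (N x))
  have hc0 : c = 0 := by
    rw [← hc, map_smul, map_smul, smul_eq_mul, mul_eq_zero, or_iff_left hfv] at h2
    exact h2
  rw [hc0, zero_smul] at hc
  obtain ⟨a, ha⟩ := (h.ker _).1 hc.symm
  rw [ha, nil_eig (hV N hN) hx ha, zero_smul]

variable (K0 D) in
theorem eq_step (n : ℕ) (IH : ∀ m < n + 3, 0 < m → EqP.{u} K0 D m) : EqP.{u} K0 D (n + 3) := by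
  intro E _ _ _ _ _ hn V hV hd
  have : Nontrivial E := Module.nontrivial_of_finrank_pos (R := D) (by omega)
  obtain ⟨H, hH, hH2⟩ := exists_adapted V.toAddSubgroup hV
  obtain ⟨x0, hx0, hx02⟩ := exists_dual_adapted V.toAddSubgroup hV
  have hsp : Submodule.span D {x0} ≠ ⊤ := by
    intro h
    have := finrank_span_singleton (K := D) hx0
    rw [h, finrank_top] at this
    omega
  obtain ⟨y, hyH, hyx⟩ := not_cover hH hsp
  have hy0 : y ≠ 0 := by rintro rfl; exact hyH H.zero_mem
  have hyad := hH2 y hyH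
  obtain ⟨F, π, h⟩ := mkC1 (D := D) hy0
  rw [← hn] at hd
  obtain ⟨hW, hsurj⟩ := eq1 hV h hyad hd
  have hF : finrank D F = n + 2 := by have := h.dim; omega
  have hWnil := nil1 hV h
  rw [hF] at hW
  obtain ⟨k1, hk1, hk1W⟩ := IH (n + 2) (by omega) (by omega) F hF _ hWnil hW
  obtain ⟨F', π', h'⟩ := mkC1 (D := D) hk1
  rw [← hF] at hW
  obtain ⟨-, hA⟩ := corA hWnil h' hk1W hW
  obtain ⟨e1, he1⟩ : ∃ e1, e1 = F.subtype k1 := ⟨_, rfl⟩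
  have hpe1 : π e1 = k1 := by rw [he1]; exact h.ps k1
  have one : ∀ r : E →ₗ[D] D, r y = 0 → r e1 = 0 →
      ∃ φ : E →ₗ[D] D, φ y = 0 ∧ rk r e1 + rk φ y ∈ V := by
    intro r hry hre
    obtain ⟨M, hM, hMe⟩ := hA (r ∘ₗ F.subtype) (by rw [LinearMap.comp_apply, ← he1, hre])
    rw [SetLike.mem_coe, mem_W1 hV h] at hM
    have h1 : ∀ e, π ((M - rk r e1) e) = 0 := by
      intro e
      have h2 := LinearMap.congr_fun hMe (π e)
      rw [cmp_apply, h.cmp_eq hM.2] at h2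
      rw [LinearMap.sub_apply, map_sub, h2, rk_apply, rk_apply, map_smul, hpe1,
        LinearMap.comp_apply]
      obtain ⟨c, hc⟩ := h.lift e
      conv_lhs => enter [2, 1]; rw [hc]
      rw [map_add, map_smul, hry, smul_zero, add_zero, sub_self]
    obtain ⟨φ, hφ⟩ := h.eq_rk h1
    refine ⟨φ, ?_, ?_⟩
    · have h4 := LinearMap.congr_fun hφ y
      rw [LinearMap.sub_apply, hM.2, rk_apply, rk_apply, hry, zero_smul, sub_zero] at h4
      simpa [hy0] using h4.symm
    · rw [← hφ, add_sub_cancel]; exact hM.1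
  have one' : ∀ M ∈ V, M y = 0 → ∃ c : D, M e1 = c • y := by
    intro M hM hMy
    rw [← h.ker, ← h.cmp_eq hMy, hpe1]
    exact hk1W _ ⟨M, (mem_W1 hV h).2 ⟨hM, hMy⟩, rfl⟩
  obtain ⟨g, hgy, hg0, hge⟩ : ∃ g : E →ₗ[D] D, g y = 0 ∧ g x0 ≠ 0 ∧ g e1 = 1 := by
    obtain ⟨g, h1, h2, h3⟩ := exists_form (D := D) (p := Submodule.span D {y}) (a := x0) (b := e1)
      (by
        rw [Submodule.mem_span_singleton]
        rintro ⟨c, hc⟩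
        apply hyx
        rw [Submodule.mem_span_singleton]
        have hc0 : c ≠ 0 := by rintro rfl; simp at hc; exact hx0 hc.symm
        exact ⟨c⁻¹, by rw [← hc, smul_smul, inv_mul_cancel₀ hc0, one_smul]⟩)
      (by
        rw [Submodule.mem_span_singleton]
        rintro ⟨c, hc⟩
        apply hk1
        rw [← hpe1, h.ker]
        exact ⟨c, hc.symm⟩)
    refine ⟨rs g (g e1)⁻¹, ?_, ?_, ?_⟩
    · rw [rs_apply, h1 y (Submodule.mem_span_singleton_self y), zero_mul]
    · rw [rs_apply]; exact mul_ne_zero h2 (inv_ne_zero h3)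
    · rw [rs_apply, mul_inv_cancel₀ h3]
  have hgne : g ≠ 0 := by rintro rfl; simp at hg0
  obtain ⟨π2, h2⟩ := mkC2 (D := D) hgne
  have hW2 := eq2 hV h2 (hx02 g hg0) hd
  have hG : finrank D (LinearMap.ker g) = n + 2 := by have := h2.dim; omega
  rw [hG] at hW2
  obtain ⟨k, hk, hk2⟩ := corB K0 D (n + 1) (fun m hm => IH m (by omega)) _ hG _ (nil2 hV h2) hW2
  obtain ⟨h0, hh0⟩ : ∃ h0 : E →ₗ[D] D, h0 = k ∘ₗ π2 := ⟨_, rfl⟩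
  have two : ∀ u, g u = 0 → h0 u = 0 → ∃ ψ, g ψ = 0 ∧ rk h0 u + rk g ψ ∈ V := by
    intro u hgu hhu
    obtain ⟨M, hM, hMe⟩ := hk2 (π2 u) (by rw [hh0] at hhu; exact hhu)
    rw [SetLike.mem_coe, mem_W2 hV h2] at hM
    have h3 : ∀ e, g e = 0 → M e = h0 e • u := by
      intro e he
      have h4 := LinearMap.congr_fun hMe (π2 e)
      rw [cmp_apply, h2.sp e he, rk_apply] at h4
      rw [← h2.sp (M e) (hM.2 e), h4, map_smul, h2.sp u hgu, hh0]; rfl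
    refine ⟨M e1 - h0 e1 • u, ?_, ?_⟩
    · rw [map_sub, map_smul, hM.2, hgu]; simp
    · convert hM.1 using 1
      ext e
      have h4 := h3 (e - g e • e1) (by simp [hge])
      rw [map_sub, sub_eq_iff_eq_add, map_smul] at h4
      rw [LinearMap.add_apply, rk_apply, rk_apply, h4, map_sub, map_smul, sub_smul, smul_sub,
        smul_eq_mul, mul_smul]
      abel
  have hhy : h0 y ≠ 0 := by
    intro hy
    obtain ⟨ψ, hgψ, hS⟩ := two y hgy hy
    obtain ⟨c, hc⟩ := one' _ hS (by
      rw [LinearMap.add_apply, rk_apply, rk_apply, hy, hgy, zero_smul, zero_smul, add_zero])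
    rw [LinearMap.add_apply, rk_apply, rk_apply, hge, one_smul] at hc
    have hψ : ψ = (c - h0 e1) • y := by rw [sub_smul, ← hc]; abel
    have h5 : h0 + rs g (c - h0 e1) = 0 := by
      apply hyad
      rw [Submodule.mem_toAddSubgroup]
      convert hS using 1
      ext e
      rw [hψ]
      simp only [LinearMap.add_apply, rk_apply, rs_apply, add_smul, mul_smul]
    apply hk
    ext z
    have h6 := LinearMap.congr_fun h5 ((LinearMap.ker g).subtype z)
    rw [LinearMap.add_apply, rs_apply, h2.gs, zero_mul, add_zero, hh0, LinearMap.comp_apply,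
      h2.ps] at h6
    exact h6
  obtain ⟨h1, hh1⟩ : ∃ h1, h1 = rs h0 (h0 y)⁻¹ := ⟨_, rfl⟩
  have h1y : h1 y = 1 := by rw [hh1, rs_apply, mul_inv_cancel₀ hhy]
  refine core V.toAddSubgroup hV (e1 := e1 - h1 e1 • y) (g := g) (y := y) (h := h1)
    ?_ hgy h1y ?_ ?_ ?_ ?_ (by omega)
  · rw [map_sub, map_smul, hgy, hge]; simp
  · rw [map_sub, map_smul, h1y]; simp
  · intro r hry hre
    rw [map_sub, map_smul, hry, smul_zero, sub_zero] at hre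
    obtain ⟨φ, hφ, hφ2⟩ := one r hry hre
    refine ⟨φ + rs r (h1 e1), ?_, ?_⟩
    · rw [LinearMap.add_apply, hφ, rs_apply, hry]; simp
    · rw [Submodule.mem_toAddSubgroup]
      convert hφ2 using 1
      ext e
      simp only [LinearMap.add_apply, rk_apply, rs_apply, add_smul, mul_smul, smul_sub]
      abel
  · intro u hgu hhu
    obtain ⟨ψ, hψ, hψ2⟩ := two ((h0 y)⁻¹ • u) (by rw [map_smul, hgu, smul_zero]) (by
      rw [hh1, rs_apply, mul_eq_zero, or_iff_left (inv_ne_zero hhy)] at hhu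
      rw [map_smul, hhu, smul_zero])
    refine ⟨ψ, hψ, ?_⟩
    rw [Submodule.mem_toAddSubgroup]
    convert hψ2 using 1
    ext e
    simp only [LinearMap.add_apply, rk_apply, hh1, rs_apply, mul_smul]
  · obtain ⟨N, hN, hNy⟩ := hsurj k1
    obtain ⟨c, hc⟩ := (h.ker (N y - (e1 - h1 e1 • y))).1 (by
      rw [map_sub, map_sub, map_smul, hNy, hpe1, (h.ker y).2 ⟨1, by simp⟩]; simp)
    exact ⟨N, hN, c, by rw [← hc]; abel⟩

variable (K0 D) in
theorem eq_all (n : ℕ) (hn : 0 < n) : EqP.{u} K0 D n := by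
  induction n using Nat.strong_induction_on with
  | _ n ih =>
    match n, hn with
    | 1, _ => exact eq_one K0 D
    | 2, _ => exact eq_two K0 D
    | n + 3, _ => exact eq_step K0 D n (fun m hm h0 => ih m hm h0)

end Dim
end Gerst


namespace Gerst
section Flag
open Module
universe u

variable (K0 D : Type*) [Field K0] [DivisionRing D] [Algebra K0 D] [FiniteDimensional K0 D]

theorem flag (n : ℕ) : ∀ (E : Type u) [AddCommGroup E] [Module D E] [Module K0 E]
    [IsScalarTower K0 D E] [FiniteDimensional D E], finrank D E = n →
    ∀ V : Submodule K0 (Module.End D E), (∀ M ∈ V, IsNilpotent M) →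
    finrank K0 V = finrank K0 D * n.choose 2 →
    ∃ b : Basis (Fin n) D E, ∀ M ∈ V, ∀ i j, j ≤ i → b.repr (M (b i)) j = 0 := by
  induction n with
  | zero =>
    intro E _ _ _ _ _ hn V hV hd
    exact ⟨Module.finBasisOfFinrankEq D E hn, fun M _ i => i.elim0⟩
  | succ n ih =>
    intro E _ _ _ _ _ hn V hV hd
    obtain ⟨x, hx, hx2⟩ := eq_all K0 D (n + 1) (by omega) E hn V hV hd
    obtain ⟨F, π, h⟩ := mkC1 (D := D) hx
    rw [← hn] at hd
    obtain ⟨hA1, -⟩ := corA hV h hx2 hd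
    have hF : finrank D F = n := by have := h.dim; omega
    have hnil := nil1 hV h
    rw [W1_eq hx2] at hnil
    rw [hF] at hA1
    obtain ⟨b, hb⟩ := ih F hF _ hnil hA1
    have hpx : π x = 0 := (h.ker x).2 ⟨1, by simp⟩
    have hli : ∀ (c : D), ∀ z ∈ F, c • x + z = 0 → c = 0 := by
      intro c z hz hcz
      have h1 : z = 0 := by
        have h2 := congrArg π hcz
        rw [map_add, map_smul, hpx, smul_zero, zero_add, map_zero] at h2
        have h3 := h.ps ⟨z, hz⟩
        have h4 : π z = ⟨z, hz⟩ := h3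
        rw [h4] at h2
        exact congrArg Subtype.val h2
      rw [h1, add_zero, smul_eq_zero, or_iff_left hx] at hcz
      exact hcz
    have hsp : ∀ z : E, ∃ c : D, z + c • x ∈ F := by
      intro z
      obtain ⟨c, hc⟩ := h.lift z
      refine ⟨-c, ?_⟩
      have : z + -c • x = F.subtype (π z) := by
        conv_lhs => rw [hc]
        rw [neg_smul]; abel
      rw [this]; exact (π z).2
    let B := Basis.mkFinSnoc b x hli hsp
    have hB1 : ∀ i : Fin n, B i.castSucc = F.subtype (b i) := by
      intro i
      change (Basis.mkFinSnoc b x hli hsp) i.castSucc = _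
      rw [Basis.coe_mkFinSnoc, Fin.snoc_castSucc]; rfl
    have hB2 : B (Fin.last n) = x := by
      change (Basis.mkFinSnoc b x hli hsp) _ = _
      rw [Basis.coe_mkFinSnoc, Fin.snoc_last]
    have hrepr : ∀ e (j : Fin n), B.repr e j.castSucc = b.repr (π e) j := by
      intro e j
      have h1 := B.sum_repr e
      rw [Fin.sum_univ_castSucc, hB2] at h1
      have h2 := congrArg π h1
      rw [map_add, map_smul, hpx, smul_zero, add_zero, map_sum] at h2
      rw [← h2]
      have h3 : ∀ i : Fin n, π (B.repr e i.castSucc • B i.castSucc) = B.repr e i.castSucc • b i := by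
        intro i
        rw [map_smul, hB1, h.ps]
      simp only [h3]
      rw [Basis.repr_sum_self]
    refine ⟨B, ?_⟩
    intro M hM i j hij
    induction i using Fin.lastCases with
    | last => rw [hB2, hx2 M hM]; simp
    | cast i =>
      obtain ⟨j, rfl⟩ : ∃ j' : Fin n, j = j'.castSucc :=
        ⟨⟨j, lt_of_le_of_lt hij (by simp)⟩, rfl⟩
      rw [hB1, hrepr]
      exact hb _ ⟨M, hM, rfl⟩ i j (by simpa using hij)

end Flag

section Mat
open Module Matrix

variable (K : Type*) [DivisionRing K] (K0 : Type*) [Field K0] [Algebra K0 K] (n : ℕ)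

/-- row-vector action -/
def act : Matrix (Fin n) (Fin n) K →ₗ[K0] Module.End K (Fin n → K) where
  toFun M :=
    { toFun := fun v => v ᵥ* M
      map_add' := fun v w => Matrix.add_vecMul M v w
      map_smul' := fun c v => Matrix.smul_vecMul c v M }
  map_add' M N := by
    refine LinearMap.ext fun v => ?_
    exact Matrix.vecMul_add M N v
  map_smul' c M := by
    refine LinearMap.ext fun v => ?_
    exact Matrix.vecMul_smul v c M

theorem act_apply (M : Matrix (Fin n) (Fin n) K) (v : Fin n → K) : act K K0 n M v = v ᵥ* M := rfl

theorem act_pow (M : Matrix (Fin n) (Fin n) K) (k : ℕ) :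
    (act K K0 n M) ^ k = act K K0 n (M ^ k) := by
  induction k with
  | zero => refine LinearMap.ext fun v => ?_; simp [act_apply]
  | succ k ih =>
    refine LinearMap.ext fun v => ?_
    rw [pow_succ, ih, Module.End.mul_apply, act_apply, act_apply, act_apply, Matrix.vecMul_vecMul,
      pow_succ']

theorem act_inj : Function.Injective (act K K0 n) := by
  intro M N h
  ext i j
  have := congrFun (LinearMap.congr_fun h (Pi.single i 1)) j
  simpa [act_apply] using this

theorem card_sig : Fintype.card ((j : Fin n) × Fin j) = n.choose 2 := by
  rw [Fintype.card_sigma]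
  simp only [Fintype.card_fin]
  rw [Fin.sum_univ_eq_sum_range (fun i => i) n, Finset.sum_range_id, Nat.choose_two_right]

def NTs (P Q : Matrix (Fin n) (Fin n) K) : Submodule K0 (Matrix (Fin n) (Fin n) K) where
  carrier := {M | ∀ i j, j ≤ i → (P * M * Q) i j = 0}
  zero_mem' := by intro i j _; simp
  add_mem' := by
    intro M N hM hN i j hij
    rw [mul_add, add_mul, Matrix.add_apply, hM i j hij, hN i j hij, add_zero]
  smul_mem' := by
    intro c M hM i j hij
    rw [Matrix.mul_smul, Matrix.smul_mul, Matrix.smul_apply, hM i j hij, smul_zero]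

theorem finrank_NTs [FiniteDimensional K0 K] (P Q : Matrix (Fin n) (Fin n) K) (hQP : Q * P = 1) :
    finrank K0 (NTs K K0 n P Q) ≤ finrank K0 K * n.choose 2 := by
  let L : NTs K K0 n P Q →ₗ[K0] (((j : Fin n) × Fin j) → K) :=
    { toFun := fun M p => (P * M.1 * Q) ⟨p.2, p.2.2.trans p.1.2⟩ p.1
      map_add' := by
        intro M N; funext p
        simp [mul_add, add_mul]
      map_smul' := by
        intro c M; funext p
        simp }
  have hL : Function.Injective L := by
    rw [injective_iff_map_eq_zero]
    intro M hM
    have h1 : P * M.1 * Q = 0 := by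
      ext i j
      rcases lt_or_ge i j with hij | hij
      · exact congrFun hM ⟨j, ⟨i, hij⟩⟩
      · exact M.2 i j hij
    apply Subtype.ext
    have h2 : Q * (P * M.1 * Q) * P = M.1 := by
      rw [show Q * (P * M.1 * Q) * P = (Q * P) * M.1 * (Q * P) by simp only [mul_assoc], hQP]
      simp
    rw [← h2, h1]; simp
  refine (LinearMap.finrank_le_finrank_of_injective hL).trans ?_
  rw [Module.finrank_pi_fintype, Finset.sum_const, Finset.card_univ, card_sig, smul_eq_mul, mul_comm]

end Mat
end Gerst

/-- Gerstenhaber equality case over a skew field: a `K0`-linear subspace of nilpotent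
`n × n` matrices over `K` of dimension `q * (n choose 2)` is similar to the space
of strictly upper-triangular matrices. The invertible matrix `P` is given together
with its (two-sided) inverse `Q`. -/
theorem stmt_1 (K : Type*) [DivisionRing K] (K0 : Type*) [Field K0] [Algebra K0 K]
    [FiniteDimensional K0 K] (q n : ℕ) (hq : Module.finrank K0 K = q) (hn : 0 < n)
    (V : Submodule K0 (Matrix (Fin n) (Fin n) K))
    (hV : ∀ M ∈ V, IsNilpotent M)
    (hdim : Module.finrank K0 V = q * n.choose 2) :
    ∃ P Q : Matrix (Fin n) (Fin n) K, P * Q = 1 ∧ Q * P = 1 ∧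
      ∀ M : Matrix (Fin n) (Fin n) K,
        M ∈ V ↔ ∀ i j : Fin n, j ≤ i → (P * M * Q) i j = 0 := by
  subst hq
  have hnil : ∀ M ∈ V.map (Gerst.act K K0 n), IsNilpotent M := by
    rintro _ ⟨M, hM, rfl⟩
    obtain ⟨k, hk⟩ := hV M hM
    exact ⟨k, by rw [Gerst.act_pow, hk, map_zero]⟩
  have hd : Module.finrank K0 (V.map (Gerst.act K K0 n)) = Module.finrank K0 K * n.choose 2 := by
    rw [← hdim]
    exact (Submodule.equivMapOfInjective _ (Gerst.act_inj K K0 n) V).finrank_eq.symm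
  obtain ⟨b, hb⟩ := Gerst.flag K0 K n (Fin n → K) (by simp) _ hnil hd
  let P : Matrix (Fin n) (Fin n) K := fun i k => b i k
  let Q : Matrix (Fin n) (Fin n) K := fun k j => b.repr (Pi.single k 1) j
  have key : ∀ (v : Fin n → K) (j : Fin n), ∑ k, v k * Q k j = b.repr v j := by
    intro v j
    conv_rhs => rw [pi_eq_sum_univ' v]
    simp only [map_sum, map_smul, Finsupp.coe_finsetSum, Finset.sum_apply, Finsupp.smul_apply,
      smul_eq_mul]
    refine Finset.sum_congr rfl fun k _ => ?_
    congr 3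
  have hPQ : P * Q = 1 := by
    ext i j
    rw [Matrix.mul_apply, key (b i) j, Module.Basis.repr_self, Finsupp.single_apply, Matrix.one_apply]
  have hQP : Q * P = 1 := by
    ext k l
    rw [Matrix.mul_apply]
    have := congrFun (b.sum_repr (Pi.single k 1)) l
    rw [Finset.sum_apply] at this
    simp only [Pi.smul_apply, smul_eq_mul] at this
    rw [this, Matrix.one_apply, Pi.single_apply]
    simp [eq_comm]
  have hle : V ≤ Gerst.NTs K K0 n P Q := by
    intro M hM i j hij
    rw [Matrix.mul_apply, key ((P * M) i) j]
    exact hb _ ⟨M, hM, rfl⟩ i j hij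
  have heq : V = Gerst.NTs K K0 n P Q :=
    Submodule.eq_of_le_of_finrank_le hle (by rw [hdim]; exact Gerst.finrank_NTs K K0 n P Q hQP)
  refine ⟨P, Q, hPQ, hQP, fun M => ?_⟩
  conv_lhs => rw [heq]
  rfl
end

section
/- Let K be a finite field of cardinality p and n a positive integer. If V is a subgroup of the additive group (M_n(K), +) in which every matrix is nilpotent and V has cardinality exactly p^(n choose 2), then there exists an invertible matrix P in M_n(K) such that P V P^{-1} equals the set NT_n(K) of all strictly upper-triangular n×n matrices over K. -/
theorem rank_one_nil {K E : Type*} [Field K] [AddCommGroup E] [Module K E]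
    (b N : Module.End K E) (φ : Module.Dual K E) (x : E)
    (hN : ∀ y, N y = b y + φ y • x) (hb : IsNilpotent b) (hn : IsNilpotent N) (k : ℕ) :
    φ ((b ^ k) x) = 0 := by
  have key : ∀ k : ℕ, ∀ y, (N ^ k) y = (b ^ k) y +
      ∑ j ∈ Finset.range k, φ ((b ^ j) y) • (N ^ (k - 1 - j)) x := by
    intro k
    induction k with
    | zero => intro y; simp
    | succ k ih =>
      intro y
      rw [pow_succ, Module.End.mul_apply, hN, map_add, ih, map_smul, Finset.sum_range_succ',
        pow_succ, Module.End.mul_apply, add_assoc]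
      congr 1
      simp only [pow_zero, Module.End.one_apply, Nat.sub_zero, Nat.add_sub_cancel]
      congr 1
      apply Finset.sum_congr rfl
      intro j hj
      rw [pow_succ b, Module.End.mul_apply]
      congr 3
      omega
  obtain ⟨m, hm⟩ := hb
  obtain ⟨l, hl⟩ := hn
  have hm' : ∀ k, m ≤ k → b ^ k = 0 := fun k hk => pow_eq_zero_of_le hk hm
  have hl' : ∀ k, l ≤ k → N ^ k = 0 := fun k hk => pow_eq_zero_of_le hk hl
  let f : Polynomial K := ∑ k ∈ Finset.range m, Polynomial.monomial k (φ ((b ^ k) x))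
  let g : Polynomial K := ∑ k ∈ Finset.range l, Polynomial.monomial k (φ ((N ^ k) x))
  have hf : ∀ k, f.coeff k = φ ((b ^ k) x) := by
    intro k
    simp only [f, Polynomial.finsetSum_coeff, Polynomial.coeff_monomial]
    rw [Finset.sum_ite_eq']
    split_ifs with h
    · rfl
    · rw [hm' k (by simpa using h)]; simp
  have hg : ∀ k, g.coeff k = φ ((N ^ k) x) := by
    intro k
    simp only [g, Polynomial.finsetSum_coeff, Polynomial.coeff_monomial]
    rw [Finset.sum_ite_eq']
    split_ifs with h
    · rfl
    · rw [hl' k (by simpa using h)]; simp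
  have hfg : g - f = Polynomial.X * (f * g) := by
    ext k
    rw [Polynomial.coeff_sub, hf, hg]
    cases k with
    | zero => simp
    | succ k =>
      rw [Polynomial.coeff_X_mul, Polynomial.coeff_mul, key, map_add, add_sub_cancel_left,
        map_sum, Finset.Nat.sum_antidiagonal_eq_sum_range_succ_mk]
      apply Finset.sum_congr rfl
      intro j hj
      rw [hf, hg]; simp
  have hf0 : f = 0 := by
    by_contra hf0
    have hg0 : g ≠ 0 := by
      intro h
      rw [h] at hfg
      simp at hfg
      exact hf0 hfg
    have h1 : (Polynomial.X * (f * g)).natDegree = 1 + (f.natDegree + g.natDegree) := by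
      rw [Polynomial.natDegree_mul Polynomial.X_ne_zero (mul_ne_zero hf0 hg0),
        Polynomial.natDegree_mul hf0 hg0, Polynomial.natDegree_X]
    have h2 := Polynomial.natDegree_sub_le g f
    rw [hfg, h1] at h2
    rcases le_total g.natDegree f.natDegree with h | h
    · rw [max_eq_right h] at h2; omega
    · rw [max_eq_left h] at h2; omega
  rw [← hf, hf0]; simp

theorem card_map_mul_ker {G H : Type*} [AddCommGroup G] [AddCommGroup H] (f : G →+ H)
    (V : AddSubgroup G) :
    Nat.card V = Nat.card (V.map f) * Nat.card (V ⊓ f.ker : AddSubgroup G) := by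
  rw [AddSubgroup.card_eq_card_quotient_mul_card_addSubgroup (f.comp V.subtype).ker]
  congr 1
  · rw [Nat.card_congr (QuotientAddGroup.quotientKerEquivRange (f.comp V.subtype)).toEquiv]
    have : (f.comp V.subtype).range = V.map f := by
      ext y; simp
    rw [this]
  · have : (V ⊓ f.ker : AddSubgroup G) = ((f.comp V.subtype).ker).map V.subtype := by
      ext y; simp [AddMonoidHom.mem_ker, and_comm]
    rw [this]
    exact (Nat.card_congr (AddSubgroup.equivMapOfInjective _ V.subtype
      Subtype.coe_injective).toEquiv)

section abstractpart

variable {K E : Type*} [Field K] [AddCommGroup E] [Module K E]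

/-- evaluation at `x`. -/
def evH (x : E) : Module.End K E →+ E where
  toFun v := v x
  map_zero' := rfl
  map_add' _ _ := rfl

/-- rank one operators with image in `K x`. -/
def smR (x : E) : Module.Dual K E →+ Module.End K E where
  toFun φ := φ.smulRight x
  map_zero' := by ext; simp
  map_add' _ _ := by ext; simp [add_smul]

/-- compression of an operator. -/
def compr {F G : Type*} [AddCommGroup F] [Module K F] [AddCommGroup G] [Module K G]
    (π : E →ₗ[K] G) (s : F →ₗ[K] E) : Module.End K E →+ (F →ₗ[K] G) where
  toFun v := π ∘ₗ v ∘ₗ s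
  map_zero' := by ext; simp
  map_add' _ _ := by ext; simp

@[simp] theorem evH_apply (x : E) (v : Module.End K E) : evH x v = v x := rfl
@[simp] theorem smR_apply (x : E) (φ : Module.Dual K E) (y : E) : smR x φ y = φ y • x := rfl
@[simp] theorem compr_apply {F G : Type*} [AddCommGroup F] [Module K F] [AddCommGroup G]
    [Module K G] (π : E →ₗ[K] G) (s : F →ₗ[K] E) (v : Module.End K E) (y : F) :
    compr π s v y = π (v (s y)) := rfl

theorem nil_eig {v : Module.End K E} (hv : IsNilpotent v) {x : E} (hx : x ≠ 0) {c : K}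
    (h : v x = c • x) : c = 0 := by
  obtain ⟨k, hk⟩ := hv
  have : ∀ k : ℕ, (v ^ k) x = c ^ k • x := by
    intro k
    induction k with
    | zero => simp
    | succ k ih => rw [pow_succ, Module.End.mul_apply, h, map_smul, ih, smul_smul, pow_succ']
  have h2 := this k
  rw [hk] at h2
  have h3 : c ^ k = 0 := by
    rcases smul_eq_zero.mp h2.symm with h | h
    · exact h
    · exact absurd h hx
  exact eq_zero_of_pow_eq_zero h3

theorem nil_of_surj {F : Type*} [AddCommGroup F] [Module K F] {v : Module.End K E}
    {g : Module.End K F} (π : E →ₗ[K] F) (hπ : Function.Surjective π)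
    (h : ∀ y, g (π y) = π (v y)) (hv : IsNilpotent v) : IsNilpotent g := by
  obtain ⟨k, hk⟩ := hv
  refine ⟨k, ?_⟩
  have : ∀ k : ℕ, ∀ y, (g ^ k) (π y) = π ((v ^ k) y) := by
    intro k
    induction k with
    | zero => simp
    | succ k ih => intro y; rw [pow_succ, Module.End.mul_apply, h, ih, pow_succ, Module.End.mul_apply]
  ext z
  obtain ⟨y, rfl⟩ := hπ z
  rw [this, hk]; simp

theorem nil_of_inj {F : Type*} [AddCommGroup F] [Module K F] {v : Module.End K E}
    {g : Module.End K F} (ι : F →ₗ[K] E) (hι : Function.Injective ι)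
    (h : ∀ y, ι (g y) = v (ι y)) (hv : IsNilpotent v) : IsNilpotent g := by
  obtain ⟨k, hk⟩ := hv
  refine ⟨k, ?_⟩
  have : ∀ k : ℕ, ∀ y, ι ((g ^ k) y) = (v ^ k) (ι y) := by
    intro k
    induction k with
    | zero => simp
    | succ k ih => intro y; rw [pow_succ, Module.End.mul_apply, ih, h, pow_succ, Module.End.mul_apply]
  ext z
  apply hι
  rw [this, hk]; simp

/-- the rank one functionals attached to `x`. -/
def Rx (V : AddSubgroup (Module.End K E)) (x : E) : AddSubgroup (Module.Dual K E) :=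
  V.comap (smR x)

theorem mem_Rx {V : AddSubgroup (Module.End K E)} {x : E} {φ : Module.Dual K E} :
    φ ∈ Rx V x ↔ smR x φ ∈ V := Iff.rfl

theorem Rx_pow {V : AddSubgroup (Module.End K E)} (hV : ∀ v ∈ V, IsNilpotent v) {x : E}
    {φ : Module.Dual K E} (h : φ ∈ Rx V x) {b : Module.End K E} (hb : b ∈ V) (k : ℕ) :
    φ ((b ^ k) x) = 0 :=
  rank_one_nil b (b + smR x φ) φ x (fun _ => rfl) (hV b hb) (hV _ (V.add_mem hb h)) k

/-- the span of `x` and `V x`. -/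
def Wx (V : AddSubgroup (Module.End K E)) (x : E) : Submodule K E :=
  Submodule.span K (insert x ((V.map (evH x) : AddSubgroup E) : Set E))

theorem x_mem_Wx (V : AddSubgroup (Module.End K E)) (x : E) : x ∈ Wx V x :=
  Submodule.subset_span (Set.mem_insert _ _)

theorem vx_mem_Wx {V : AddSubgroup (Module.End K E)} (x : E) {v : Module.End K E} (hv : v ∈ V) :
    v x ∈ Wx V x :=
  Submodule.subset_span (Set.mem_insert_of_mem _ ⟨v, hv, rfl⟩)

theorem mem_ann_Wx {V : AddSubgroup (Module.End K E)} {x : E} {φ : Module.Dual K E} :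
    φ ∈ (Wx V x).dualAnnihilator ↔ φ x = 0 ∧ ∀ v ∈ V, φ (v x) = 0 := by
  rw [Submodule.mem_dualAnnihilator]
  constructor
  · intro h
    exact ⟨h _ (x_mem_Wx V x), fun v hv => h _ (vx_mem_Wx x hv)⟩
  · rintro ⟨h1, h2⟩ w hw
    have : Wx V x ≤ LinearMap.ker φ := by
      rw [Wx, Submodule.span_le]
      rintro y (rfl | ⟨v, hv, rfl⟩)
      · exact h1
      · exact h2 v hv
    exact this hw

theorem Rx_le {V : AddSubgroup (Module.End K E)} (hV : ∀ v ∈ V, IsNilpotent v) {x : E} :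
    Rx V x ≤ ((Wx V x).dualAnnihilator).toAddSubgroup := by
  intro φ hφ
  rw [Submodule.mem_toAddSubgroup, mem_ann_Wx]
  refine ⟨by simpa using Rx_pow hV hφ V.zero_mem 0, fun v hv => by simpa using Rx_pow hV hφ hv 1⟩

/-- the sum map. -/
def sumMap (V : AddSubgroup (Module.End K E)) (x : E) :
    (V.map (evH x) : AddSubgroup E) × K → Wx V x :=
  fun p => ⟨p.1 + p.2 • x, (Wx V x).add_mem
    (Submodule.subset_span (Set.mem_insert_of_mem _ p.1.2)) ((Wx V x).smul_mem _ (x_mem_Wx V x))⟩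

theorem sumMap_inj {V : AddSubgroup (Module.End K E)} (hV : ∀ v ∈ V, IsNilpotent v) {x : E}
    (hx : x ≠ 0) : Function.Injective (sumMap V x) := by
  rintro ⟨⟨_, v, hv, rfl⟩, c⟩ ⟨⟨_, w, hw, rfl⟩, d⟩ h
  simp only [sumMap, Subtype.mk.injEq, evH_apply] at h
  have h1 : (v - w) x = (d - c) • x := by
    rw [LinearMap.sub_apply, sub_smul, sub_eq_sub_iff_add_eq_add, h, add_comm]
  have h2 := nil_eig (hV _ (V.sub_mem hv hw)) hx h1
  have h3 : d = c := sub_eq_zero.mp h2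
  subst h3
  simpa using h

/-- a section of the quotient map. -/
noncomputable def sect (W : Submodule K E) : (E ⧸ W) →ₗ[K] E :=
  (W.mkQ.exists_rightInverse_of_surjective W.range_mkQ).choose

theorem mkQ_sect (W : Submodule K E) (y : E ⧸ W) : W.mkQ (sect W y) = y :=
  LinearMap.congr_fun (W.mkQ.exists_rightInverse_of_surjective W.range_mkQ).choose_spec y

theorem sect_mkQ (W : Submodule K E) (y : E) : sect W (W.mkQ y) - y ∈ W := by
  have : W.mkQ (sect W (W.mkQ y) - y) = 0 := by rw [map_sub, mkQ_sect, sub_self]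
  rwa [← LinearMap.mem_ker, W.ker_mkQ] at this

/-- operators of `V` killing `x`. -/
def Ux (V : AddSubgroup (Module.End K E)) (x : E) : AddSubgroup (Module.End K E) :=
  V ⊓ (evH x).ker

theorem mem_Ux {V : AddSubgroup (Module.End K E)} {x : E} {v : Module.End K E} :
    v ∈ Ux V x ↔ v ∈ V ∧ v x = 0 := Iff.rfl

/-- operators induced on the quotient by `x`. -/
noncomputable def Qx (V : AddSubgroup (Module.End K E)) (x : E) :
    AddSubgroup (Module.End K (E ⧸ (K ∙ x))) :=
  (Ux V x).map (compr (K ∙ x).mkQ (sect (K ∙ x)))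

theorem compr_mkQ {x : E} {v : Module.End K E} (hv : v x = 0) (y : E) :
    compr (K ∙ x).mkQ (sect (K ∙ x)) v ((K ∙ x).mkQ y) = (K ∙ x).mkQ (v y) := by
  rw [compr_apply]
  obtain ⟨c, hc⟩ := Submodule.mem_span_singleton.mp (sect_mkQ (K ∙ x) y)
  have : v (sect (K ∙ x) ((K ∙ x).mkQ y)) = v y := by
    rw [eq_comm, sub_eq_iff_eq_add] at hc
    rw [hc, map_add, map_smul, hv, smul_zero, zero_add]
  rw [this]

theorem mem_Qx {V : AddSubgroup (Module.End K E)} {x : E} {g : Module.End K (E ⧸ (K ∙ x))} :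
    g ∈ Qx V x ↔ ∃ v ∈ V, v x = 0 ∧ ∀ y, g ((K ∙ x).mkQ y) = (K ∙ x).mkQ (v y) := by
  constructor
  · rintro ⟨v, ⟨hv, hvx⟩, rfl⟩
    exact ⟨v, hv, hvx, compr_mkQ hvx⟩
  · rintro ⟨v, hv, hvx, h⟩
    refine ⟨v, ⟨hv, hvx⟩, ?_⟩
    apply LinearMap.ext
    intro z
    obtain ⟨y, rfl⟩ := (K ∙ x).mkQ_surjective z
    rw [h]; exact compr_mkQ hvx y

theorem Qx_nil {V : AddSubgroup (Module.End K E)} (hV : ∀ v ∈ V, IsNilpotent v) {x : E} :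
    ∀ g ∈ Qx V x, IsNilpotent g := by
  intro g hg
  obtain ⟨v, hv, -, h⟩ := mem_Qx.mp hg
  exact nil_of_surj _ (K ∙ x).mkQ_surjective h (hV v hv)

theorem exists_smR {x : E} (hx : x ≠ 0) {v : Module.End K E} (h : ∀ y, v y ∈ K ∙ x) :
    ∃ φ, smR x φ = v := by
  obtain ⟨ψ, hψ⟩ : ∃ ψ : Module.Dual K E, ψ x ≠ 0 := by
    by_contra hcon
    push Not at hcon
    exact hx ((Module.forall_dual_apply_eq_zero_iff K x).mp hcon)
  refine ⟨(ψ x)⁻¹ • (ψ ∘ₗ v), ?_⟩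
  ext y
  obtain ⟨c, hc⟩ := Submodule.mem_span_singleton.mp (h y)
  simp only [smR_apply, LinearMap.smul_apply, LinearMap.comp_apply, ← hc, map_smul, smul_eq_mul]
  congr 1
  field_simp

theorem smR_inj {x : E} (hx : x ≠ 0) : Function.Injective (smR (K := K) x) := by
  intro φ ψ h
  ext y
  have := LinearMap.congr_fun h y
  simp only [smR_apply] at this
  exact smul_left_injective K hx this

theorem card_decomp {V : AddSubgroup (Module.End K E)} (hV : ∀ v ∈ V, IsNilpotent v) {x : E}
    (hx : x ≠ 0) : Nat.card V =
      Nat.card (V.map (evH x) : AddSubgroup E) * (Nat.card (Qx V x) * Nat.card (Rx V x)) := by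
  rw [card_map_mul_ker (evH x) V]
  congr 1
  change Nat.card (Ux V x) = _
  rw [card_map_mul_ker (compr (K ∙ x).mkQ (sect (K ∙ x))) (Ux V x)]
  congr 1
  have : (Ux V x ⊓ (compr (K ∙ x).mkQ (sect (K ∙ x))).ker : AddSubgroup _) =
      (Rx V x).map (smR x) := by
    ext v
    constructor
    · rintro ⟨⟨hv, hvx⟩, hk⟩
      have h1 : ∀ y, v y ∈ K ∙ x := by
        intro y
        rw [← (K ∙ x).ker_mkQ, LinearMap.mem_ker, ← compr_mkQ hvx, AddMonoidHom.mem_ker.mp hk]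
        rfl
      obtain ⟨φ, rfl⟩ := exists_smR hx h1
      exact ⟨φ, hv, rfl⟩
    · rintro ⟨φ, hφ, rfl⟩
      have h0 : smR x φ x = 0 := by
        have := nil_eig (hV _ hφ) hx (c := φ x) rfl
        rw [smR_apply, this, zero_smul]
      refine ⟨⟨hφ, h0⟩, ?_⟩
      change compr (K ∙ x).mkQ (sect (K ∙ x)) (smR x φ) = 0
      apply LinearMap.ext
      intro z
      obtain ⟨y, rfl⟩ := (K ∙ x).mkQ_surjective z
      rw [compr_mkQ h0, LinearMap.zero_apply, ← LinearMap.mem_ker, (K ∙ x).ker_mkQ]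
      exact Submodule.smul_mem _ _ (Submodule.mem_span_singleton_self x)
  rw [this]
  exact (Nat.card_congr (AddSubgroup.equivMapOfInjective _ _ (smR_inj hx)).toEquiv).symm

end abstractpart

section countpart

universe u v

variable {K : Type v} [Field K] [Finite K]

theorem card_sub {E : Type u} [AddCommGroup E] [Module K E] [FiniteDimensional K E]
    {V : AddSubgroup (Module.End K E)} (hV : ∀ v ∈ V, IsNilpotent v) {x : E} (hx : x ≠ 0) :
    Nat.card (V.map (evH x) : AddSubgroup E) * Nat.card K ≤
      Nat.card K ^ Module.finrank K (Wx V x) ∧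
    Nat.card (Rx V x) ≤ Nat.card K ^ (Module.finrank K E - Module.finrank K (Wx V x)) := by
  have : Finite E := Module.finite_of_finite K
  have : Finite (Module.Dual K E) := Module.finite_of_finite K
  constructor
  · rw [← Module.natCard_eq_pow_finrank (K := K), ← Nat.card_prod]
    exact Nat.card_le_card_of_injective _ (sumMap_inj hV hx)
  · have h1 := Subspace.finrank_add_finrank_dualAnnihilator_eq (Wx V x)
    have h2 : Module.finrank K E - Module.finrank K (Wx V x) =
      Module.finrank K (Wx V x).dualAnnihilator := by omega
    have h3 := Module.natCard_eq_pow_finrank (K := K) (V := (Wx V x).dualAnnihilator)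
    rw [h2]
    refine le_trans ?_ h3.le
    exact Nat.card_le_card_of_injective _ (AddSubgroup.inclusion_injective (Rx_le hV (x := x)))

theorem finrank_quot_x {E : Type u} [AddCommGroup E] [Module K E] [FiniteDimensional K E]
    {x : E} (hx : x ≠ 0) {n : ℕ} (h : Module.finrank K E = n + 1) :
    Module.finrank K (E ⧸ (K ∙ x)) = n := by
  have := Submodule.finrank_quotient_add_finrank (K ∙ x)
  rw [finrank_span_singleton hx] at this
  omega

theorem choose_two_succ (n : ℕ) : (n + 1).choose 2 = n + n.choose 2 := by
  rw [Nat.choose_succ_succ' n 1, Nat.choose_one_right]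

theorem card_AR {E : Type u} [AddCommGroup E] [Module K E] [FiniteDimensional K E]
    {V : AddSubgroup (Module.End K E)} (hV : ∀ v ∈ V, IsNilpotent v) {x : E} (hx : x ≠ 0)
    {n : ℕ} (h : Module.finrank K E = n + 1) :
    Nat.card (V.map (evH x) : AddSubgroup E) * Nat.card (Rx V x) ≤ Nat.card K ^ n := by
  obtain ⟨h1, h2⟩ := card_sub hV hx
  have hq : 0 < Nat.card K := Nat.card_pos
  have h3 : Module.finrank K (Wx V x) ≤ n + 1 := h ▸ Submodule.finrank_le _
  rw [h] at h2
  have h4 := Nat.mul_le_mul h1 h2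
  rw [← pow_add, show Module.finrank K (Wx V x) + (n + 1 - Module.finrank K (Wx V x)) = n + 1 by
    omega, pow_succ] at h4
  refine Nat.le_of_mul_le_mul_right ?_ hq
  calc _ = _ := by ring
    _ ≤ _ := h4

theorem card_bound (n : ℕ) : ∀ (E : Type u) [AddCommGroup E] [Module K E]
    [FiniteDimensional K E] (V : AddSubgroup (Module.End K E)), (∀ v ∈ V, IsNilpotent v) →
    Module.finrank K E = n → Nat.card V ≤ Nat.card K ^ n.choose 2 := by
  induction n with
  | zero =>
    intro E _ _ _ V hV hn
    have : Subsingleton E := Module.finrank_zero_iff.mp hn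
    have : Subsingleton V := ⟨fun a b => by
      apply Subtype.ext; ext y; exact Subsingleton.elim _ _⟩
    simp
  | succ n ih =>
    intro E _ _ _ V hV hn
    have : Nontrivial E := Module.nontrivial_of_finrank_pos (R := K) (by omega)
    obtain ⟨x, hx⟩ := exists_ne (0 : E)
    rw [card_decomp hV hx]
    have h1 := ih _ (Qx V x) (Qx_nil hV) (finrank_quot_x hx hn)
    have h2 := card_AR hV hx hn
    rw [choose_two_succ, pow_add]
    calc _ = (Nat.card (V.map (evH x) : AddSubgroup E) * Nat.card (Rx V x)) * Nat.card (Qx V x) := by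
          ring
      _ ≤ _ := Nat.mul_le_mul h2 h1

theorem max_facts {n : ℕ} {E : Type u} [AddCommGroup E] [Module K E]
    [FiniteDimensional K E] {V : AddSubgroup (Module.End K E)} (hV : ∀ v ∈ V, IsNilpotent v)
    (hn : Module.finrank K E = n + 1) (hc : Nat.card V = Nat.card K ^ (n + 1).choose 2)
    {x : E} (hx : x ≠ 0) :
    Nat.card (Qx V x) = Nat.card K ^ n.choose 2 ∧
    (∀ φ : Module.Dual K E, φ x = 0 → (∀ v ∈ V, φ (v x) = 0) → φ ∈ Rx V x) ∧
    (∀ w ∈ Wx V x, ∃ v ∈ V, ∃ c : K, w = v x + c • x) := by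
  have : Finite E := Module.finite_of_finite K
  have : Finite (Module.Dual K E) := Module.finite_of_finite K
  have hq : 0 < Nat.card K := Nat.card_pos
  have hB := card_bound n _ (Qx V x) (Qx_nil hV) (finrank_quot_x hx hn)
  have hAR := card_AR hV hx hn
  obtain ⟨h1, h2⟩ := card_sub hV hx
  rw [card_decomp hV hx, choose_two_succ, pow_add] at hc
  have h3 : Module.finrank K (Wx V x) ≤ n + 1 := hn ▸ Submodule.finrank_le _
  have hann := Subspace.finrank_add_finrank_dualAnnihilator_eq (Wx V x)
  rw [hn] at h2
  set A := Nat.card (V.map (evH x) : AddSubgroup E) with hA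
  set R := Nat.card (Rx V x) with hR
  set B := Nat.card (Qx V x) with hB'
  set q := Nat.card K with hq'
  set d := Module.finrank K (Wx V x) with hd
  have hqn : 0 < q ^ n := pow_pos hq _
  have hqc : 0 < q ^ n.choose 2 := pow_pos hq _
  have hc' : (A * R) * B = q ^ n * q ^ n.choose 2 := by rw [← hc]; ring
  have hBe : B = q ^ n.choose 2 := by
    refine le_antisymm hB ?_
    refine Nat.le_of_mul_le_mul_left ?_ hqn
    rw [← hc']; exact Nat.mul_le_mul_right _ hAR
  have hARe : A * R = q ^ n := by
    rw [hBe] at hc'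
    exact Nat.eq_of_mul_eq_mul_right hqc hc'
  have hp : q ^ d * q ^ (n + 1 - d) = (A * q) * R := by
    rw [← pow_add, show d + (n + 1 - d) = n + 1 by omega, pow_succ, ← hARe]; ring
  have hRe : R = q ^ (n + 1 - d) := by
    refine le_antisymm h2 ?_
    refine Nat.le_of_mul_le_mul_left ?_ (pow_pos hq d)
    rw [hp]; exact Nat.mul_le_mul_right _ h1
  have hAe : A * q = q ^ d := by
    rw [← hRe] at hp
    refine (Nat.eq_of_mul_eq_mul_right ?_ hp).symm
    rw [hRe]; exact pow_pos hq _
  refine ⟨hBe, ?_, ?_⟩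
  · have : Rx V x = ((Wx V x).dualAnnihilator).toAddSubgroup := by
      apply AddSubgroup.eq_of_le_of_card_ge (Rx_le hV)
      have h3 := Module.natCard_eq_pow_finrank (K := K) (V := (Wx V x).dualAnnihilator)
      rw [← hR, hRe, show n + 1 - d = Module.finrank K (Wx V x).dualAnnihilator by omega]
      exact h3.le
    intro φ h1 h2
    rw [this, Submodule.mem_toAddSubgroup, mem_ann_Wx]
    exact ⟨h1, h2⟩
  · have hbij : Function.Bijective (sumMap V x) := by
      rw [Nat.bijective_iff_injective_and_card]
      refine ⟨sumMap_inj hV hx, ?_⟩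
      rw [Nat.card_prod, ← hA, hAe, ← Module.natCard_eq_pow_finrank (K := K)]
    intro w hw
    obtain ⟨⟨⟨_, v, hv, rfl⟩, c⟩, h⟩ := hbij.2 ⟨w, hw⟩
    exact ⟨v, hv, c, (congrArg Subtype.val h).symm⟩

theorem choose_two_add (d e : ℕ) :
    (d + e).choose 2 = d.choose 2 + (e.choose 2 + e * d) := by
  induction e with
  | zero => simp
  | succ e ih => rw [← add_assoc, choose_two_succ, ih, choose_two_succ]; ring

/-- `V` restricted to an invariant subspace is again maximal. -/
theorem restrict_max {n : ℕ} {E : Type u} [AddCommGroup E] [Module K E]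
    [FiniteDimensional K E] {V : AddSubgroup (Module.End K E)} (hV : ∀ v ∈ V, IsNilpotent v)
    (hn : Module.finrank K E = n) (hc : Nat.card V = Nat.card K ^ n.choose 2)
    (W : Submodule K E) (hW : ∀ v ∈ V, ∀ w ∈ W, v w ∈ W) :
    ∃ V' : AddSubgroup (Module.End K W), (∀ v ∈ V', IsNilpotent v) ∧
      Nat.card V' = Nat.card K ^ (Module.finrank K W).choose 2 ∧
      ∀ v ∈ V, ∃ v' ∈ V', ∀ w : W, (v' w : E) = v w := by
  have : Finite E := Module.finite_of_finite K
  have : Finite W := Module.finite_of_finite K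
  have : Finite (E ⧸ W) := Module.finite_of_finite K
  have : Finite (Module.End K W) := Module.finite_of_finite K
  have : Finite (Module.End K (E ⧸ W)) := Module.finite_of_finite K
  have : Finite ((E ⧸ W) →ₗ[K] W) := Module.finite_of_finite K
  have hq : 0 < Nat.card K := Nat.card_pos
  obtain ⟨p, hp⟩ := W.subtype.exists_leftInverse_of_injective W.ker_subtype
  have hp' : ∀ w : W, p w = w := fun w => LinearMap.congr_fun hp w
  have nil1 : ∀ v ∈ V.map (compr p W.subtype), IsNilpotent (v : Module.End K W) := by
    rintro _ ⟨v, hv, rfl⟩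
    refine nil_of_inj W.subtype W.injective_subtype (v := v) ?_ (hV v hv)
    intro y
    rw [compr_apply]
    exact congrArg Subtype.val (hp' ⟨_, hW v hv y y.2⟩)
  have nil2 : ∀ v ∈ V.map (compr W.mkQ (sect W)), IsNilpotent (v : Module.End K (E ⧸ W)) := by
    rintro _ ⟨v, hv, rfl⟩
    refine nil_of_surj W.mkQ W.mkQ_surjective (v := v) ?_ (hV v hv)
    intro y
    rw [compr_apply, ← sub_eq_zero, ← map_sub, ← map_sub, ← LinearMap.mem_ker, W.ker_mkQ]
    exact hW v hv _ (sect_mkQ W y)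
  have b1 := card_bound _ W _ nil1 rfl
  have b2 := card_bound _ (E ⧸ W) _ nil2 rfl
  have hdim := Submodule.finrank_quotient_add_finrank W
  have b3 : Nat.card ((E ⧸ W) →ₗ[K] W) =
      Nat.card K ^ (Module.finrank K (E ⧸ W) * Module.finrank K W) := by
    rw [Module.natCard_eq_pow_finrank (K := K), Module.finrank_linearMap]
  refine ⟨V.map (compr p W.subtype), nil1, ?_, ?_⟩
  · let Θ : V → (V.map (compr p W.subtype)) × ((V.map (compr W.mkQ (sect W))) ×
        ((E ⧸ W) →ₗ[K] W)) := fun v =>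
      (⟨_, v, v.2, rfl⟩, ⟨_, v, v.2, rfl⟩, compr p (sect W) v)
    have hΘ : Function.Injective Θ := by
      intro a b h
      simp only [Θ, Prod.mk.injEq] at h
      obtain ⟨h1, h2, h3⟩ := h
      have e1 : ∀ w : W, p ((a.1 - b.1) w) = 0 := by
        intro w
        have := LinearMap.congr_fun (congrArg Subtype.val h1) w
        simp only [compr_apply, Submodule.subtype_apply] at this
        rw [LinearMap.sub_apply, map_sub, this, sub_self]
      have e2 : ∀ z, (a.1 - b.1) (sect W z) ∈ W := by
        intro z
        have := LinearMap.congr_fun (congrArg Subtype.val h2) z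
        simp only [compr_apply] at this
        exact (Submodule.Quotient.eq W).mp this
      have e3 : ∀ z, p ((a.1 - b.1) (sect W z)) = 0 := by
        intro z
        have := LinearMap.congr_fun h3 z
        simp only [compr_apply] at this
        rw [LinearMap.sub_apply, map_sub, this, sub_self]
      have e4 : ∀ y ∈ W, p y = 0 → y = 0 := by
        intro y hy h
        rw [hp' ⟨y, hy⟩] at h
        exact congrArg Subtype.val h
      have e5 : a.1 - b.1 = 0 := by
        ext y
        have hy := sect_mkQ W y
        have f1 := e4 _ (e2 (W.mkQ y)) (e3 _)
        have f2 := e4 _ (hW _ (V.sub_mem a.2 b.2) _ hy) (e1 ⟨_, hy⟩)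
        rw [map_sub, f1, zero_sub, neg_eq_zero] at f2
        rw [f2]; rfl
      exact Subtype.ext (sub_eq_zero.mp e5)
    have hle := Nat.card_le_card_of_injective Θ hΘ
    rw [Nat.card_prod, Nat.card_prod, b3, hc] at hle
    refine le_antisymm b1 ?_
    have hn' : n = Module.finrank K W + Module.finrank K (E ⧸ W) := by omega
    rw [hn', choose_two_add, pow_add] at hle
    refine Nat.le_of_mul_le_mul_right (hle.trans ?_)
      (pow_pos hq ((Module.finrank K (E ⧸ W)).choose 2 +
        Module.finrank K (E ⧸ W) * Module.finrank K W))
    rw [pow_add]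
    exact Nat.mul_le_mul_left _ (Nat.mul_le_mul_right _ b2)
  · intro v hv
    refine ⟨_, ⟨v, hv, rfl⟩, fun w => ?_⟩
    exact congrArg Subtype.val (hp' ⟨_, hW v hv w w.2⟩)

end countpart

section tracepart

variable {K : Type*} [Field K] {ι : Type*} [Fintype ι] [DecidableEq ι]

open Polynomial in
theorem trace_nil {a b : Matrix ι ι K} (ha : IsNilpotent a) (hb : IsNilpotent b)
    (hab : IsNilpotent (a + b)) :
    (a * b).trace = 0 ∧ ((a + b) * (a * b)).trace = 0 := by
  have hu : ∀ c : Matrix ι ι K, IsNilpotent c →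
      IsUnit (1 - (X : K[X]) • c.map (C : K →+* K[X])) := by
    intro c hc
    apply IsNilpotent.isUnit_one_sub
    obtain ⟨k, hk⟩ := hc
    refine ⟨k, ?_⟩
    rw [_root_.smul_pow, ← Matrix.map_pow, hk]
    simp
  obtain ⟨Q, hQ⟩ := hu _ hab
  set A : Matrix ι ι K[X] := a.map (C : K →+* K[X]) with hA
  set B : Matrix ι ι K[X] := b.map (C : K →+* K[X]) with hB
  have hAB : (a + b).map (C : K →+* K[X]) = A + B := by
    rw [hA, hB, Matrix.map_add]; intro x y; exact map_add _ _ _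
  rw [hAB] at hQ
  set H : Matrix ι ι K[X] := ((Q⁻¹ : (Matrix ι ι K[X])ˣ) : Matrix ι ι K[X]) with hH
  have hHQ : H * (1 - (X : K[X]) • (A + B)) = 1 := by rw [← hQ, hH]; exact Units.inv_mul Q
  have hH1 : H = 1 + (X : K[X]) • (H * (A + B)) := by
    rw [mul_sub, mul_one, mul_smul_comm, sub_eq_iff_eq_add] at hHQ
    exact hHQ
  have hprod : H * ((1 - (X : K[X]) • A) * (1 - (X : K[X]) • B)) =
      1 + ((X : K[X]) ^ 2) • (H * (A * B)) := by
    have : (1 - (X : K[X]) • A) * (1 - (X : K[X]) • B) =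
        (1 - (X : K[X]) • (A + B)) + ((X : K[X]) ^ 2) • (A * B) := by
      simp only [sub_mul, mul_sub, one_mul, mul_one, smul_mul_assoc, mul_smul_comm, smul_smul,
        smul_add, smul_sub, pow_two]
      abel
    rw [this, mul_add, hHQ, mul_smul_comm]
  have hdet : IsUnit (1 + ((X : K[X]) ^ 2) • (H * (A * B))).det := by
    rw [← hprod]
    apply (Matrix.isUnit_iff_isUnit_det _).mp
    exact (Units.isUnit _).mul ((hu a ha).mul (hu b hb))
  rw [Matrix.det_one_add_smul] at hdet
  set T := (H * (A * B)).trace with hT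
  obtain ⟨c, -, hc⟩ := Polynomial.isUnit_iff.mp hdet
  rw [← pow_mul] at hc
  have c0 : T.coeff 0 = 0 := by
    have := congrArg (fun f => Polynomial.coeff f 2) hc
    simp [coeff_mul_X_pow', coeff_one] at this
    simpa using this.symm
  have c1 : T.coeff 1 = 0 := by
    have := congrArg (fun f => Polynomial.coeff f 3) hc
    simp [coeff_mul_X_pow', coeff_one] at this
    simpa using this.symm
  have hmap : ∀ c : Matrix ι ι K, (c.map (C : K →+* K[X])).trace = C c.trace := by
    intro c
    simp [Matrix.trace, map_sum]
  have hTe : T = C (a * b).trace + X * C ((a + b) * (a * b)).trace +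
      X ^ 2 * (H * (A + B) * (A + B) * (A * B)).trace := by
    rw [← hmap, ← hmap, Matrix.map_mul, Matrix.map_mul, Matrix.map_mul, hAB, hT]
    have : H * (A * B) = A * B + (X : K[X]) • ((A + B) * (A * B)) +
        ((X : K[X]) ^ 2) • (H * (A + B) * (A + B) * (A * B)) := by
      conv_lhs => rw [hH1, hH1]
      simp only [add_mul, one_mul, smul_mul_assoc, smul_add, smul_smul, mul_assoc, pow_two]
      try abel
    rw [this]
    simp [Matrix.trace_add, Matrix.trace_smul]
    rfl
  constructor
  · rw [hTe] at c0
    simpa using c0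
  · rw [hTe] at c1
    simpa [coeff_X_pow_mul', coeff_C] using c1

variable {S : AddSubgroup (Matrix ι ι K)}

theorem tr2 (hS : ∀ M ∈ S, IsNilpotent M) {a b : Matrix ι ι K} (ha : a ∈ S) (hb : b ∈ S) :
    (a * b).trace = 0 :=
  (trace_nil (hS a ha) (hS b hb) (hS _ (S.add_mem ha hb))).1

theorem tr3 (hS : ∀ M ∈ S, IsNilpotent M) {a b : Matrix ι ι K} (ha : a ∈ S) (hb : b ∈ S) :
    (a * a * b).trace = -(b * b * a).trace := by
  have := (trace_nil (hS a ha) (hS b hb) (hS _ (S.add_mem ha hb))).2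
  rw [add_mul, Matrix.trace_add, ← mul_assoc, Matrix.trace_mul_comm b, mul_assoc a b b,
    Matrix.trace_mul_comm a] at this
  exact eq_neg_of_add_eq_zero_left this

theorem tr3' (hS : ∀ M ∈ S, IsNilpotent M) {a a' b : Matrix ι ι K} (ha : a ∈ S) (ha' : a' ∈ S)
    (hb : b ∈ S) : ((a * a' + a' * a) * b).trace = 0 := by
  have h1 := tr3 hS (S.add_mem ha ha') hb
  have h2 := tr3 hS ha hb
  have h3 := tr3 hS ha' hb
  have h4 : ((a * a' + a' * a) * b) = (a + a') * (a + a') * b - a * a * b - a' * a' * b := by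
    noncomm_ring
  rw [h4, Matrix.trace_sub, Matrix.trace_sub, h1, h2, h3, mul_add, Matrix.trace_add]
  ring

end tracepart

section matrixpart

variable {K : Type*} [Field K] {m : ℕ}

/-- block matrix with zero first column. -/
def blk (r : Fin m → K) (T : Matrix (Fin m) (Fin m) K) : Matrix (Fin (m + 1)) (Fin (m + 1)) K :=
  Matrix.of (Fin.cons (Fin.cons 0 r) (fun i => Fin.cons 0 (T i)))

@[simp] theorem blk_zz (r : Fin m → K) (T : Matrix (Fin m) (Fin m) K) : blk r T 0 0 = 0 := rfl
@[simp] theorem blk_zs (r : Fin m → K) (T : Matrix (Fin m) (Fin m) K) (j : Fin m) :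
    blk r T 0 j.succ = r j := rfl
@[simp] theorem blk_sz (r : Fin m → K) (T : Matrix (Fin m) (Fin m) K) (i : Fin m) :
    blk r T i.succ 0 = 0 := rfl
@[simp] theorem blk_ss (r : Fin m → K) (T : Matrix (Fin m) (Fin m) K) (i j : Fin m) :
    blk r T i.succ j.succ = T i j := rfl

theorem blk_ext {M : Matrix (Fin (m + 1)) (Fin (m + 1)) K} (h : ∀ i, M i 0 = 0) :
    M = blk (fun j => M 0 j.succ) (Matrix.of fun i j => M i.succ j.succ) := by
  ext i j
  refine Fin.cases ?_ (fun j => ?_) j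
  · rw [h]; refine Fin.cases ?_ (fun i => ?_) i <;> simp
  · refine Fin.cases ?_ (fun i => ?_) i <;> simp

theorem blk_add (r r' : Fin m → K) (T T' : Matrix (Fin m) (Fin m) K) :
    blk r T + blk r' T' = blk (r + r') (T + T') := by
  ext i j
  refine Fin.cases ?_ (fun j => ?_) j <;> refine Fin.cases ?_ (fun i => ?_) i <;> simp

theorem blk_sub (r r' : Fin m → K) (T T' : Matrix (Fin m) (Fin m) K) :
    blk r T - blk r' T' = blk (r - r') (T - T') := by
  ext i j
  refine Fin.cases ?_ (fun j => ?_) j <;> refine Fin.cases ?_ (fun i => ?_) i <;> simp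

theorem blk_smul (t : K) (r : Fin m → K) (T : Matrix (Fin m) (Fin m) K) :
    t • blk r T = blk (t • r) (t • T) := by
  ext i j
  refine Fin.cases ?_ (fun j => ?_) j <;> refine Fin.cases ?_ (fun i => ?_) i <;> simp

theorem blk_mul (r r' : Fin m → K) (T T' : Matrix (Fin m) (Fin m) K) :
    blk r T * blk r' T' = blk (Matrix.vecMul r T') (T * T') := by
  ext i j
  refine Fin.cases ?_ (fun j => ?_) j <;> refine Fin.cases ?_ (fun i => ?_) i <;>
    simp [Matrix.mul_apply, Fin.sum_univ_succ, Matrix.vecMul, dotProduct]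

theorem blk_trace_zero (r : Fin m → K) (b : Matrix (Fin (m + 1)) (Fin (m + 1)) K) :
    (blk r 0 * b).trace = ∑ j, r j * b j.succ 0 := by
  simp [Matrix.trace, Matrix.mul_apply, Fin.sum_univ_succ]

theorem blk_rank_one (κ : K) (y ψ : Fin m → K) :
    blk (κ • ψ) (Matrix.vecMulVec y ψ) =
      Matrix.vecMulVec (Fin.cons κ y : Fin (m + 1) → K) (Fin.cons 0 ψ : Fin (m + 1) → K) := by
  ext i j
  refine Fin.cases ?_ (fun j => ?_) j <;> refine Fin.cases ?_ (fun i => ?_) i <;>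
    simp [Matrix.vecMulVec_apply]

/-- data obtained from a maximal space without rank one elements. -/
structure Good (S : AddSubgroup (Matrix (Fin (m + 1)) (Fin (m + 1)) K)) : Prop where
  nil : ∀ M ∈ S, IsNilpotent M
  hA : ∀ T : Matrix (Fin m) (Fin m) K, (∀ i j, j ≤ i → T i j = 0) → ∃ r, blk r T ∈ S
  hB : ∀ c : Fin m → K, ∃ b ∈ S, ∀ i, b (Fin.succ i) 0 = c i
  hD : ∀ M ∈ S, (∀ i : Fin m, M i.succ 0 = 0) →
    M 0 0 = 0 ∧ ∀ i j : Fin m, j ≤ i → M i.succ j.succ = 0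

/-- existence of a rank one element. -/
def HasR1 {ι : Type*} (S : AddSubgroup (Matrix ι ι K)) : Prop :=
  ∃ x φ : ι → K, x ≠ 0 ∧ φ ≠ 0 ∧ Matrix.vecMulVec x φ ∈ S

variable {S : AddSubgroup (Matrix (Fin (m + 1)) (Fin (m + 1)) K)}

theorem hasR1_of_blk {κ : K} {y ψ : Fin m → K} (hy : y ≠ 0) (hψ : ψ ≠ 0)
    (h : blk (κ • ψ) (Matrix.vecMulVec y ψ) ∈ S) : HasR1 S := by
  rw [blk_rank_one] at h
  refine ⟨_, _, ?_, ?_, h⟩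
  · intro h0; apply hy; ext i; simpa using congrFun h0 i.succ
  · intro h0; apply hψ; ext i; simpa using congrFun h0 i.succ

theorem Good.zero (hS : Good S) {r : Fin m → K} (h : ∀ b ∈ S, (blk r 0 * b).trace = 0) :
    r = 0 := by
  ext i
  obtain ⟨b, hb, hc⟩ := hS.hB (Pi.single i 1)
  have := h b hb
  rw [blk_trace_zero] at this
  simpa [hc, Pi.single_apply] using this

theorem Good.uniq (hS : Good S) {r r' : Fin m → K} {T : Matrix (Fin m) (Fin m) K}
    (h : blk r T ∈ S) (h' : blk r' T ∈ S) : r = r' := by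
  rw [← sub_eq_zero]
  apply hS.zero
  intro b hb
  have := tr2 hS.nil (S.sub_mem h h') hb
  rwa [blk_sub, sub_self] at this

theorem Good.smul (hS : Good S) {r : Fin m → K} {T : Matrix (Fin m) (Fin m) K}
    (hT : ∀ i j, j ≤ i → T i j = 0) (h : blk r T ∈ S) (t : K) : t • blk r T ∈ S := by
  obtain ⟨r', h'⟩ := hS.hA (t • T) (by intro i j hij; simp [hT i j hij])
  have : r' - t • r = 0 := by
    apply hS.zero
    intro b hb
    have h1 := tr2 hS.nil h' hb
    have h2 := tr2 hS.nil h hb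
    have h3 : blk (r' - t • r) 0 = blk r' (t • T) - t • blk r T := by
      rw [blk_smul, blk_sub, sub_self]
    rw [h3, sub_mul, smul_mul_assoc, Matrix.trace_sub, Matrix.trace_smul, h1, h2]
    simp
  rw [sub_eq_zero] at this
  rw [blk_smul, ← this]
  exact h'

theorem Good.jordan (hS : Good S) {r r' r'' : Fin m → K} {T T' : Matrix (Fin m) (Fin m) K}
    (h : blk r T ∈ S) (h' : blk r' T' ∈ S) (h'' : blk r'' (T * T' + T' * T) ∈ S) :
    r'' = Matrix.vecMul r T' + Matrix.vecMul r' T := by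
  rw [← sub_eq_zero]
  apply hS.zero
  intro b hb
  have h1 := tr3' hS.nil h h' hb
  have h2 := tr2 hS.nil h'' hb
  have h3 : blk (r'' - (Matrix.vecMul r T' + Matrix.vecMul r' T)) 0 =
      blk r'' (T * T' + T' * T) - (blk r T * blk r' T' + blk r' T' * blk r T) := by
    rw [blk_mul, blk_mul, blk_add, blk_sub, sub_self]
  rw [h3, sub_mul, Matrix.trace_sub, h1, h2, sub_zero]

/-- elementary matrix. -/
abbrev sg (i j : Fin m) : Matrix (Fin m) (Fin m) K := Matrix.single i j 1

theorem sg_strict {i j : Fin m} (h : i < j) (k l : Fin m) (hl : l ≤ k) :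
    (sg i j : Matrix (Fin m) (Fin m) K) k l = 0 := by
  change Matrix.single i j (1 : K) k l = 0
  rw [Matrix.single_apply]
  split_ifs with h1
  · omega
  · rfl

theorem vecMul_sg (r : Fin m → K) (i j t : Fin m) :
    Matrix.vecMul r (sg i j : Matrix (Fin m) (Fin m) K) t = if t = j then r i else 0 := by
  simp only [Matrix.vecMul, dotProduct, Matrix.single_apply]
  by_cases h : t = j
  · subst h; simp
  · simp [h, Ne.symm h]

theorem Good.J0 (hS : Good S) {i j k l : Fin m} (hjk : j ≠ k) (hli : l ≠ i) {r r' : Fin m → K}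
    (h : blk r (sg i j) ∈ S) (h' : blk r' (sg k l) ∈ S) (t : Fin m) :
    (if t = l then r k else 0) + (if t = j then r' i else 0) = 0 := by
  have h1 : (sg i j : Matrix (Fin m) (Fin m) K) * sg k l + sg k l * sg i j = 0 := by
    rw [Matrix.single_mul_single_of_ne _ _ _ _ hjk, Matrix.single_mul_single_of_ne _ _ _ _ hli,
      add_zero]
  have h2 := hS.jordan (r'' := 0) h h' (by
    rw [h1]
    have : (blk 0 0 : Matrix (Fin (m + 1)) (Fin (m + 1)) K) = 0 := by
      have := blk_smul (0 : K) (0 : Fin m → K) 0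
      simpa using this.symm
    rw [this]; exact S.zero_mem)
  have h3 := congrFun h2 t
  rw [Pi.add_apply, vecMul_sg, vecMul_sg] at h3
  exact h3.symm

theorem Good.J1 (hS : Good S) {i j k : Fin m} (hki : k ≠ i) {r r' r'' : Fin m → K}
    (h : blk r (sg i j) ∈ S) (h' : blk r' (sg j k) ∈ S) (h'' : blk r'' (sg i k) ∈ S) (t : Fin m) :
    r'' t = (if t = k then r j else 0) + (if t = j then r' i else 0) := by
  have h1 : (sg i j : Matrix (Fin m) (Fin m) K) * sg j k + sg j k * sg i j = sg i k := by
    rw [Matrix.single_mul_single_of_ne _ _ _ _ hki]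
    simp
  have h2 := hS.jordan (r'' := r'') h h' (by rw [h1]; exact h'')
  have h3 := congrFun h2 t
  rw [Pi.add_apply, vecMul_sg, vecMul_sg] at h3
  exact h3

theorem Good.r1_of_supp {i l : Fin m} {r : Fin m → K}
    (h : blk r (sg i l) ∈ S) (hr : ∀ k, k ≠ l → r k = 0) : HasR1 S := by
  have h1 : r = r l • (Pi.single l 1 : Fin m → K) := by
    ext k
    by_cases hk : k = l
    · subst hk; simp
    · simp [hr k hk, Pi.single_apply, hk]
  have h2 : (sg i l : Matrix (Fin m) (Fin m) K) =
      Matrix.vecMulVec (Pi.single i 1) (Pi.single l 1) := by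
    ext a b
    simp only [Matrix.single_apply, Matrix.vecMulVec_apply, Pi.single_apply]
    by_cases ha : a = i <;> by_cases hb : b = l <;> simp [ha, hb, Ne.symm]
  rw [h1, h2] at h
  exact hasR1_of_blk (by simp) (by simp) h

theorem Good.r1_ge_four (hm : 4 ≤ m) (hS : Good S) : HasR1 S := by
  let o : Fin m := ⟨0, by omega⟩
  let i1 : Fin m := ⟨1, by omega⟩
  let l' : Fin m := ⟨m - 2, by omega⟩
  let l : Fin m := ⟨m - 1, by omega⟩
  have ne : ∀ a b : Fin m, a.1 ≠ b.1 → a ≠ b := fun a b h h' => h (congrArg _ h')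
  have a1 : o ≠ l := ne _ _ (by simp only [o, l]; omega)
  have a2 : o ≠ l' := ne _ _ (by simp only [o, l']; omega)
  have a3 : l ≠ l' := ne _ _ (by simp only [l, l']; omega)
  have a4 : i1 ≠ l := ne _ _ (by simp only [i1, l]; omega)
  have a5 : i1 ≠ l' := ne _ _ (by simp only [i1, l']; omega)
  have b1 : o < l := by simp only [o, l, Fin.lt_def]; omega
  have b2 : l' < l := by simp only [l', l, Fin.lt_def]; omega
  have b3 : o < i1 := by simp only [o, i1, Fin.lt_def]; omega
  obtain ⟨ρ, hρ⟩ := hS.hA (sg o l) (sg_strict b1)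
  obtain ⟨r', hr'⟩ := hS.hA (sg l' l) (sg_strict b2)
  obtain ⟨r1, hr1⟩ := hS.hA (sg o i1) (sg_strict b3)
  refine Good.r1_of_supp hρ ?_
  intro k hk
  by_cases hk' : k = l'
  · subst hk'
    have e1 := hS.J0 (Ne.symm a3.symm) (a1.symm) hρ hr' l
    have e2 := hS.J0 a1.symm a5 hr' hr1 i1
    simp only [if_true, a4, if_false, add_zero] at e1 e2
    rw [e2, add_zero] at e1
    exact e1
  · have hkl : k < l' := by
      have := k.2
      have h1 : k.1 ≠ m - 1 := fun h => hk (Fin.ext h)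
      have h2 : k.1 ≠ m - 2 := fun h => hk' (Fin.ext h)
      simp only [l', Fin.lt_def]; omega
    obtain ⟨r2, hr2⟩ := hS.hA (sg k l') (sg_strict hkl)
    have e1 := hS.J0 (Ne.symm hk) a2.symm hρ hr2 l'
    simpa [a3.symm] using e1

theorem Good.r1_three [Finite K]
    {S : AddSubgroup (Matrix (Fin (3 + 1)) (Fin (3 + 1)) K)} (hS : Good S) : HasR1 S := by
  obtain ⟨ρ, hρ⟩ := hS.hA (sg 0 2) (sg_strict (by decide))
  obtain ⟨r, hr⟩ := hS.hA (sg 0 1) (sg_strict (by decide))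
  obtain ⟨s, hs⟩ := hS.hA (sg 1 2) (sg_strict (by decide))
  have e1 := hS.J0 (by decide) (by decide) hρ hr 1
  have e2 := hS.J0 (by decide) (by decide) hρ hr 2
  have e3 := hS.J0 (by decide) (by decide) hρ hs 2
  have e4 := hS.J1 (by decide) hr hs hρ 1
  have e5 := hS.J1 (by decide) hr hs hρ 2
  simp at e1 e2 e3 e4 e5
  by_cases hμ : ρ 1 = 0
  · refine Good.r1_of_supp hρ ?_
    intro k hk
    fin_cases k
    · exact e1
    · exact hμ
    · exact absurd rfl hk
  · have h2 : (2 : K) = 0 := by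
      rw [← e4] at e3
      have : 2 * ρ 1 = 0 := by linear_combination e3
      rcases mul_eq_zero.mp this with h | h
      · exact h
      · exact absurd h hμ
    obtain ⟨β, hβ⟩ : ∃ β : K, β * β * ρ 1 = r 2 := by
      have : ringChar K = 2 := by
        have h3 : ringChar K ∣ 2 := by
          apply ringChar.dvd
          exact_mod_cast h2
        rcases (Nat.dvd_prime Nat.prime_two).mp h3 with h | h
        · exact absurd h CharP.ringChar_ne_one
        · exact h
      obtain ⟨β, hβ⟩ := FiniteField.isSquare_of_char_two this (r 2 / ρ 1)
      refine ⟨β, ?_⟩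
      rw [← hβ]; field_simp
    have h3 := S.add_mem (hS.smul (sg_strict (by decide)) hρ β) hr
    rw [blk_smul, blk_add] at h3
    have h4 : β • ρ + r = (β * ρ 1 + r 1) • (![0, 1, β] : Fin 3 → K) := by
      ext k
      fin_cases k
      · simp [e1, e2]
      · simp
      · simp [e5, ← hβ]; ring
    have h5 : β • sg 0 2 + sg 0 1 =
        Matrix.vecMulVec (![1, 0, 0] : Fin 3 → K) (![0, 1, β] : Fin 3 → K) := by
      ext i j
      fin_cases i <;> fin_cases j <;> simp [Matrix.single_apply, Matrix.vecMulVec_apply]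
    rw [h4, h5] at h3
    refine hasR1_of_blk ?_ ?_ h3
    · intro h; simpa using congrFun h 0
    · intro h; simpa using congrFun h 1

end matrixpart

section mtwo

variable {K : Type*} [Field K] {S : AddSubgroup (Matrix (Fin (2 + 1)) (Fin (2 + 1)) K)}

theorem strict_two {T : Matrix (Fin 2) (Fin 2) K} (hT : ∀ i j, j ≤ i → T i j = 0) :
    T = T 0 1 • sg 0 1 := by
  ext i j
  have h1 := hT 0 0 le_rfl
  have h2 := hT 1 0 (by decide)
  have h3 := hT 1 1 le_rfl
  fin_cases i <;> fin_cases j <;> simp [Matrix.single_apply, h1, h2, h3]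

theorem blk_sq_two (ρ : Fin 2 → K) (τ : K) :
    blk ρ (τ • sg 0 1) * blk ρ (τ • sg 0 1) = blk (fun j => if j = 1 then τ * ρ 0 else 0) 0 := by
  rw [blk_mul]
  congr 1
  · ext j
    rw [Matrix.vecMul_smul, Pi.smul_apply, vecMul_sg]
    split_ifs <;> simp
  · ext i j
    fin_cases i <;> fin_cases j <;> simp [Matrix.mul_apply, Matrix.single_apply]

theorem Good.blk_form (hS : Good S) {u : Matrix (Fin (2 + 1)) (Fin (2 + 1)) K} (hu : u ∈ S)
    (h0 : ∀ i : Fin 2, u i.succ 0 = 0) :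
    ∃ ρ : Fin 2 → K, ∃ τ : K, u = blk ρ (τ • sg 0 1) := by
  obtain ⟨h1, h2⟩ := hS.hD u hu h0
  have h3 : ∀ i, u i 0 = 0 := fun i => Fin.cases h1 h0 i
  refine ⟨fun j => u 0 j.succ, u 1 2, (blk_ext h3).trans ?_⟩
  congr 1
  exact strict_two (T := Matrix.of fun i j : Fin 2 => u i.succ j.succ) h2

theorem Good.m2_of_iso (hS : Good S) {u : Matrix (Fin (2 + 1)) (Fin (2 + 1)) K} (hu : u ∈ S)
    (hu0 : u ≠ 0) (h0 : ∀ i, u i 0 = 0) (hiso : ∀ b ∈ S, (u * u * b).trace = 0) : HasR1 S := by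
  obtain ⟨ρ, τ, rfl⟩ := hS.blk_form hu (fun i => h0 _)
  have hz : (blk 0 0 : Matrix (Fin (2 + 1)) (Fin (2 + 1)) K) = 0 := by
    have := blk_smul (0 : K) (0 : Fin 2 → K) 0
    simpa using this.symm
  have hτ : τ ≠ 0 := by
    rintro rfl
    rw [zero_smul] at hu hu0
    apply hu0
    rw [hS.uniq hu (hz ▸ S.zero_mem), hz]
  rw [blk_sq_two] at hiso
  have h1 := congrFun (hS.zero hiso) 1
  simp [hτ] at h1
  refine hasR1_of_blk (κ := ρ 1) (y := Pi.single 0 τ) (ψ := Pi.single 1 1) ?_ ?_ ?_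
  · simpa using hτ
  · simp
  · convert hu using 2
    · ext j; fin_cases j <;> simp [h1]
    · ext i j; fin_cases i <;> fin_cases j <;> simp [Matrix.vecMulVec_apply, Matrix.single_apply]

theorem Good.m2_exists (hS : Good S) : ∃ r ∈ S, r ≠ 0 ∧ ∀ b ∈ S, (r * r * b).trace = 0 := by
  obtain ⟨ρ, hu⟩ := hS.hA (sg 0 1) (sg_strict (by decide))
  have hsm := hS.smul (sg_strict (by decide)) hu
  have hsq : blk ρ (sg 0 1) * blk ρ (sg 0 1) = blk (fun j => if j = 1 then ρ 0 else 0) 0 := by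
    simpa using blk_sq_two ρ 1
  have hu0 : blk ρ (sg 0 1) ≠ 0 := by
    intro h
    have := congrFun (congrFun h (Fin.succ 0)) (Fin.succ 1)
    rw [blk_ss] at this
    simp at this
  by_cases ht : ∃ t : K, t * t ≠ t
  · obtain ⟨t, ht⟩ := ht
    refine ⟨_, hu, hu0, fun b hb => ?_⟩
    have h1 := tr3 hS.nil hu hb
    have h2 := tr3 hS.nil (hsm t) hb
    simp only [smul_mul_assoc, mul_smul_comm, Matrix.trace_smul, smul_eq_mul] at h2
    have h3 : (t * t - t) * (blk ρ (sg 0 1) * blk ρ (sg 0 1) * b).trace = 0 := by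
      linear_combination h2 - t * h1
    rcases mul_eq_zero.mp h3 with h | h
    · exact absurd (sub_eq_zero.mp h) ht
    · exact h
  push Not at ht
  have h01 : ∀ t : K, t = 0 ∨ t = 1 := by
    intro t
    have : t * (t - 1) = 0 := by linear_combination ht t
    rcases mul_eq_zero.mp this with h | h
    · exact Or.inl h
    · exact Or.inr (sub_eq_zero.mp h)
  by_cases hρ : ρ 0 = 0
  · refine ⟨_, hu, hu0, fun b hb => ?_⟩
    rw [hsq, blk_trace_zero]; simp [hρ]
  have hρ1 : ρ 0 = 1 := (h01 _).resolve_left hρ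
  have hsmul : ∀ (t : K), ∀ M ∈ S, t • M ∈ S := by
    intro t M hM
    rcases h01 t with rfl | rfl
    · rw [zero_smul]; exact S.zero_mem
    · rwa [one_smul]
  have h2 : (2 : K) = 0 := by
    have := ht (-1)
    linear_combination this
  obtain ⟨b1, hb1, hc1⟩ := hS.hB ![1, 0]
  obtain ⟨b2, hb2, hc2⟩ := hS.hB ![0, 1]
  set u := blk ρ (sg 0 1) with hudef
  have gu : ∀ b, (u * u * b).trace = b 2 0 := by
    intro b
    rw [hsq, blk_trace_zero]
    simp [hρ1]
  have e1 : (u * u * b1).trace = 0 := by rw [gu]; exact hc1 1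
  have e2 : (u * u * b2).trace = 1 := by rw [gu]; exact hc2 1
  have e3 : (u * u * u).trace = 0 := by rw [gu]; rfl
  have e4 : (b1 * b1 * u).trace = 0 := by rw [tr3 hS.nil hb1 hu, e1, neg_zero]
  have e5 : (b1 * b1 * b1).trace = 0 := by
    have : IsNilpotent (b1 * b1 * b1) := by
      have h := (hS.nil b1 hb1).pow_succ 2
      rwa [pow_succ, pow_two] at h
    exact (Matrix.isNilpotent_trace_of_isNilpotent this).eq_zero
  set γ := (b1 * b1 * b2).trace with hγ
  have hr : b1 + γ • u ∈ S := S.add_mem hb1 (hsm γ)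
  refine ⟨_, hr, ?_, ?_⟩
  · intro h
    have h3 := congrFun (congrFun h (Fin.succ 0)) 0
    rw [Matrix.add_apply, hc1, Matrix.smul_apply, hudef, blk_sz] at h3
    simp at h3
  have gr : ∀ b ∈ S, ((b1 + γ • u) * (b1 + γ • u) * b).trace =
      (b1 * b1 * b).trace + γ * (u * u * b).trace := by
    intro b hb
    have h3 := tr3' hS.nil hb1 (hsm γ) hb
    have h4 : (b1 + γ • u) * (b1 + γ • u) * b = b1 * b1 * b + (γ * γ) • (u * u * b) +
        (b1 * (γ • u) + (γ • u) * b1) * b := by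
      simp only [add_mul, mul_add, smul_mul_assoc, mul_smul_comm, smul_smul, smul_add]
      abel
    rw [h4, Matrix.trace_add, Matrix.trace_add, h3, Matrix.trace_smul, ht, add_zero, smul_eq_mul]
  intro v hv
  rw [gr v hv]
  have hw : v - (v 1 0 • b1 + v 2 0 • b2) ∈ S :=
    S.sub_mem hv (S.add_mem (hsmul _ _ hb1) (hsmul _ _ hb2))
  obtain ⟨ρ', τ, hw'⟩ := hS.blk_form hw (by
    intro i
    have a1 := hc1 i
    have a2 := hc2 i
    simp only [Matrix.sub_apply, Matrix.add_apply, Matrix.smul_apply, a1, a2]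
    fin_cases i <;> simp)
  have hw2 : v - (v 1 0 • b1 + v 2 0 • b2) = τ • u := by
    rw [hw', hudef, blk_smul]
    rw [hw'] at hw
    have := hsm τ
    rw [hudef, blk_smul] at this
    rw [hS.uniq hw this]
  have hv2 : v = v 1 0 • b1 + v 2 0 • b2 + τ • u := by rw [← hw2]; abel
  generalize v 1 0 = c at hv2
  generalize v 2 0 = d at hv2
  rw [hv2]
  simp only [mul_add, mul_smul_comm, Matrix.trace_add, Matrix.trace_smul, e1, e2, e3, e4, e5,
    smul_eq_mul, ← hγ]
  linear_combination (d * γ) * h2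

end mtwo

section bridgepart

universe u v

variable {K : Type v} [Field K]

/-- `V` is the full strictly upper triangular algebra in the basis `b`. -/
def Tri {n : ℕ} {E : Type u} [AddCommGroup E] [Module K E] (b : Module.Basis (Fin n) K E)
    (V : AddSubgroup (Module.End K E)) : Prop :=
  ∀ f : Module.End K E, f ∈ V ↔ ∀ i j, j ≤ i → b.repr (f (b j)) i = 0

theorem lift_basis {m : ℕ} {E : Type u} [AddCommGroup E] [Module K E] [FiniteDimensional K E]
    {x : E} (hx : x ≠ 0) (hn : Module.finrank K E = m + 1)
    (e : Module.Basis (Fin m) K (E ⧸ (K ∙ x))) :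
    ∃ f : Module.Basis (Fin (m + 1)) K E, f 0 = x ∧ (∀ i, (K ∙ x).mkQ (f i.succ) = e i) ∧
      ∀ y i, f.repr y i.succ = e.repr ((K ∙ x).mkQ y) i := by
  have hxq : (K ∙ x).mkQ x = 0 := by
    rw [← LinearMap.mem_ker, Submodule.ker_mkQ]; exact Submodule.mem_span_singleton_self x
  let g : Fin (m + 1) → E := Fin.cons x (fun i => sect (K ∙ x) (e i))
  have hli : LinearIndependent K g := by
    rw [Fintype.linearIndependent_iff]
    intro c hc
    rw [Fin.sum_univ_succ] at hc
    simp only [g, Fin.cons_zero, Fin.cons_succ] at hc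
    have h1 := congrArg (K ∙ x).mkQ hc
    rw [map_add, map_smul, hxq, smul_zero, zero_add, map_sum, map_zero] at h1
    simp only [map_smul, mkQ_sect] at h1
    have h2 := Fintype.linearIndependent_iff.mp e.linearIndependent _ h1
    have h3 : c 0 = 0 := by
      simp only [h2, zero_smul, Finset.sum_const_zero, add_zero] at hc
      exact (smul_eq_zero.mp hc).resolve_right hx
    intro i
    exact Fin.cases h3 h2 i
  let f := basisOfLinearIndependentOfCardEqFinrank hli (by simp [hn])
  have hf : ∀ i, f i = g i := fun i => by
    simp [f, coe_basisOfLinearIndependentOfCardEqFinrank]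
  have h0 : f 0 = x := by rw [hf]; rfl
  have h1 : ∀ i, (K ∙ x).mkQ (f i.succ) = e i := by
    intro i; rw [hf]; exact mkQ_sect _ _
  refine ⟨f, h0, h1, ?_⟩
  intro y i
  conv_rhs => rw [← f.sum_repr y, Fin.sum_univ_succ, map_add, map_smul, h0, hxq, smul_zero,
    zero_add, map_sum]
  simp only [map_smul, h1]
  rw [e.repr_sum_self]

/-- matrices of the elements of `V`. -/
noncomputable def mS {n : ℕ} {E : Type u} [AddCommGroup E] [Module K E]
    (f : Module.Basis (Fin n) K E) (V : AddSubgroup (Module.End K E)) :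
    AddSubgroup (Matrix (Fin n) (Fin n) K) :=
  V.map ((LinearMap.toMatrix f f : Module.End K E →ₗ[K] Matrix (Fin n) (Fin n) K).toAddMonoidHom)

theorem mem_mS {n : ℕ} {E : Type u} [AddCommGroup E] [Module K E]
    {f : Module.Basis (Fin n) K E} {V : AddSubgroup (Module.End K E)}
    {M : Matrix (Fin n) (Fin n) K} : M ∈ mS f V ↔ ∃ v ∈ V, LinearMap.toMatrix f f v = M := Iff.rfl

theorem nil_mat {n : ℕ} {E : Type u} [AddCommGroup E] [Module K E]
    (f : Module.Basis (Fin n) K E) {v : Module.End K E} (hv : IsNilpotent v) :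
    IsNilpotent (LinearMap.toMatrix f f v) := by
  have := hv.map (LinearMap.toMatrixAlgEquiv f)
  exact this

theorem hasR1_mS {n : ℕ} {E : Type u} [AddCommGroup E] [Module K E]
    {f : Module.Basis (Fin n) K E} {V : AddSubgroup (Module.End K E)} (h : HasR1 (mS f V)) :
    ∃ z : E, z ≠ 0 ∧ ∃ φ ∈ Rx V z, φ ≠ 0 := by
  obtain ⟨x, φ, hx, hφ, v, hv, h⟩ := h
  refine ⟨f.equivFun.symm x, fun h0 => hx (f.equivFun.symm.map_eq_zero_iff.mp h0), f.constr K φ, ?_, ?_⟩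
  · rw [mem_Rx]
    suffices hs : smR (f.equivFun.symm x) (f.constr K φ) = v by rw [hs]; exact hv
    apply (LinearMap.toMatrix f f).injective
    refine Eq.trans ?_ h.symm
    ext i j
    rw [LinearMap.toMatrix_apply, smR_apply, f.constr_basis, map_smul, Finsupp.smul_apply,
      Matrix.vecMulVec_apply, smul_eq_mul, mul_comm]
    congr 1
    rw [← f.equivFun_apply, LinearEquiv.apply_symm_apply]
  · intro h0
    apply hφ
    ext j
    rw [← f.constr_basis K φ j, h0]; rfl

variable [Finite K]

theorem good_of {m : ℕ} {E : Type u} [AddCommGroup E] [Module K E] [FiniteDimensional K E]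
    {V : AddSubgroup (Module.End K E)} (hV : ∀ v ∈ V, IsNilpotent v)
    (hn : Module.finrank K E = m + 1) (hc : Nat.card V = Nat.card K ^ (m + 1).choose 2)
    {x : E} (hx : x ≠ 0) (e : Module.Basis (Fin m) K (E ⧸ (K ∙ x))) (he : Tri e (Qx V x))
    (hno : ∀ φ ∈ Rx V x, φ = 0) :
    ∃ f : Module.Basis (Fin (m + 1)) K E, f 0 = x ∧ Good (mS f V) := by
  obtain ⟨f, h0, h1, h2⟩ := lift_basis hx hn e
  obtain ⟨-, m2, m3⟩ := max_facts hV hn hc hx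
  have htop : Wx V x = ⊤ := by
    by_contra hcon
    obtain ⟨φ, hφ, hle⟩ := Submodule.exists_le_ker_of_lt_top _ (lt_top_iff_ne_top.mpr hcon)
    apply hφ
    apply hno
    exact m2 φ (hle (x_mem_Wx V x)) (fun v hv => hle (vx_mem_Wx x hv))
  refine ⟨f, h0, ?_, ?_, ?_, ?_⟩
  · rintro _ ⟨v, hv, rfl⟩
    exact nil_mat f (hV v hv)
  · intro T hT
    have hg : Matrix.toLin e e T ∈ Qx V x := by
      rw [he]
      intro i j hij
      have : LinearMap.toMatrix e e (Matrix.toLin e e T) i j = T i j := by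
        rw [LinearMap.toMatrix_toLin]
      rw [LinearMap.toMatrix_apply] at this
      rw [this, hT i j hij]
    obtain ⟨v, hv, hvx, hg⟩ := mem_Qx.mp hg
    refine ⟨fun j => LinearMap.toMatrix f f v 0 j.succ, ?_⟩
    refine mem_mS.mpr ⟨v, hv, ?_⟩
    have hcol : ∀ i, LinearMap.toMatrix f f v i 0 = 0 := by
      intro i; rw [LinearMap.toMatrix_apply, h0, hvx]; simp
    refine (blk_ext hcol).trans ?_
    congr 1
    ext i j
    rw [Matrix.of_apply, LinearMap.toMatrix_apply, h2, ← hg, h1, ← LinearMap.toMatrix_apply,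
      LinearMap.toMatrix_toLin]
  · intro c
    obtain ⟨v, hv, k, hw⟩ := m3 (∑ i, c i • f i.succ) (htop ▸ Submodule.mem_top)
    refine ⟨_, mem_mS.mpr ⟨v, hv, rfl⟩, ?_⟩
    intro i
    rw [LinearMap.toMatrix_apply, h0, h2, ← sub_eq_iff_eq_add.mpr hw, map_sub, map_smul, map_sum]
    have hxq : (K ∙ x).mkQ x = 0 := by
      rw [← LinearMap.mem_ker, Submodule.ker_mkQ]; exact Submodule.mem_span_singleton_self x
    simp only [map_smul, h1, hxq, smul_zero, sub_zero]
    rw [e.repr_sum_self]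
  · rintro _ ⟨v, hv, rfl⟩ hM
    change ∀ i : Fin m, LinearMap.toMatrix f f v i.succ 0 = 0 at hM
    have hvx : v x = 0 := by
      have h3 : (K ∙ x).mkQ (v x) = 0 := by
        apply e.repr.injective
        ext i
        have h5 := hM i
        rw [LinearMap.toMatrix_apply, h0, h2] at h5
        rw [h5]; simp
      rw [← LinearMap.mem_ker, Submodule.ker_mkQ] at h3
      obtain ⟨c, hc⟩ := Submodule.mem_span_singleton.mp h3
      have := nil_eig (hV v hv) hx hc.symm
      rw [← hc, this, zero_smul]
    refine ⟨?_, ?_⟩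
    · change LinearMap.toMatrix f f v 0 0 = 0
      rw [LinearMap.toMatrix_apply, h0, hvx]; simp
    · intro i j hij
      change LinearMap.toMatrix f f v i.succ j.succ = 0
      have h4 : compr (K ∙ x).mkQ (sect (K ∙ x)) v ∈ Qx V x :=
        mem_Qx.mpr ⟨v, hv, hvx, compr_mkQ hvx⟩
      rw [LinearMap.toMatrix_apply, h2, ← compr_mkQ hvx, h1]
      exact (he _).mp h4 i j hij

theorem nil_ker {E : Type u} [AddCommGroup E] [Module K E] [Nontrivial E] {v : Module.End K E}
    (hv : IsNilpotent v) : ∃ x, x ≠ 0 ∧ v x = 0 := by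
  by_contra hcon
  push Not at hcon
  obtain ⟨k, hk⟩ := hv
  obtain ⟨y, hy⟩ := exists_ne (0 : E)
  have : ∀ k : ℕ, (v ^ k) y ≠ 0 := by
    intro k
    induction k with
    | zero => simpa using hy
    | succ k ih =>
      rw [pow_succ', Module.End.mul_apply]
      exact fun h => (hcon _ ih) h
  exact this k (by rw [hk]; rfl)

theorem exists_R1 {n : ℕ} {E : Type u} [AddCommGroup E] [Module K E] [FiniteDimensional K E]
    {V : AddSubgroup (Module.End K E)} (hV : ∀ v ∈ V, IsNilpotent v)
    (hn : Module.finrank K E = n + 1 + 1) (hc : Nat.card V = Nat.card K ^ (n + 1 + 1).choose 2)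
    (IH : ∀ x : E, x ≠ 0 → ∃ e : Module.Basis (Fin (n + 1)) K (E ⧸ (K ∙ x)), Tri e (Qx V x)) :
    ∃ z : E, z ≠ 0 ∧ ∃ φ ∈ Rx V z, φ ≠ 0 := by
  by_contra hcon
  have hno : ∀ x : E, x ≠ 0 → ∀ φ ∈ Rx V x, φ = 0 := by
    intro x hx φ hφ
    by_contra h
    exact hcon ⟨x, hx, φ, hφ, h⟩
  have good : ∀ x : E, x ≠ 0 →
      ∃ f : Module.Basis (Fin (n + 1 + 1)) K E, f 0 = x ∧ Good (mS f V) := by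
    intro x hx
    obtain ⟨e, he⟩ := IH x hx
    exact good_of hV hn hc hx e he (hno x hx)
  have : Nontrivial E := Module.nontrivial_of_finrank_pos (R := K) (by omega)
  obtain ⟨x, hx⟩ := exists_ne (0 : E)
  obtain ⟨f, hf, hg⟩ := good x hx
  match n with
  | 0 =>
    have hfin : Finite (Module.End K E) := Module.finite_of_finite K
    have h1 : 1 < Nat.card V := by
      rw [hc]
      exact Nat.one_lt_pow (by decide) Finite.one_lt_card
    have : Nontrivial V := Finite.one_lt_card_iff_nontrivial.mp h1
    obtain ⟨⟨v, hv⟩, hv0⟩ := exists_ne (0 : V)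
    obtain ⟨y, hy, hvy⟩ := nil_ker (hV v hv)
    obtain ⟨e, he⟩ := IH y hy
    have h4 : compr (K ∙ y).mkQ (sect (K ∙ y)) v ∈ Qx V y :=
      mem_Qx.mpr ⟨v, hv, hvy, compr_mkQ hvy⟩
    have h5 : compr (K ∙ y).mkQ (sect (K ∙ y)) v = 0 := by
      apply e.ext
      intro j
      apply e.repr.injective
      ext i
      rw [(he _).mp h4 i j (by omega)]
      simp
    obtain ⟨φ, hφ⟩ := exists_smR hy (v := v) (by
      intro w
      have := compr_mkQ hvy w
      rw [h5] at this
      rw [← (K ∙ y).ker_mkQ, LinearMap.mem_ker, ← this]; rfl)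
    have h6 : φ = 0 := hno y hy φ (mem_Rx.mpr (hφ ▸ hv))
    apply hv0
    rw [h6, map_zero] at hφ
    exact Subtype.ext hφ.symm
  | 1 =>
    obtain ⟨_, ⟨v, hv, rfl⟩, hr0, hiso⟩ := hg.m2_exists
    obtain ⟨y, hy, hvy⟩ := nil_ker (hV v hv)
    obtain ⟨f', hf', hg'⟩ := good y hy
    refine hcon (hasR1_mS (hg'.m2_of_iso (mem_mS.mpr ⟨v, hv, rfl⟩) ?_ ?_ ?_))
    · intro h
      apply hr0
      have : v = 0 := by simpa using h
      subst this
      exact map_zero _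
    · intro i
      rw [LinearMap.toMatrix_apply, hf', hvy]; simp
    · rintro _ ⟨b, hb, rfl⟩
      have h1 := hiso (LinearMap.toMatrix f f b) (mem_mS.mpr ⟨b, hb, rfl⟩)
      change (LinearMap.toMatrix f f v * LinearMap.toMatrix f f v *
        LinearMap.toMatrix f f b).trace = 0 at h1
      change (LinearMap.toMatrix f' f' v * LinearMap.toMatrix f' f' v *
        LinearMap.toMatrix f' f' b).trace = 0
      rw [← LinearMap.toMatrix_mul, ← LinearMap.toMatrix_mul,
        ← LinearMap.trace_eq_matrix_trace] at h1 ⊢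
      exact h1
  | 2 => exact hcon (hasR1_mS hg.r1_three)
  | k + 3 => exact hcon (hasR1_mS (hg.r1_ge_four (by omega)))

end bridgepart

section finalpart

universe u v

variable {K : Type v} [Field K]

/-- trichotomy for the full strictly triangular algebra. -/
theorem Tri.cmp {n : ℕ} {E : Type u} [AddCommGroup E] [Module K E] {e : Module.Basis (Fin n) K E}
    {V : AddSubgroup (Module.End K E)} (he : Tri e V) (y z : E) :
    ∃ c : K, ∃ u ∈ V, z = c • y + u y ∨ y = c • z + u z := by
  classical
  -- key: if `w` is below the top index of `y`
  have key : ∀ (y w : E) (t : Fin n), e.repr y t ≠ 0 → (∀ i, t ≤ i → e.repr w i = 0) →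
      ∃ u ∈ V, u y = w := by
    intro y w t ht hw
    refine ⟨smR ((e.repr y t)⁻¹ • w) (e.coord t), ?_, ?_⟩
    · rw [he]
      intro i j hij
      rw [smR_apply, e.coord_apply, e.repr_self, map_smul, map_smul, Finsupp.smul_apply,
        Finsupp.smul_apply, Finsupp.single_apply]
      split_ifs with h
      · rw [hw i (h ▸ hij)]; simp
      · simp
    · rw [smR_apply, e.coord_apply, smul_smul, mul_inv_cancel₀ ht, one_smul]
  have zmem : (0 : Module.End K E) ∈ V := V.zero_mem
  by_cases hz : ∀ t, e.repr y t = 0 ∧ e.repr z t = 0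
  · have hy : y = 0 := by
      apply e.repr.injective; ext t; rw [(hz t).1]; simp
    have hz : z = 0 := by
      apply e.repr.injective; ext t; rw [(hz t).2]; simp
    exact ⟨0, 0, zmem, Or.inl (by simp [hy, hz])⟩
  · push Not at hz
    let s : Finset (Fin n) := Finset.univ.filter (fun t => e.repr y t ≠ 0 ∨ e.repr z t ≠ 0)
    have hs : s.Nonempty := by
      obtain ⟨t, ht⟩ := hz
      refine ⟨t, by simp only [s, Finset.mem_filter, Finset.mem_univ, true_and]; tauto⟩
    set t := s.max' hs with htdef
    have ht : t ∈ s := s.max'_mem hs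
    have hmax : ∀ i, t < i → e.repr y i = 0 ∧ e.repr z i = 0 := by
      intro i hi
      by_contra hcon
      have : i ∈ s := by
        simp only [s, Finset.mem_filter, Finset.mem_univ, true_and]; tauto
      exact absurd (s.le_max' i this) (not_le.mpr hi)
    have main : ∀ y z : E, e.repr y t ≠ 0 → (∀ i, t < i → e.repr y i = 0 ∧ e.repr z i = 0) →
        ∃ c : K, ∃ u ∈ V, z = c • y + u y := by
      intro y z hy hm
      obtain ⟨u, hu, h⟩ := key y (z - (e.repr z t / e.repr y t) • y) t hy (by
        intro i hi
        rw [map_sub, map_smul, Finsupp.sub_apply, Finsupp.smul_apply, smul_eq_mul]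
        rcases hi.eq_or_lt with rfl | hi
        · field_simp; simp
        · rw [(hm i hi).1, (hm i hi).2]; simp)
      exact ⟨_, u, hu, by rw [h]; abel⟩
    simp only [s, Finset.mem_filter, Finset.mem_univ, true_and] at ht
    rcases ht with ht | ht
    · obtain ⟨c, u, hu, h⟩ := main y z ht hmax
      exact ⟨c, u, hu, Or.inl h⟩
    · obtain ⟨c, u, hu, h⟩ := main z y ht (fun i hi => (hmax i hi).symm)
      exact ⟨c, u, hu, Or.inr h⟩

variable [Finite K]

theorem phi_ab {n : ℕ} {E : Type u} [AddCommGroup E] [Module K E] [FiniteDimensional K E]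
    {V : AddSubgroup (Module.End K E)} (hV : ∀ v ∈ V, IsNilpotent v)
    (hn : Module.finrank K E = n + 1) (hc : Nat.card V = Nat.card K ^ (n + 1).choose 2)
    {x : E} (hx : x ≠ 0) (e : Module.Basis (Fin n) K (E ⧸ (K ∙ x))) (he : Tri e (Qx V x))
    {φ : Module.Dual K E} (hφ : φ ∈ Rx V x) :
    ∀ a ∈ V, ∀ b ∈ V, φ (a (b x)) = 0 := by
  obtain ⟨-, m2, -⟩ := max_facts hV hn hc hx
  have p1 : ∀ b ∈ V, φ (b x) = 0 := fun b hb => by simpa using Rx_pow hV hφ hb 1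
  have p2 : ∀ φ ∈ Rx V x, ∀ b ∈ V, φ (b (b x)) = 0 := fun φ hφ b hb => by
    simpa [pow_succ] using Rx_pow hV hφ hb 2
  have p3 : ∀ b ∈ V, φ (b (b (b x))) = 0 := fun b hb => by
    simpa [pow_succ] using Rx_pow hV hφ hb 3
  have anti : ∀ a ∈ V, ∀ b ∈ V, φ (a (b x)) = - φ (b (a x)) := by
    intro a ha b hb
    have h1 := p2 φ hφ a ha
    have h2 := p2 φ hφ b hb
    have h3 := p2 φ hφ _ (V.add_mem ha hb)
    simp only [LinearMap.add_apply, map_add] at h3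
    linear_combination h3 - h1 - h2
  have pu : ∀ u ∈ V, u x = 0 → φ ∘ₗ u ∈ Rx V x := by
    intro u hu hux
    apply m2
    · simp [hux]
    · intro v hv
      rw [LinearMap.comp_apply, anti u hu v hv, hux]; simp
  have pbub : ∀ u ∈ V, u x = 0 → ∀ b ∈ V, φ (b (u (b x))) = 0 := by
    intro u hu hux b hb
    have h1 := p3 _ (V.add_mem hb hu)
    have h2 := p3 b hb
    have h3 := p2 _ (pu u hu hux) b hb
    have h4 := p2 _ (pu u hu hux) _ (V.add_mem hb hu)
    simp only [LinearMap.add_apply, map_add, LinearMap.comp_apply, hux, map_zero, add_zero]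
      at h1 h2 h3 h4
    linear_combination h1 - h2 - h4
  have half : ∀ b ∈ V, ∀ c ∈ V, (∃ l : K, ∃ u ∈ Qx V x,
      (K ∙ x).mkQ (c x) = l • (K ∙ x).mkQ (b x) + u ((K ∙ x).mkQ (b x))) →
      φ (b (c x)) = 0 := by
    rintro b hb c hcV ⟨l, g, hg, h⟩
    obtain ⟨u, hu, hux, hgu⟩ := mem_Qx.mp hg
    rw [hgu, ← map_smul, ← map_add, ← sub_eq_zero, ← map_sub, ← LinearMap.mem_ker,
      Submodule.ker_mkQ] at h
    obtain ⟨k, hk⟩ := Submodule.mem_span_singleton.mp h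
    have h1 : c x = l • b x + u (b x) + k • x := by rw [hk]; abel
    rw [h1]
    simp only [map_add, map_smul, p2 φ hφ b hb, pbub u hu hux b hb, p1 b hb]
    simp
  intro a ha b hb
  obtain ⟨l, u, hu, h | h⟩ := he.cmp ((K ∙ x).mkQ (a x)) ((K ∙ x).mkQ (b x))
  · exact half a ha b hb ⟨l, u, hu, h⟩
  · rw [anti a ha b hb, half b hb a ha ⟨l, u, hu, h⟩, neg_zero]

/-- main induction. -/
theorem main_ind (n : ℕ) : ∀ (E : Type u) [AddCommGroup E] [Module K E]
    [FiniteDimensional K E] (V : AddSubgroup (Module.End K E)), (∀ v ∈ V, IsNilpotent v) →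
    Module.finrank K E = n → Nat.card V = Nat.card K ^ n.choose 2 →
    ∃ b : Module.Basis (Fin n) K E, Tri b V := by
  induction n using Nat.strong_induction_on with
  | _ n IH =>
  intro E _ _ _ V hV hn hc
  match n with
  | 0 =>
    have hs : Subsingleton E := Module.finrank_zero_iff.mp hn
    refine ⟨Module.Basis.empty E, ?_⟩
    intro f
    have : f = 0 := by ext y; exact Subsingleton.elim _ _
    rw [this]
    exact ⟨fun _ i => i.elim0, fun _ => V.zero_mem⟩
  | n + 1 =>
    have hnt : Nontrivial E := Module.nontrivial_of_finrank_pos (R := K) (by omega)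
    have IHQ : ∀ x : E, x ≠ 0 → ∃ e : Module.Basis (Fin n) K (E ⧸ (K ∙ x)), Tri e (Qx V x) := by
      intro x hx
      exact IH n (by omega) _ _ (Qx_nil hV) (finrank_quot_x hx hn) (max_facts hV hn hc hx).1
    obtain ⟨z, hz, hVz⟩ : ∃ z : E, z ≠ 0 ∧ ∀ v ∈ V, v z = 0 := by
      match n with
      | 0 =>
        obtain ⟨z, hz⟩ := exists_ne (0 : E)
        refine ⟨z, hz, fun v hv => ?_⟩
        obtain ⟨c, hc⟩ := (finrank_eq_one_iff_of_nonzero' z hz).mp hn (v z)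
        rw [← hc, nil_eig (hV v hv) hz hc.symm, zero_smul]
      | n + 1 =>
        obtain ⟨x, hx, φ, hφ, hφ0⟩ := exists_R1 hV hn hc IHQ
        obtain ⟨e, he⟩ := IHQ x hx
        obtain ⟨-, m2, m3⟩ := max_facts hV hn hc hx
        have hW : ∀ v ∈ V, ∀ w ∈ Wx V x, v w ∈ Wx V x := by
          intro v hv w hw
          rw [← Subspace.dualAnnihilator_dualCoannihilator_eq (W := Wx V x),
            Submodule.mem_dualCoannihilator]
          intro ψ hψ
          obtain ⟨h1, h2⟩ := mem_ann_Wx.mp hψ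
          obtain ⟨v', hv', c, rfl⟩ := m3 w hw
          rw [map_add, map_add, phi_ab hV hn hc hx e he (m2 ψ h1 h2) v hv v' hv', map_smul,
            map_smul, h2 v hv, smul_zero, add_zero]
        have hlt : Module.finrank K (Wx V x) < n + 1 + 1 := by
          rw [← hn]
          apply Submodule.finrank_lt
          intro htop
          apply hφ0
          have h1 : φ ∈ (Wx V x).dualAnnihilator := Rx_le hV hφ
          rw [htop, Submodule.dualAnnihilator_top] at h1
          simpa using h1
        have hpos : 0 < Module.finrank K (Wx V x) := by
          have : Nontrivial (Wx V x) :=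
            ⟨⟨x, x_mem_Wx V x⟩, 0, fun h => hx (congrArg Subtype.val h)⟩
          exact Module.finrank_pos
        obtain ⟨V', hV', hc', hr⟩ := restrict_max hV hn hc (Wx V x) hW
        obtain ⟨b, hb⟩ := IH _ hlt (Wx V x) V' hV' rfl hc'
        let o : Fin (Module.finrank K (Wx V x)) := ⟨0, hpos⟩
        refine ⟨(b o : E), ?_, ?_⟩
        · intro h
          exact b.ne_zero o (Subtype.ext h)
        · intro v hv
          obtain ⟨v', hv', h⟩ := hr v hv
          rw [← h]
          have : v' (b o) = 0 := by
            apply b.repr.injective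
            ext i
            rw [(hb v').mp hv' i o (Nat.zero_le _)]; simp
          rw [this]; rfl
    obtain ⟨e, he⟩ := IHQ z hz
    obtain ⟨f, h0, h1, h2⟩ := lift_basis hz hn e
    obtain ⟨-, m2, -⟩ := max_facts hV hn hc hz
    refine ⟨f, fun g => ⟨?_, ?_⟩⟩
    · intro hg i j hij
      have hgz := hVz g hg
      refine Fin.cases ?_ (fun j => ?_) j (motive := fun j => j ≤ i → f.repr (g (f j)) i = 0) hij
      · intro _; rw [h0, hgz]; simp
      · refine Fin.cases ?_ (fun i => ?_) i
        · intro h; exact absurd h (by simp)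
        · intro h
          rw [h2, ← compr_mkQ hgz, h1]
          exact (he _).mp (mem_Qx.mpr ⟨g, hg, hgz, compr_mkQ hgz⟩) i j (by simpa using h)
    · intro hg
      have hgz : g z = 0 := by
        apply f.repr.injective
        ext i
        have h3 := hg i 0 (Fin.zero_le _)
        rw [h0] at h3
        rw [h3]; simp
      have hq : compr (K ∙ z).mkQ (sect (K ∙ z)) g ∈ Qx V z := by
        rw [he]
        intro i j hij
        rw [← h1, compr_mkQ hgz, ← h2]
        exact hg _ _ (by simpa using hij)
      obtain ⟨v, hv, hvz, hvg⟩ := mem_Qx.mp hq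
      obtain ⟨ψ, hψ⟩ := exists_smR hz (v := g - v) (by
        intro y
        rw [← (K ∙ z).ker_mkQ, LinearMap.mem_ker, LinearMap.sub_apply, map_sub, ← hvg,
          compr_mkQ hgz, sub_self])
      have hψz : ψ z = 0 := by
        have := LinearMap.congr_fun hψ z
        rw [smR_apply, LinearMap.sub_apply, hgz, hvz, sub_zero] at this
        exact (smul_eq_zero.mp this).resolve_right hz
      have h4 := mem_Rx.mp (m2 ψ hψz (fun w hw => by rw [hVz w hw, map_zero]))
      rw [hψ] at h4
      simpa using V.add_mem h4 hv

end finalpart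

theorem stmt_5 (K : Type*) [Field K] [Fintype K] (p n : ℕ) (hp : Fintype.card K = p)
    (hn : 0 < n)
    (V : AddSubgroup (Matrix (Fin n) (Fin n) K))
    (hV : ∀ M ∈ V, IsNilpotent M)
    (hcard : Nat.card V = p ^ n.choose 2) :
    ∃ P : (Matrix (Fin n) (Fin n) K)ˣ,
      ∀ M : Matrix (Fin n) (Fin n) K,
        M ∈ V ↔ ∀ i j : Fin n, j ≤ i →
          ((P : Matrix (Fin n) (Fin n) K) * M * ((P⁻¹ : (Matrix (Fin n) (Fin n) K)ˣ) :
            Matrix (Fin n) (Fin n) K)) i j = 0 := by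
  let F : Matrix (Fin n) (Fin n) K →+ Module.End K (Fin n → K) :=
    (Matrix.toLin' (R := K) (m := Fin n) (n := Fin n)).toLinearMap.toAddMonoidHom
  have hF : ∀ M, F M = Matrix.toLin' M := fun _ => rfl
  have hFi : Function.Injective F := (Matrix.toLin' (R := K)).injective
  obtain ⟨b, hb⟩ := main_ind n (Fin n → K) (V.map F) (by
    rintro _ ⟨M, hM, rfl⟩
    exact (hV M hM).map (Matrix.toLinAlgEquiv' (R := K) (n := Fin n))) (by simp) (by
    rw [Nat.card_eq_fintype_card (α := K), hp, ← hcard]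
    exact (Nat.card_congr (V.equivMapOfInjective F hFi).toEquiv).symm)
  let P : (Matrix (Fin n) (Fin n) K)ˣ :=
    ⟨b.toMatrix (Pi.basisFun K (Fin n)), (Pi.basisFun K (Fin n)).toMatrix b,
      Module.Basis.toMatrix_mul_toMatrix_flip _ _, Module.Basis.toMatrix_mul_toMatrix_flip _ _⟩
  refine ⟨P, fun M => ?_⟩
  have h1 : (P : Matrix (Fin n) (Fin n) K) * M * ((P⁻¹ : (Matrix (Fin n) (Fin n) K)ˣ) :
      Matrix (Fin n) (Fin n) K) = LinearMap.toMatrix b b (F M) := by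
    rw [← basis_toMatrix_mul_linearMap_toMatrix_mul_basis_toMatrix b (Pi.basisFun K (Fin n)) b
      (Pi.basisFun K (Fin n)), hF]
    have : LinearMap.toMatrix (Pi.basisFun K (Fin n)) (Pi.basisFun K (Fin n)) (Matrix.toLin' M)
        = M := by
      rw [LinearMap.toMatrix_eq_toMatrix', LinearMap.toMatrix'_toLin']
    rw [this]
    rfl
  have h2 : M ∈ V ↔ F M ∈ V.map F := by
    constructor
    · exact fun h => ⟨M, h, rfl⟩
    · rintro ⟨N, hN, h⟩
      rwa [← hFi h]
  rw [h1, h2, hb]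
  simp only [LinearMap.toMatrix_apply]
end

section
/- Let K be a division ring and K0 a field contained in the center of K over which K has finite dimension q. If V is a K0-linear subspace of M_2(K) all of whose elements are nilpotent matrices and dim_{K0} V = q, then there exists an invertible matrix P in M_2(K) such that P V P^{-1} equals the set NT_2(K) of all strictly upper-triangular 2×2 matrices over K. -/
section helpers
variable {K : Type*} [DivisionRing K]

theorem aux_conj_pow (P Q M : Matrix (Fin 2) (Fin 2) K) (hPQ : P * Q = 1) (hQP : Q * P = 1)
    (n : ℕ) : (P * M * Q) ^ n = P * M ^ n * Q := by
  induction n with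
  | zero => simp [hPQ]
  | succ n ih =>
    rw [pow_succ, ih, pow_succ]
    calc P * M ^ n * Q * (P * M * Q) = P * M ^ n * (Q * P) * (M * Q) := by
          simp only [mul_assoc]
      _ = _ := by rw [hQP]; simp only [mul_assoc, one_mul]

theorem aux_conj_nil (P Q M : Matrix (Fin 2) (Fin 2) K) (hPQ : P * Q = 1) (hQP : Q * P = 1)
    (h : IsNilpotent M) : IsNilpotent (P * M * Q) := by
  obtain ⟨n, hn⟩ := h
  exact ⟨n, by rw [aux_conj_pow P Q M hPQ hQP, hn]; simp⟩

theorem aux_upper (a b d : K) (h : IsNilpotent !![a, b; 0, d]) : a = 0 ∧ d = 0 := by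
  obtain ⟨n, hn⟩ := h
  have key : ∀ n : ℕ, ∃ x, !![a, b; 0, d] ^ n = !![a ^ n, x; 0, d ^ n] := by
    intro n
    induction n with
    | zero => exact ⟨0, by simp [Matrix.one_fin_two]⟩
    | succ n ih =>
      obtain ⟨x, hx⟩ := ih
      exact ⟨a ^ n * b + x * d, by rw [pow_succ, hx, Matrix.mul_fin_two]; simp [pow_succ]⟩
  obtain ⟨x, hx⟩ := key n
  rw [hn] at hx
  have h0 := congrFun (congrFun hx 0) 0
  have h1 := congrFun (congrFun hx 1) 1
  simp at h0 h1
  exact ⟨eq_zero_of_pow_eq_zero h0.symm, eq_zero_of_pow_eq_zero h1.symm⟩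

theorem aux_lower (c d : K) (h : IsNilpotent !![0, 0; c, d]) : d = 0 := by
  have h2 := aux_conj_nil !![0, 1; 1, 0] !![0, 1; 1, 0] _
    (by simp [Matrix.one_fin_two]) (by simp [Matrix.one_fin_two]) h
  simp only [Matrix.mul_fin_two] at h2
  simp at h2
  exact (aux_upper _ _ _ h2).1

theorem aux_normal (M : Matrix (Fin 2) (Fin 2) K) (hM : IsNilpotent M) (h0 : M ≠ 0) :
    ∃ P Q : Matrix (Fin 2) (Fin 2) K, P * Q = 1 ∧ Q * P = 1 ∧ P * M * Q = !![0, 1; 0, 0] := by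
  obtain ⟨a, b, c, d, rfl⟩ : ∃ a b c d, M = !![a, b; c, d] :=
    ⟨_, _, _, _, Matrix.eta_fin_two M⟩
  by_cases hc : c = 0
  · subst hc
    obtain ⟨rfl, rfl⟩ := aux_upper _ _ _ hM
    have hb : b ≠ 0 := by
      rintro rfl
      apply h0
      ext i j; fin_cases i <;> fin_cases j <;> rfl
    refine ⟨!![b⁻¹, 0; 0, 1], !![b, 0; 0, 1], ?_, ?_, ?_⟩
    · simp [Matrix.one_fin_two, hb]
    · simp [Matrix.one_fin_two, hb]
    · ext i j; fin_cases i <;> fin_cases j <;> simp [hb]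
  · have e1 : !![1, -(a * c⁻¹); 0, 1] * !![1, a * c⁻¹; 0, 1] = 1 := by
      simp [Matrix.one_fin_two]
    have e2 : !![1, a * c⁻¹; 0, 1] * !![1, -(a * c⁻¹); 0, 1] = 1 := by
      simp [Matrix.one_fin_two]
    have h1 := aux_conj_nil _ _ _ e1 e2 hM
    obtain ⟨b', d', hbd⟩ : ∃ b' d', !![1, -(a * c⁻¹); 0, 1] * !![a, b; c, d] *
        !![1, a * c⁻¹; 0, 1] = !![0, b'; c, d'] := by
      refine ⟨b - a * c⁻¹ * d, c * (a * c⁻¹) + d, ?_⟩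
      simp [mul_assoc, hc, sub_eq_add_neg]
    rw [hbd] at h1
    have hb' : b' = 0 := by
      by_contra hb
      obtain ⟨n, hn⟩ := h1
      have hu : IsUnit !![0, b'; c, d'] := by
        refine ⟨⟨!![0, b'; c, d'], !![-(c⁻¹ * d' * b'⁻¹), c⁻¹; b'⁻¹, 0], ?_, ?_⟩, rfl⟩
        · simp [Matrix.one_fin_two, hb, hc, ← mul_assoc]
        · simp [Matrix.one_fin_two, hb, hc, mul_assoc]
      have := hu.pow n
      rw [hn] at this
      exact not_isUnit_zero this
    subst hb'
    have hd := aux_lower _ _ h1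
    subst hd
    refine ⟨!![0, c⁻¹; 1, 0] * !![1, -(a * c⁻¹); 0, 1],
      !![1, a * c⁻¹; 0, 1] * !![0, 1; c, 0], ?_, ?_, ?_⟩
    · rw [mul_assoc, ← mul_assoc _ _ !![0, 1; c, 0], e1]
      simp [Matrix.one_fin_two, hc]
    · have e3 : !![0, 1; c, 0] * !![0, c⁻¹; 1, 0] = 1 := by simp [Matrix.one_fin_two, hc]
      rw [mul_assoc, ← mul_assoc !![0, 1; c, 0], e3, one_mul, e2]
    · rw [show !![0, c⁻¹; 1, 0] * !![1, -(a * c⁻¹); 0, 1] * !![a, b; c, d] *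
        (!![1, a * c⁻¹; 0, 1] * !![0, 1; c, 0]) = !![0, c⁻¹; 1, 0] *
        (!![1, -(a * c⁻¹); 0, 1] * !![a, b; c, d] * !![1, a * c⁻¹; 0, 1]) * !![0, 1; c, 0] by
          simp only [mul_assoc], hbd]
      ext i j; fin_cases i <;> fin_cases j <;> simp [hc]

theorem aux_sq (M : Matrix (Fin 2) (Fin 2) K) (hM : IsNilpotent M) : M * M = 0 := by
  by_cases h0 : M = 0
  · simp [h0]
  obtain ⟨P, Q, h1, h2, h3⟩ := aux_normal M hM h0
  have h := aux_conj_pow P Q M h1 h2 2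
  rw [h3] at h
  have hz : (!![0, 1; 0, 0] : Matrix (Fin 2) (Fin 2) K) ^ 2 = 0 := by
    rw [pow_two]; ext i j; fin_cases i <;> fin_cases j <;> simp
  rw [hz] at h
  calc M * M = Q * P * M ^ 2 * (Q * P) := by rw [h2, pow_two]; simp
    _ = Q * (P * M ^ 2 * Q) * P := by simp only [mul_assoc]
    _ = 0 := by rw [← h]; simp

end helpers

/-- The `2 × 2` equality case: a `q`-dimensional `K0`-linear subspace of nilpotent
`2 × 2` matrices over `K` is similar to the space of strictly upper-triangular
matrices. The invertible matrix `P` is given together with its (two-sided)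
inverse `Q`. -/
theorem stmt_10 (K : Type*) [DivisionRing K] (K0 : Type*) [Field K0] [Algebra K0 K]
    [FiniteDimensional K0 K] (q : ℕ) (hq : Module.finrank K0 K = q)
    (V : Submodule K0 (Matrix (Fin 2) (Fin 2) K))
    (hV : ∀ M ∈ V, IsNilpotent M)
    (hdim : Module.finrank K0 V = q) :
    ∃ P Q : Matrix (Fin 2) (Fin 2) K, P * Q = 1 ∧ Q * P = 1 ∧
      ∀ M : Matrix (Fin 2) (Fin 2) K,
        M ∈ V ↔ ∀ i j : Fin 2, j ≤ i → (P * M * Q) i j = 0 := by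
  have hpos : 0 < q := hq ▸ Module.finrank_pos
  have hne : V ≠ ⊥ := by
    rintro rfl
    simp at hdim
    omega
  obtain ⟨A, hA, hA0⟩ := V.exists_mem_ne_zero_of_ne_bot hne
  obtain ⟨P, Q, hPQ, hQP, hE⟩ := aux_normal A (hV A hA) hA0
  have hup : ∀ N ∈ V, ∃ b, P * N * Q = !![0, b; 0, 0] := by
    intro N hN
    have h1 := aux_sq _ (hV _ (V.add_mem hA hN))
    have hAN : A * N + N * A = 0 := by
      have hA2 := aux_sq _ (hV _ hA)
      have hN2 := aux_sq _ (hV _ hN)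
      rw [add_mul, mul_add, mul_add, hA2, hN2] at h1
      simpa using h1
    have h2 : (P * A * Q) * (P * N * Q) + (P * N * Q) * (P * A * Q) = 0 := by
      calc _ = P * A * (Q * P) * N * Q + P * N * (Q * P) * A * Q := by simp only [mul_assoc]
        _ = P * (A * N + N * A) * Q := by
            rw [hQP]; simp only [mul_add, add_mul, mul_assoc, one_mul]
        _ = 0 := by rw [hAN]; simp
    have h3 := aux_conj_nil P Q N hPQ hQP (hV N hN)
    obtain ⟨a, b, c, d, habcd⟩ : ∃ a b c d, P * N * Q = !![a, b; c, d] :=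
      ⟨_, _, _, _, Matrix.eta_fin_two _⟩
    rw [habcd] at h2 h3 ⊢
    rw [hE] at h2
    have hc : c = 0 := by
      have := congrFun (congrFun h2 0) 0
      simpa using this
    subst hc
    obtain ⟨rfl, rfl⟩ := aux_upper _ _ _ h3
    exact ⟨b, rfl⟩
  have hinj : ∀ M N : Matrix (Fin 2) (Fin 2) K, P * M * Q = P * N * Q → M = N := by
    intro M N h
    calc M = Q * P * M * (Q * P) := by rw [hQP]; simp
      _ = Q * (P * M * Q) * P := by simp only [mul_assoc]
      _ = Q * P * N * (Q * P) := by rw [h]; simp only [mul_assoc]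
      _ = N := by rw [hQP]; simp
  let φ : V →ₗ[K0] K :=
    { toFun := fun N => (P * N.1 * Q) 0 1
      map_add' := by intro x y; simp [mul_add, add_mul]
      map_smul' := by intro r x; simp }
  have hφi : Function.Injective φ := by
    intro x y hxy
    obtain ⟨b, hb⟩ := hup x.1 x.2
    obtain ⟨b', hb'⟩ := hup y.1 y.2
    have hxy' : (P * x.1 * Q) 0 1 = (P * y.1 * Q) 0 1 := hxy
    apply Subtype.ext
    apply hinj
    rw [hb, hb'] at hxy' ⊢
    simp at hxy'
    rw [hxy']
  have hφs : Function.Surjective φ :=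
    (LinearMap.injective_iff_surjective_of_finrank_eq_finrank (hdim.trans hq.symm)).1 hφi
  refine ⟨P, Q, hPQ, hQP, fun M => ⟨fun hM => ?_, fun h => ?_⟩⟩
  · obtain ⟨b, hb⟩ := hup M hM
    rw [hb]
    intro i j hij
    fin_cases i <;> fin_cases j <;> simp at hij ⊢
  · obtain ⟨N, hN⟩ := hφs ((P * M * Q) 0 1)
    have hN' : (P * N.1 * Q) 0 1 = (P * M * Q) 0 1 := hN
    obtain ⟨b, hb⟩ := hup N.1 N.2
    have : N.1 = M := by
      apply hinj
      rw [Matrix.eta_fin_two (P * M * Q), h 0 0 le_rfl, h 1 0 (by simp), h 1 1 le_rfl, ← hN', hb]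
      simp
    exact this ▸ N.2
end
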